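/- Fix a positive integer k and ε ∈ {1, 3}. There exist constants c > 0 and C > 0 such that for every real x ≥ 5 and every integer n with 0 < n ≤ (log x)^k one has |Σ_{p ≤ x, p prime, p ≡ ε (mod 4)} (n/p) − □(n) · π(x;4,ε)| ≤ C · π(x;4,ε) · exp(−c·√(log x)), where π(x;4,ε) = #{p ≤ x : p prime, p ≡ ε (mod 4)} and □(n) = 1 if n is a perfect square and □(n) = 0 otherwise. -/

import Mathlib

/-- The Legendre symbol `(n/p)`, extended by `0` to non-prime `p`. -/
noncomputable def legendreSym' (p : ℕ) (n : ℤ) : ℤ :=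
  if h : p.Prime then
    haveI : Fact p.Prime := ⟨h⟩
    legendreSym p n
  else 0

section

open Complex MeasureTheory Set Filter Topology Asymptotics

/-- truncated Mellin-type integral -/
noncomputable def JJ (g : ℝ → ℂ) (s : ℂ) : ℂ := ∫ t in Ioi (1:ℝ), g t * (t:ℂ) ^ (-(s + 1))

lemma JJ_eq_mellin (g : ℝ → ℂ) (s : ℂ) :
    JJ g s = mellin ((Ioi (1:ℝ)).indicator g) (-s) := by
  unfold JJ mellin
  rw [← integral_indicator measurableSet_Ioi, ← integral_indicator measurableSet_Ioi]
  congr 1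
  ext t
  by_cases h : t ∈ Ioi (1:ℝ)
  · have h0 : t ∈ Ioi (0:ℝ) := Set.mem_Ioi.2 (lt_trans zero_lt_one (Set.mem_Ioi.1 h))
    simp only [indicator_of_mem h, indicator_of_mem h0, smul_eq_mul]
    rw [mul_comm, show -(s+1) = -s - 1 by ring]
  · have h2 : (Ioi (1:ℝ)).indicator g t = 0 := indicator_of_notMem h _
    rw [indicator_of_notMem h]
    by_cases h0 : t ∈ Ioi (0:ℝ)
    · rw [indicator_of_mem h0, h2, smul_zero]
    · rw [indicator_of_notMem h0]

lemma JJ_aux_diff {g : ℝ → ℂ} (hg : Measurable g) {K : ℝ}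
    (hb : ∀ t > 1, ‖g t‖ ≤ K) {s : ℂ} (hs : 0 < s.re) : DifferentiableAt ℂ (JJ g) s := by
  have : JJ g = (fun s => mellin ((Ioi (1:ℝ)).indicator g) (-s)) := by
    ext s; exact JJ_eq_mellin g s
  rw [this]
  have hK : 0 ≤ K := (norm_nonneg _).trans (hb 2 (by norm_num))
  have hb' : ∀ t, ‖(Ioi (1:ℝ)).indicator g t‖ ≤ K := by
    intro t
    by_cases h : t ∈ Ioi (1:ℝ)
    · simpa [indicator_of_mem h] using hb t h
    · simpa [indicator_of_notMem h] using hK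
  have h1 : DifferentiableAt ℂ (mellin ((Ioi (1:ℝ)).indicator g)) (-s) := by
    apply mellin_differentiableAt_of_isBigO_rpow (a := 0) (b := -s.re - 1)
    · refine LocallyIntegrable.locallyIntegrableOn ?_ _
      intro x
      refine ⟨Metric.closedBall x 1, Metric.closedBall_mem_nhds _ one_pos, ?_⟩
      refine Measure.integrableOn_of_bounded (M := K) (isCompact_closedBall x 1).measure_lt_top.ne
        (hg.indicator measurableSet_Ioi).aestronglyMeasurable ?_
      exact Eventually.of_forall hb'
    · refine IsBigO.of_bound K ?_
      filter_upwards with t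
      simpa using hb' t
    · simpa using hs
    · refine IsBigO.of_bound 0 ?_
      have : ∀ᶠ t in 𝓝[>] (0:ℝ), t < 1 :=
        nhdsWithin_le_nhds (eventually_lt_nhds zero_lt_one)
      filter_upwards [this] with t ht
      have : t ∉ Ioi (1:ℝ) := by simpa using ht.le
      simp [indicator_of_notMem this]
    · simp
  exact h1.comp s (differentiableAt_id.neg)

lemma JJ_bound {g : ℝ → ℂ} {K a : ℝ} (hb : ∀ t > 1, ‖g t‖ ≤ K * t ^ a) {s : ℂ}
    (hs : a < s.re) : ‖JJ g s‖ ≤ K / (s.re - a) := by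
  unfold JJ
  have h1 : ∀ t ∈ Ioi (1:ℝ), ‖g t * (t:ℂ) ^ (-(s + 1))‖ ≤ K * t ^ (-(s.re - a) - 1) := by
    intro t ht
    have ht0 : 0 < t := lt_trans zero_lt_one ht
    rw [norm_mul, norm_cpow_eq_rpow_re_of_pos ht0]
    calc _ ≤ K * t ^ a * t ^ (-(s+1)).re := by
            gcongr; exact hb t ht
      _ = _ := by
        rw [mul_assoc, ← Real.rpow_add ht0]; congr 2; simp; ring
  have h2 : IntegrableOn (fun t : ℝ => K * t ^ (-(s.re - a) - 1)) (Ioi 1) :=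
    (integrableOn_Ioi_rpow_of_lt (by linarith) one_pos).const_mul K
  refine (norm_integral_le_of_norm_le h2 ((ae_restrict_iff' measurableSet_Ioi).2
    (Eventually.of_forall h1))).trans ?_
  rw [integral_const_mul, integral_Ioi_rpow_of_lt (by linarith) one_pos]
  have : s.re - a ≠ 0 := by linarith
  have e : -(s.re - a) - 1 + 1 = -(s.re - a) := by ring
  rw [e, Real.one_rpow, neg_div_neg_eq, mul_one_div]

lemma JJ_ofReal (g : ℝ → ℝ) (σ : ℝ) :
    JJ (fun t => (g t : ℂ)) σ = ((∫ t in Ioi (1:ℝ), g t * t ^ (-(σ+1)) : ℝ) : ℂ) := by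
  unfold JJ
  rw [← integral_complex_ofReal]
  refine setIntegral_congr_fun measurableSet_Ioi ?_
  intro t ht
  have ht0 : 0 < t := lt_trans zero_lt_one ht
  simp only [ofReal_mul]
  rw [ofReal_cpow ht0.le]
  simp

/-! ### Partial sums of characters -/

noncomputable def charS {q : ℕ} (χ : DirichletCharacter ℂ q) (n : ℕ) : ℂ :=
  ∑ k ∈ Finset.Icc 1 n, χ (k : ZMod q)

lemma charS_norm_le_self {q : ℕ} (χ : DirichletCharacter ℂ q) (n : ℕ) : ‖charS χ n‖ ≤ n := by
  unfold charS
  refine (norm_sum_le _ _).trans ?_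
  calc _ ≤ ∑ k ∈ Finset.Icc 1 n, (1:ℝ) := Finset.sum_le_sum (fun k _ => χ.norm_le_one _)
    _ = n := by simp

lemma charS_add_period {q : ℕ} [NeZero q] {χ : DirichletCharacter ℂ q} (hχ : χ ≠ 1) (n : ℕ) :
    charS χ (n + q) = charS χ n := by
  have key : ∀ n, ∑ k ∈ Finset.Ico (n+1) (n+1+q), χ (k : ZMod q) = 0 := by
    intro n
    have h0 : ∑ k ∈ Finset.range q, χ (k : ZMod q) = 0 := by
      rw [← MulChar.sum_eq_zero_of_ne_one hχ]
      refine Finset.sum_bij (fun k _ => (k : ZMod q)) (by simp) ?_ ?_ (by simp)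
      · intro a ha b hb h
        rw [ZMod.natCast_eq_natCast_iff'] at h
        rwa [Nat.mod_eq_of_lt (Finset.mem_range.1 ha), Nat.mod_eq_of_lt (Finset.mem_range.1 hb)] at h
      · intro b _
        exact ⟨b.val, by simpa using ZMod.val_lt b, by simp⟩
    have : ∀ m, ∑ k ∈ Finset.Ico m (m+q), χ (k : ZMod q) = 0 := by
      intro m
      induction m with
      | zero => simpa using h0
      | succ m ih =>
        rw [← ih]
        have hq : 0 < q := Nat.pos_of_ne_zero (NeZero.ne q)
        have e1 := Finset.sum_eq_sum_Ico_succ_bot (show m < m + q by omega) (fun k : ℕ => χ (k : ZMod q))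
        have e2 := Finset.sum_Ico_succ_top (show m+1 ≤ m + q by omega) (fun k : ℕ => χ (k : ZMod q))
        rw [show m + 1 + q = m + q + 1 by ring, e2, e1]
        simp [add_comm]
    exact this _
  unfold charS
  rw [← Finset.Ico_succ_right_eq_Icc, ← Finset.Ico_succ_right_eq_Icc]
  have := Finset.sum_Ico_consecutive (fun k : ℕ => χ (k : ZMod q)) (show 1 ≤ n+1 by omega)
    (show n+1 ≤ n+1+q by omega)
  rw [key n, add_zero] at this
  simp only [Nat.succ_eq_succ, Nat.succ_eq_add_one]
  rw [this, show n + q + 1 = n + 1 + q by ring]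

lemma charS_norm_le {q : ℕ} [NeZero q] {χ : DirichletCharacter ℂ q} (hχ : χ ≠ 1) (n : ℕ) :
    ‖charS χ n‖ ≤ q := by
  have h : ∀ m r, charS χ (r + q * m) = charS χ r := by
    intro m r
    induction m with
    | zero => simp
    | succ m ih => rw [Nat.mul_succ, ← add_assoc, charS_add_period hχ, ih]
  rw [← Nat.mod_add_div n q, h]
  refine (charS_norm_le_self χ _).trans ?_
  exact_mod_cast (Nat.mod_lt n (Nat.pos_of_ne_zero (NeZero.ne q))).le

lemma charS_norm_le_interp {q : ℕ} [NeZero q] {χ : DirichletCharacter ℂ q} (hχ : χ ≠ 1)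
    {ε : ℝ} (h0 : 0 ≤ ε) (h1 : ε ≤ 1) {t : ℝ} (ht : 1 < t) :
    ‖charS χ ⌊t⌋₊‖ ≤ (q:ℝ) ^ ε * t ^ (1 - ε) := by
  have ht0 : 0 < t := by linarith
  have a1 : ‖charS χ ⌊t⌋₊‖ ≤ q := charS_norm_le hχ _
  have a2 : ‖charS χ ⌊t⌋₊‖ ≤ t := (charS_norm_le_self χ _).trans (Nat.floor_le ht0.le)
  set v := ‖charS χ ⌊t⌋₊‖ with hv
  have hv0 : 0 ≤ v := norm_nonneg _
  rcases hv0.eq_or_lt with h | h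
  · rw [← h]; positivity
  calc v = v ^ ε * v ^ (1-ε) := by rw [← Real.rpow_add h]; simp
    _ ≤ _ := by gcongr

lemma LFun_eq_JJ {q : ℕ} [NeZero q] {χ : DirichletCharacter ℂ q} (hχ : χ ≠ 1) {s : ℂ}
    (hs : 0 < s.re) : χ.LFunction s = s * JJ (fun t => charS χ ⌊t⌋₊) s := by
  have hopen : IsOpen {s : ℂ | 0 < s.re} := isOpen_lt continuous_const continuous_re
  have hm : Measurable (fun t : ℝ => charS χ ⌊t⌋₊) :=
    (measurable_from_nat (f := charS χ)).comp Nat.measurable_floor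
  have h1 : AnalyticOnNhd ℂ χ.LFunction {s : ℂ | 0 < s.re} :=
    (DirichletCharacter.differentiable_LFunction hχ).differentiableOn.analyticOnNhd hopen
  have h2 : AnalyticOnNhd ℂ (fun s => s * JJ (fun t => charS χ ⌊t⌋₊) s) {s : ℂ | 0 < s.re} := by
    refine DifferentiableOn.analyticOnNhd ?_ hopen
    intro s hs
    exact (differentiableAt_id.mul (JJ_aux_diff hm (fun t _ => charS_norm_le hχ _) hs)).differentiableWithinAt
  have hpre : IsPreconnected {s : ℂ | 0 < s.re} := (convex_halfSpace_re_gt 0).isPreconnected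
  have h2mem : (2:ℂ) ∈ {s : ℂ | 0 < s.re} := by simp
  have hev : χ.LFunction =ᶠ[𝓝 (2:ℂ)] (fun s => s * JJ (fun t => charS χ ⌊t⌋₊) s) := by
    have : ∀ᶠ s in 𝓝 (2:ℂ), 1 < s.re :=
      (isOpen_lt continuous_const continuous_re).mem_nhds (by simp)
    filter_upwards [this] with s hs
    rw [DirichletCharacter.LFunction_eq_LSeries χ hs]
    have := LSeries_eq_mul_integral (fun n : ℕ => χ (n : ZMod q)) (r := 0) le_rfl (by linarith)
      (DirichletCharacter.LSeriesSummable_of_one_lt_re χ hs) (by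
        refine IsBigO.of_bound q ?_
        filter_upwards with n
        simpa [charS] using charS_norm_le hχ n)
    rw [this]; rfl
  exact h1.eqOn_of_preconnected_of_eventuallyEq h2 hpre h2mem hev hs

lemma LFun_bound {q : ℕ} [NeZero q] {χ : DirichletCharacter ℂ q} (hχ : χ ≠ 1)
    {ε : ℝ} (h0 : 0 ≤ ε) (h1 : ε ≤ 1) {s : ℂ} (hs : 0 < s.re) (hs' : 1 - ε < s.re) :
    ‖χ.LFunction s‖ ≤ ‖s‖ * (q:ℝ) ^ ε / (s.re - (1 - ε)) := by
  rw [LFun_eq_JJ hχ hs, norm_mul, mul_div_assoc]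
  gcongr
  exact JJ_bound (fun t ht => charS_norm_le_interp hχ h0 h1 ht) hs'

lemma LFun_real {q : ℕ} [NeZero q] {χ : DirichletCharacter ℂ q} (hχ : χ ≠ 1)
    (hreal : ∀ n : ℕ, (χ (n : ZMod q)).im = 0) {σ : ℝ} (hσ : 0 < σ) :
    (χ.LFunction σ).im = 0 := by
  rw [LFun_eq_JJ hχ (by simpa using hσ)]
  have : (fun t : ℝ => charS χ ⌊t⌋₊) = fun t : ℝ => (((charS χ ⌊t⌋₊).re : ℝ) : ℂ) := by
    ext t
    apply Complex.ext
    · simp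
    · simp [charS, hreal]
  rw [this, JJ_ofReal, ← ofReal_mul, ofReal_im]

/-! ### zeta -/

/-- `(s-1) ζ(s)` on the right half plane -/
noncomputable def GG (s : ℂ) : ℂ := s - (s - 1) * (s * JJ (fun t => ((t - ⌊t⌋₊ : ℝ) : ℂ)) s)

lemma frac_norm_le {t : ℝ} (ht : 1 < t) : ‖((t - ⌊t⌋₊ : ℝ) : ℂ)‖ ≤ 1 := by
  rw [norm_real, Real.norm_eq_abs, abs_le]
  have := Nat.floor_le (show 0 ≤ t by linarith)
  have := Nat.lt_floor_add_one t
  constructor <;> linarith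

lemma frac_meas : Measurable (fun t : ℝ => ((t - ⌊t⌋₊ : ℝ) : ℂ)) := by
  have : Measurable (fun t : ℝ => (⌊t⌋₊ : ℝ)) :=
    (measurable_from_nat (f := fun n : ℕ => (n:ℝ))).comp Nat.measurable_floor
  fun_prop

lemma GG_diff {s : ℂ} (hs : 0 < s.re) : DifferentiableAt ℂ GG s := by
  have := JJ_aux_diff frac_meas (fun t ht => frac_norm_le ht) hs
  unfold GG
  fun_prop

lemma GG_one : GG 1 = 1 := by simp [GG]

lemma GG_eq {s : ℂ} (hs : 0 < s.re) (h1 : s ≠ 1) : GG s = (s - 1) * riemannZeta s := by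
  have hopen : IsOpen {s : ℂ | 0 < s.re} := isOpen_lt continuous_const continuous_re
  have hA : ∀ s : ℂ, 1 < s.re → GG s = (s-1) * riemannZeta s := by
    intro s hs
    have hs1 : s - 1 ≠ 0 := by
      intro h; rw [sub_eq_zero] at h; simp [h] at hs
    have e1 := LSeries_eq_mul_integral (fun n : ℕ => (1:ℂ)) (r := 1) (by norm_num) hs
      (by
        have := (LSeriesSummable_one_iff (s := s)).2 hs
        exact this) (by
        refine IsBigO.of_bound 1 ?_
        filter_upwards with n
        simp)
    have e2 : LSeries (fun n : ℕ => (1:ℂ)) s = riemannZeta s := LSeries_one_eq_riemannZeta hs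
    rw [e2] at e1
    have e3 : JJ (fun t => ((t - ⌊t⌋₊ : ℝ) : ℂ)) s = 1 / (s - 1) - riemannZeta s / s := by
      have hs0 : s ≠ 0 := by intro h; simp [h] at hs; linarith
      have hI : ∫ t in Ioi (1:ℝ), (t:ℂ) ^ (-s) = 1 / (s-1) := by
        rw [integral_Ioi_cpow_of_lt (by simpa using hs) one_pos]
        have : -s + 1 ≠ 0 := by intro h; apply hs1; linear_combination -h
        simp only [ofReal_one, one_cpow]
        field_simp; ring
      have hint1 : IntegrableOn (fun t : ℝ => (t:ℂ) ^ (-s)) (Ioi 1) :=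
        integrableOn_Ioi_cpow_of_lt (by simpa using hs) one_pos
      have e4 : riemannZeta s / s = ∫ t in Ioi (1:ℝ), (⌊t⌋₊ : ℂ) * (t:ℂ) ^ (-(s+1)) := by
        rw [e1]; field_simp; simp
      have hint2 : IntegrableOn (fun t : ℝ => (⌊t⌋₊ : ℂ) * (t:ℂ) ^ (-(s+1))) (Ioi 1) := by
        have hm : Measurable (fun t : ℝ => (⌊t⌋₊ : ℂ)) :=
          (measurable_from_nat (f := fun n : ℕ => (n:ℂ))).comp Nat.measurable_floor
        refine Integrable.mono hint1.norm (by
          refine (hm.mul ?_).aestronglyMeasurable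
          fun_prop) ?_
        refine (ae_restrict_iff' measurableSet_Ioi).2 (Eventually.of_forall ?_)
        intro t ht
        have ht0 : 0 < t := lt_trans zero_lt_one ht
        rw [norm_mul, norm_norm, norm_cpow_eq_rpow_re_of_pos ht0, norm_cpow_eq_rpow_re_of_pos ht0]
        calc _ ≤ t * t ^ (-(s+1)).re := by
                gcongr; simpa using Nat.floor_le ht0.le
          _ = t ^ (1:ℝ) * t ^ (-(s+1)).re := by simp
          _ = _ := by rw [← Real.rpow_add ht0]; congr 1; simp
      rw [e4, ← hI, ← integral_sub hint1 hint2]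
      unfold JJ
      refine setIntegral_congr_fun measurableSet_Ioi ?_
      intro t ht
      have ht0 : (t:ℂ) ≠ 0 := by
        have : 0 < t := lt_trans zero_lt_one ht
        exact_mod_cast this.ne'
      have : (t:ℂ) ^ (-s) = t * (t:ℂ) ^ (-(s+1)) := by
        rw [show -s = 1 + -(s+1) by ring, cpow_add _ _ ht0, cpow_one]
      simp only [this]
      push_cast; ring
    have hs0 : s ≠ 0 := by intro h; simp [h] at hs; linarith
    unfold GG
    rw [e3]; field_simp; ring
  set H : ℂ → ℂ := Function.update (fun s => (s-1) * riemannZeta s) 1 1 with hH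
  have hHne : ∀ z, z ≠ 1 → H z = (z-1) * riemannZeta z := fun z hz => by
    simp [hH, Function.update_of_ne hz]
  have hHd : ∀ z, z ≠ 1 → DifferentiableAt ℂ H z := by
    intro z hz
    have h1 : DifferentiableAt ℂ (fun s => (s-1) * riemannZeta s) z := by
      have := differentiableAt_riemannZeta hz
      fun_prop
    refine h1.congr_of_eventuallyEq ?_
    filter_upwards [isOpen_ne.mem_nhds hz] with w hw using hHne w hw
  have hH1 : DifferentiableAt ℂ H 1 := by
    refine (analyticAt_of_differentiable_on_punctured_nhds_of_continuousAt ?_ ?_).differentiableAt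
    · filter_upwards [self_mem_nhdsWithin] with z hz using hHd z hz
    · rw [hH, continuousAt_update_same]
      exact riemannZeta_residue_one
  have hHdall : ∀ z, DifferentiableAt ℂ H z := fun z => by
    by_cases h : z = 1
    · rw [h]; exact hH1
    · exact hHd z h
  have a1 : AnalyticOnNhd ℂ GG {s : ℂ | 0 < s.re} :=
    DifferentiableOn.analyticOnNhd (fun s hs => (GG_diff hs).differentiableWithinAt) hopen
  have a2 : AnalyticOnNhd ℂ H {s : ℂ | 0 < s.re} :=
    DifferentiableOn.analyticOnNhd (fun s hs => (hHdall s).differentiableWithinAt) hopen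
  have hpre : IsPreconnected {s : ℂ | 0 < s.re} := (convex_halfSpace_re_gt 0).isPreconnected
  have h2mem : (2:ℂ) ∈ {s : ℂ | 0 < s.re} := by simp
  have hev : GG =ᶠ[𝓝 (2:ℂ)] H := by
    have : ∀ᶠ s in 𝓝 (2:ℂ), 1 < s.re :=
      (isOpen_lt continuous_const continuous_re).mem_nhds (by simp)
    filter_upwards [this] with s hs
    rw [hA s hs, hHne s (by intro h; simp [h] at hs)]
  rw [← hHne s h1]
  exact a1.eqOn_of_preconnected_of_eventuallyEq a2 hpre h2mem hev hs

lemma GG_bound {s : ℂ} (hs : 0 < s.re) : ‖GG s‖ ≤ ‖s‖ + ‖s - 1‖ * (‖s‖ / s.re) := by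
  unfold GG
  refine (norm_sub_le _ _).trans ?_
  rw [norm_mul, norm_mul]
  have : ‖JJ (fun t => ((t - ⌊t⌋₊ : ℝ) : ℂ)) s‖ ≤ 1 / (s.re - 0) :=
    JJ_bound (fun t ht => by simpa using frac_norm_le ht) hs
  gcongr
  rw [div_eq_mul_one_div]
  gcongr
  simpa using this

/-- zeta is real and negative on (0,1) -/
lemma GG_real_pos {σ : ℝ} (h0 : 0 < σ) (h1 : σ ≤ 1) : (GG σ).im = 0 ∧ 0 < (GG σ).re := by
  unfold GG
  rw [JJ_ofReal]
  set I := ∫ t in Ioi (1:ℝ), (t - ⌊t⌋₊) * t ^ (-(σ+1)) with hI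
  have hI0 : 0 ≤ I := by
    refine setIntegral_nonneg measurableSet_Ioi ?_
    intro t ht
    have ht0 : 0 < t := lt_trans zero_lt_one (Set.mem_Ioi.1 ht)
    have := Nat.floor_le ht0.le
    exact mul_nonneg (by linarith) (by positivity)
  have e : (σ:ℂ) - (σ - 1) * (σ * (I:ℂ)) = ((σ - (σ-1) * (σ * I) : ℝ) : ℂ) := by push_cast; ring
  rw [e, ofReal_im, ofReal_re]
  refine ⟨rfl, ?_⟩
  have : 0 ≤ (1 - σ) * (σ * I) := by
    have : 0 ≤ 1 - σ := by linarith
    positivity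
  nlinarith

end

section

open Complex Set Metric

lemma strip_zeros {c : ℂ} {R R' : ℝ} (hR : 0 < R) (hRR : R < R') (n : ℕ) :
    ∀ (f : ℂ → ℂ) (B : ℝ), B < 3 ^ n → DifferentiableOn ℂ f (ball c R') → f c ≠ 0 →
      (∀ s ∈ sphere c R, ‖f s‖ ≤ B * ‖f c‖) →
      ∃ (Z : Multiset ℂ) (g : ℂ → ℂ), DifferentiableOn ℂ g (ball c R') ∧
        (∀ ρ ∈ Z, f ρ = 0 ∧ ρ ∈ closedBall c (R/4)) ∧
        (∀ ρ ∈ closedBall c (R/4), f ρ = 0 → ρ ∈ Z) ∧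
        (∀ s ∈ closedBall c (R/4), g s ≠ 0) ∧
        (∀ s ∈ sphere c R, ‖g s‖ ≤ B * ‖g c‖) ∧
        (∀ s ∈ ball c R', f s ≠ 0 →
          logDeriv f s = (Z.map (fun ρ => 1 / (s - ρ))).sum + logDeriv g s) := by
  induction n with
  | zero =>
    intro f B hB hf hc hb
    exfalso
    have hsub : closedBall c R ⊆ ball c R' := closedBall_subset_ball hRR
    have hd : DiffContOnCl ℂ f (ball c R) := by
      refine DifferentiableOn.diffContOnCl ?_
      rw [closure_ball _ hR.ne']
      exact hf.mono hsub
    have := Complex.norm_le_of_forall_mem_frontier_norm_le isBounded_ball hd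
      (C := B * ‖f c‖) (by rw [frontier_ball _ hR.ne']; exact hb)
      (z := c) (subset_closure (mem_ball_self hR))
    have hpos : 0 < ‖f c‖ := norm_pos_iff.2 hc
    simp at hB
    nlinarith
  | succ n ih =>
    intro f B hB hf hc hb
    by_cases hz : ∃ ρ ∈ closedBall c (R/4), f ρ = 0
    · obtain ⟨ρ, hρ, hfρ⟩ := hz
      have hρ' : ρ ∈ ball c R' := by
        simp only [mem_closedBall, mem_ball] at *; linarith
      have hfe : ∀ s, f s = (s - ρ) * dslope f ρ s := by
        intro s
        have := sub_smul_dslope f ρ s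
        rw [smul_eq_mul, hfρ, sub_zero] at this
        exact this.symm
      have hcρ : c - ρ ≠ 0 := by
        intro h; rw [sub_eq_zero] at h; rw [← h] at hfρ; exact hc hfρ
      have hd : DifferentiableOn ℂ (dslope f ρ) (ball c R') :=
        (Complex.differentiableOn_dslope (isOpen_ball.mem_nhds hρ')).2 hf
      have hc1 : dslope f ρ c ≠ 0 := by
        intro h; apply hc; rw [hfe c, h, mul_zero]
      have hb1 : ∀ s ∈ sphere c R, ‖dslope f ρ s‖ ≤ (B/3) * ‖dslope f ρ c‖ := by
        intro s hs
        have h1 := hb s hs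
        rw [hfe s, hfe c, norm_mul, norm_mul] at h1
        have h2 : ‖c - ρ‖ ≤ R/4 := by
          rw [mem_closedBall, dist_eq_norm] at hρ; rwa [norm_sub_rev]
        have h3 : 3*R/4 ≤ ‖s - ρ‖ := by
          have : ‖s - c‖ = R := by rwa [mem_sphere, dist_eq_norm] at hs
          have h4 := norm_sub_le_norm_add (s - ρ) (ρ - c)
          have h5 : ‖s - c‖ ≤ ‖s - ρ‖ + ‖ρ - c‖ := by
            have := norm_add_le (s - ρ) (ρ - c); simpa using this
          rw [norm_sub_rev ρ c] at h5
          linarith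
        have hB0 : 0 ≤ B := by
          by_contra h
          have : 0 < ‖f c‖ := norm_pos_iff.2 hc
          have := hb s hs
          have := norm_nonneg (f s)
          nlinarith
        have h6 : (3*R/4) * ‖dslope f ρ s‖ ≤ B * ((R/4) * ‖dslope f ρ c‖) := by
          calc _ ≤ ‖s - ρ‖ * ‖dslope f ρ s‖ := by gcongr
            _ ≤ B * (‖c - ρ‖ * ‖dslope f ρ c‖) := h1
            _ ≤ _ := by gcongr
        have : R * ‖dslope f ρ s‖ ≤ R * ((B/3) * ‖dslope f ρ c‖) := by nlinarith
        exact le_of_mul_le_mul_left this hR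
      obtain ⟨Z, g, g1, g2, g3, g4, g5, g6⟩ := ih (dslope f ρ) (B/3) (by
        rw [pow_succ] at hB; linarith) hd hc1 hb1
      refine ⟨ρ ::ₘ Z, g, g1, ?_, ?_, g4, ?_, ?_⟩
      · intro w hw
        rcases Multiset.mem_cons.1 hw with h | h
        · subst h; exact ⟨hfρ, hρ⟩
        · refine ⟨?_, (g2 w h).2⟩
          rw [hfe w, (g2 w h).1, mul_zero]
      · intro w hw hfw
        rw [hfe w, mul_eq_zero] at hfw
        rcases hfw with h | h
        · rw [sub_eq_zero] at h; simp [h]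
        · exact Multiset.mem_cons_of_mem (g3 w hw h)
      · intro s hs
        have hB0 : 0 ≤ B := by
          by_contra h
          have : 0 < ‖f c‖ := norm_pos_iff.2 hc
          have := hb s hs
          have := norm_nonneg (f s)
          nlinarith
        refine (g5 s hs).trans ?_
        gcongr
        linarith
      · intro s hs hfs
        have hfs' := hfs
        rw [hfe s] at hfs'
        have h1 : s - ρ ≠ 0 := left_ne_zero_of_mul hfs'
        have h2 : dslope f ρ s ≠ 0 := right_ne_zero_of_mul hfs'
        have e : f = fun s => (s - ρ) * dslope f ρ s := funext hfe
        rw [Multiset.map_cons, Multiset.sum_cons]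
        have hds : DifferentiableAt ℂ (dslope f ρ) s := hd.differentiableAt (isOpen_ball.mem_nhds hs)
        have : logDeriv f s = logDeriv (fun s => s - ρ) s + logDeriv (dslope f ρ) s := by
          conv_lhs => rw [e]
          exact logDeriv_mul s h1 h2 (by fun_prop) hds
        rw [this, g6 s hs h2, ← add_assoc]
        congr 2
        simp [logDeriv_apply]
    · push Not at hz
      refine ⟨0, f, hf, by simp, ?_, hz, hb, by simp⟩
      intro ρ hρ h
      exact absurd h (hz ρ hρ)

lemma landau_local {f : ℂ → ℂ} {c : ℂ} {R R' B : ℝ} (hR : 0 < R) (hRR : R < R') (hB : 1 < B)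
    (hf : DifferentiableOn ℂ f (ball c R')) (hc : f c ≠ 0)
    (hb : ∀ s ∈ sphere c R, ‖f s‖ ≤ B * ‖f c‖) :
    ∃ Z : Multiset ℂ, (∀ ρ ∈ Z, f ρ = 0 ∧ ρ ∈ closedBall c (R/4)) ∧
        (∀ ρ ∈ closedBall c (R/4), f ρ = 0 → ρ ∈ Z) ∧
        ∀ s ∈ closedBall c (R/8), f s ≠ 0 →
          ‖logDeriv f s - (Z.map (fun ρ => 1 / (s - ρ))).sum‖ ≤ 96 * Real.log B / R := by
  obtain ⟨n, hn⟩ := pow_unbounded_of_one_lt B (show (1:ℝ) < 3 by norm_num)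
  obtain ⟨Z, g, g1, g2, g3, g4, g5, g6⟩ := strip_zeros hR hRR n f B hn hf hc hb
  refine ⟨Z, g2, g3, ?_⟩
  intro s hs hfs
  have hs' : s ∈ ball c R' := by
    simp only [mem_closedBall, mem_ball] at *; linarith
  rw [g6 s hs' hfs, add_sub_cancel_left]
  have hM : 0 < Real.log B := Real.log_pos hB
  have hsub : ball c (R/4) ⊆ ball c R' := ball_subset_ball (by linarith)
  have gc : g c ≠ 0 := g4 c (mem_closedBall_self (by linarith))
  have hd : DiffContOnCl ℂ g (ball c R) := by
    refine DifferentiableOn.diffContOnCl ?_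
    rw [closure_ball _ hR.ne']
    exact g1.mono (closedBall_subset_ball hRR)
  have gb : ∀ z ∈ ball c R, ‖g z‖ ≤ B * ‖g c‖ := fun z hz =>
    Complex.norm_le_of_forall_mem_frontier_norm_le isBounded_ball hd
      (C := B * ‖g c‖) (by rw [frontier_ball _ hR.ne']; exact g5) (subset_closure hz)
  have hgd : ∀ z ∈ ball c (R/4), DifferentiableAt ℂ g z := fun z hz =>
    g1.differentiableAt (isOpen_ball.mem_nhds (hsub hz))
  have hq : DifferentiableOn ℂ (logDeriv g) (ball c (R/4)) := by
    have h1 : DifferentiableOn ℂ (deriv g) (ball c (R/4)) := (g1.mono hsub).deriv isOpen_ball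
    exact h1.div (g1.mono hsub) (fun z hz => g4 z (ball_subset_closedBall hz))
  obtain ⟨F, hFc, hF⟩ := hq.isExactOn_ball.with_val_at c 0
  have hFd : ∀ z ∈ ball c (R/4), HasDerivAt F (logDeriv g z) z := hF
  have hconst : ∀ z ∈ ball c (R/4), g z * exp (-F z) = g c := by
    intro z hz
    have hderiv : ∀ w ∈ ball c (R/4), HasDerivAt (fun w => g w * exp (-F w)) 0 w := by
      intro w hw
      have h1 := (hgd w hw).hasDerivAt
      have h2 := (hFd w hw).neg.cexp
      have h3 := h1.mul h2
      have gw := g4 w (ball_subset_closedBall hw)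
      have e0 : deriv g w * cexp ((-F) w) + g w * (cexp ((-F) w) * -logDeriv g w) = 0 := by
        rw [logDeriv_apply]; simp only [Pi.neg_apply]; field_simp; ring
      rw [e0] at h3
      exact h3
    have := (convex_ball c (R/4)).is_const_of_fderivWithin_eq_zero (𝕜 := ℂ)
      (f := fun w => g w * exp (-F w))
      (fun w hw => (hderiv w hw).differentiableAt.differentiableWithinAt)
      (fun w hw => by
        rw [fderivWithin_of_isOpen isOpen_ball hw]
        have := (hderiv w hw).hasFDerivAt.fderiv
        rw [this]; ext; simp) hz (mem_ball_self (by linarith))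
    simpa [hFc] using this
  have hre : ∀ z ∈ ball c (R/4), (F z).re ≤ Real.log B := by
    intro z hz
    have h1 : g z = g c * exp (F z) := by
      rw [← hconst z hz, mul_assoc, ← exp_add]; simp
    have h2 := gb z (ball_subset_ball (by linarith) hz)
    rw [h1, norm_mul, norm_exp] at h2
    have hpos : 0 < ‖g c‖ := norm_pos_iff.2 gc
    have h3 : Real.exp (F z).re ≤ B := by nlinarith
    exact (Real.le_log_iff_exp_le (by linarith)).2 h3
  -- Borel–Carathéodory
  have hBC : ∀ z ∈ closedBall c (3*R/16), ‖F z‖ ≤ 6 * Real.log B := by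
    intro z hz
    have hzn : ‖z - c‖ ≤ 3*R/16 := by rwa [mem_closedBall, dist_eq_norm] at hz
    have hmap : ∀ w ∈ ball (0:ℂ) (R/4), w + c ∈ ball c (R/4) := by
      intro w hw; simpa [mem_ball, dist_eq_norm] using hw
    have := Complex.borelCaratheodory_zero (f := fun w => F (w + c)) (z := z - c) hM
      (R := R/4) (by
        intro w hw
        exact ((hFd _ (hmap w hw)).differentiableAt.comp w
          (by fun_prop : DifferentiableAt ℂ (fun w => w + c) w)).differentiableWithinAt)
      (fun w hw => hre _ (hmap w hw)) (by linarith)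
      (by rw [mem_ball_zero_iff]; linarith) (by simpa using hFc)
    simp only [sub_add_cancel] at this
    refine this.trans ?_
    rw [div_le_iff₀ (by linarith)]
    nlinarith
  have hsn : ‖s - c‖ ≤ R/8 := by rwa [mem_closedBall, dist_eq_norm] at hs
  have hsb : s ∈ ball c (R/4) := by rw [mem_ball, dist_eq_norm]; linarith
  have hin : closedBall s (R/16) ⊆ closedBall c (3*R/16) := by
    intro w hw
    rw [mem_closedBall] at *
    have := dist_triangle w s c
    linarith
  have hin2 : closedBall c (3*R/16) ⊆ ball c (R/4) := closedBall_subset_ball (by linarith)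
  have hdF : DiffContOnCl ℂ F (ball s (R/16)) := by
    refine DifferentiableOn.diffContOnCl ?_
    rw [closure_ball _ (by linarith)]
    intro w hw
    exact (hFd w (hin2 (hin hw))).differentiableAt.differentiableWithinAt
  have := Complex.norm_deriv_le_of_forall_mem_sphere_norm_le (by linarith : 0 < R/16) hdF
    (C := 6 * Real.log B) (fun w hw => hBC w (hin (sphere_subset_closedBall hw)))
  rw [(hFd s hsb).deriv] at this
  refine this.trans (le_of_eq ?_)
  field_simp
  ring

end

section

open Complex Set Metric

lemma zeta_real_series {σ : ℝ} (hσ : 1 < σ) :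
    Summable (fun n : ℕ => 1 / (n:ℝ) ^ σ) ∧ ∑' n : ℕ, 1 / (n:ℝ) ^ σ ≤ 2 + 1 / (σ - 1) := by
  have hs : Summable (fun n : ℕ => 1 / (n:ℝ) ^ σ) := Real.summable_one_div_nat_rpow.mpr hσ
  refine ⟨hs, ?_⟩
  have h1 : riemannZeta (σ:ℂ) = ((∑' n : ℕ, 1 / (n:ℝ) ^ σ : ℝ) : ℂ) := by
    rw [zeta_eq_tsum_one_div_nat_cpow (by simpa using hσ), Complex.ofReal_tsum]
    congr 1; ext n
    push_cast
    rw [Complex.ofReal_cpow (by positivity)]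
    simp
  have h0 : 0 ≤ ∑' n : ℕ, 1 / (n:ℝ) ^ σ := tsum_nonneg fun n => by positivity
  have h2 : ‖riemannZeta (σ:ℂ)‖ = ∑' n : ℕ, 1 / (n:ℝ) ^ σ := by
    rw [h1, Complex.norm_real, Real.norm_of_nonneg h0]
  have hσ1 : 0 < σ - 1 := by linarith
  have h3 := GG_bound (s := (σ:ℂ)) (by simp; linarith)
  rw [GG_eq (by simp; linarith) (by exact_mod_cast hσ.ne'), norm_mul, h2] at h3
  have e1 : ‖(σ:ℂ) - 1‖ = σ - 1 := by
    rw [← Complex.ofReal_one, ← Complex.ofReal_sub, Complex.norm_real, Real.norm_of_nonneg hσ1.le]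
  have e2 : ‖(σ:ℂ)‖ = σ := by rw [Complex.norm_real, Real.norm_of_nonneg (by linarith)]
  rw [e1, e2, Complex.ofReal_re, div_self (by linarith)] at h3
  rw [← sub_nonneg]
  have : (σ - 1) * (2 + 1/(σ-1)) = 2 * (σ - 1) + 1 := by field_simp
  nlinarith

lemma LSeries_norm_le {f : ℕ → ℂ} (hf : ∀ n, ‖f n‖ ≤ 1) {s : ℂ} (hs : 1 < s.re) :
    ‖LSeries f s‖ ≤ 2 + 1 / (s.re - 1) := by
  obtain ⟨h1, h2⟩ := zeta_real_series hs
  refine (tsum_of_norm_bounded h1.hasSum ?_).trans h2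
  intro n
  rw [LSeries.norm_term_eq]
  split_ifs with h
  · positivity
  · gcongr; exact hf n

lemma LFun_inv_bound {q : ℕ} [NeZero q] (χ : DirichletCharacter ℂ q) {s : ℂ} (hs : 1 < s.re) :
    1 ≤ ‖χ.LFunction s‖ * (2 + 1 / (s.re - 1)) := by
  have h := DirichletCharacter.LSeries.mul_mu_eq_one χ hs
  rw [← DirichletCharacter.LFunction_eq_LSeries χ hs] at h
  have h2 := congrArg norm h
  rw [norm_mul, norm_one] at h2
  refine h2.symm.le.trans ?_
  gcongr
  apply LSeries_norm_le _ hs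
  intro n
  simp only [Pi.mul_apply, norm_mul]
  have := χ.norm_le_one (n : ZMod q)
  have h3 : ‖((ArithmeticFunction.moebius n : ℤ) : ℂ)‖ ≤ 1 := by
    rw [Complex.norm_intCast]; exact_mod_cast ArithmeticFunction.abs_moebius_le_one
  nlinarith [norm_nonneg (χ (n : ZMod q)), norm_nonneg ((ArithmeticFunction.moebius n : ℤ) : ℂ)]

lemma zeta_inv_bound {s : ℂ} (hs : 1 < s.re) :
    1 ≤ ‖riemannZeta s‖ * (2 + 1 / (s.re - 1)) := by
  have h := LFun_inv_bound (1 : DirichletCharacter ℂ 1) hs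
  rwa [DirichletCharacter.LFunction_modOne_eq] at h

lemma GG_ne_zero {s : ℂ} (hs : 1 ≤ s.re) : GG s ≠ 0 := by
  by_cases h : s = 1
  · rw [h, GG_one]; exact one_ne_zero
  · rw [GG_eq (by linarith) h]
    exact mul_ne_zero (sub_ne_zero.mpr h) (riemannZeta_ne_zero_of_one_le_re hs)

lemma landau_L {q : ℕ} [NeZero q] {χ : DirichletCharacter ℂ q} (hχ : χ ≠ 1) {ℓ t : ℝ}
    (hℓ : 16 ≤ ℓ) (hq : (q:ℝ) ≤ Real.exp ℓ) (ht : |t| ≤ 2 * Real.exp ℓ) :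
    ∃ Z : Multiset ℂ, (∀ ρ ∈ Z, χ.LFunction ρ = 0 ∧ ρ ∈ closedBall (⟨1 + 1/ℓ, t⟩ : ℂ) (1/8)) ∧
      (∀ ρ ∈ closedBall (⟨1 + 1/ℓ, t⟩ : ℂ) (1/8), χ.LFunction ρ = 0 → ρ ∈ Z) ∧
      ∀ s ∈ closedBall (⟨1 + 1/ℓ, t⟩ : ℂ) (1/16), χ.LFunction s ≠ 0 →
        ‖logDeriv χ.LFunction s - (Z.map (fun ρ => 1/(s-ρ))).sum‖ ≤ 2000 * ℓ := by
  set c : ℂ := ⟨1 + 1/ℓ, t⟩ with hc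
  have hℓ0 : 0 < ℓ := by linarith
  have hcre : 1 < c.re := by simp [hc, hℓ0]
  set E := Real.exp ℓ with hE
  have hEℓ : ℓ + 1 ≤ E := Real.add_one_le_exp ℓ
  have hinv : 1/ℓ ≤ 1 := by rw [div_le_one hℓ0]; linarith
  have hcn : ‖c‖ ≤ 2 + 2 * E := by
    refine (Complex.norm_le_abs_re_add_abs_im c).trans ?_
    have : |c.re| ≤ 2 := by
      rw [abs_of_pos (by linarith)]; simp only [hc]; linarith
    have h2 : |c.im| ≤ 2 * E := ht
    linarith
  have hne : χ.LFunction c ≠ 0 :=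
    DirichletCharacter.LFunction_ne_zero_of_one_le_re χ (.inl hχ) hcre.le
  have key := landau_local (f := χ.LFunction) (c := c) (R := 1/2) (R' := 1)
    (B := Real.exp (10 * ℓ)) (by norm_num) (by norm_num)
    (by rw [Real.one_lt_exp_iff]; linarith)
    (DirichletCharacter.differentiable_LFunction hχ).differentiableOn hne ?_
  · obtain ⟨Z, h1, h2, h3⟩ := key
    norm_num at h1 h2 h3 ⊢
    refine ⟨Z, h1, h2, fun s hs hs' => (h3 s hs hs').trans ?_⟩
    linarith
  · intro s hs
    have hd : ‖s - c‖ = 1/2 := by simpa [dist_eq_norm] using hs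
    have hre : |(s - c).re| ≤ 1/2 := hd ▸ Complex.abs_re_le_norm _
    rw [abs_le, Complex.sub_re] at hre
    have hsre : 1/2 ≤ s.re := by linarith
    have hsn : ‖s‖ ≤ 3 * E := by
      have := norm_add_le (s - c) c
      rw [sub_add_cancel] at this
      linarith
    have hb := LFun_bound hχ (ε := 1) (by norm_num) le_rfl (s := s) (by linarith) (by linarith)
    rw [Real.rpow_one, sub_self, sub_zero] at hb
    have hi := LFun_inv_bound χ hcre
    have hcc : c.re - 1 = 1/ℓ := by simp [hc]
    rw [hcc, one_div_one_div] at hi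
    have hE10 : Real.exp (10 * ℓ) = E ^ 10 := by rw [hE, ← Real.exp_nat_mul]; norm_num
    rw [hE10]
    have h5 : ‖χ.LFunction s‖ ≤ 6 * E ^ 2 := by
      refine hb.trans ?_
      rw [div_le_iff₀ (by linarith)]
      have : ‖s‖ * q ≤ 3 * E * E := by gcongr
      nlinarith
    have h6 : 6 * E ^ 2 * (2 + ℓ) ≤ E ^ 10 := by
      have hE17 : 17 ≤ E := by linarith
      calc 6 * E ^ 2 * (2 + ℓ) ≤ E * E ^ 2 * (E * E) := by gcongr <;> nlinarith
        _ = E ^ 5 := by ring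
        _ ≤ E ^ 10 := pow_le_pow_right₀ (by linarith) (by norm_num)
    have hn := norm_nonneg (χ.LFunction c)
    calc ‖χ.LFunction s‖ ≤ 6 * E ^ 2 * 1 := by linarith
      _ ≤ 6 * E ^ 2 * (‖χ.LFunction c‖ * (2 + ℓ)) := by gcongr
      _ = (6 * E ^ 2 * (2 + ℓ)) * ‖χ.LFunction c‖ := by ring
      _ ≤ _ := by gcongr

lemma landau_G {ℓ t : ℝ}
    (hℓ : 16 ≤ ℓ) (ht : |t| ≤ 2 * Real.exp ℓ) :
    ∃ Z : Multiset ℂ, (∀ ρ ∈ Z, GG ρ = 0 ∧ ρ ∈ closedBall (⟨1 + 1/ℓ, t⟩ : ℂ) (1/8)) ∧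
      (∀ ρ ∈ closedBall (⟨1 + 1/ℓ, t⟩ : ℂ) (1/8), GG ρ = 0 → ρ ∈ Z) ∧
      ∀ s ∈ closedBall (⟨1 + 1/ℓ, t⟩ : ℂ) (1/16), GG s ≠ 0 →
        ‖logDeriv GG s - (Z.map (fun ρ => 1/(s-ρ))).sum‖ ≤ 2000 * ℓ := by
  set c : ℂ := ⟨1 + 1/ℓ, t⟩ with hc
  have hℓ0 : 0 < ℓ := by linarith
  have hcre : 1 < c.re := by simp [hc, hℓ0]
  set E := Real.exp ℓ with hE
  have hEℓ : ℓ + 1 ≤ E := Real.add_one_le_exp ℓ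
  have hinv : 1/ℓ ≤ 1 := by rw [div_le_one hℓ0]; linarith
  have hcn : ‖c‖ ≤ 2 + 2 * E := by
    refine (Complex.norm_le_abs_re_add_abs_im c).trans ?_
    have : |c.re| ≤ 2 := by
      rw [abs_of_pos (by linarith)]; simp only [hc]; linarith
    have h2 : |c.im| ≤ 2 * E := ht
    linarith
  have hne : GG c ≠ 0 := GG_ne_zero hcre.le
  have key := landau_local (f := GG) (c := c) (R := 1/2) (R' := 1)
    (B := Real.exp (10 * ℓ)) (by norm_num) (by norm_num)
    (by rw [Real.one_lt_exp_iff]; linarith) ?_ hne ?_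
  · obtain ⟨Z, h1, h2, h3⟩ := key
    norm_num at h1 h2 h3 ⊢
    refine ⟨Z, h1, h2, fun s hs hs' => (h3 s hs hs').trans ?_⟩
    linarith
  · intro s hs
    refine (GG_diff ?_).differentiableWithinAt
    have hd : ‖s - c‖ < 1 := by simpa [dist_eq_norm] using hs
    have hre := (Complex.abs_re_le_norm (s - c)).trans_lt hd
    rw [abs_lt, Complex.sub_re] at hre
    linarith
  · intro s hs
    have hd : ‖s - c‖ = 1/2 := by simpa [dist_eq_norm] using hs
    have hre : |(s - c).re| ≤ 1/2 := hd ▸ Complex.abs_re_le_norm _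
    rw [abs_le, Complex.sub_re] at hre
    have hsre : 1/2 ≤ s.re := by linarith
    have hsn : ‖s‖ ≤ 3 * E := by
      have := norm_add_le (s - c) c
      rw [sub_add_cancel] at this
      linarith
    have hs1 : ‖s - 1‖ ≤ 4 * E := by
      have := norm_sub_le s 1
      rw [norm_one] at this
      linarith
    have hb := GG_bound (s := s) (by linarith)
    have hi := zeta_inv_bound hcre
    have hcc : c.re - 1 = 1/ℓ := by simp [hc]
    rw [hcc, one_div_one_div] at hi
    have hE10 : Real.exp (10 * ℓ) = E ^ 10 := by rw [hE, ← Real.exp_nat_mul]; norm_num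
    rw [hE10]
    have hE17 : 17 ≤ E := by linarith
    have h5 : ‖GG s‖ ≤ 27 * E ^ 2 := by
      refine hb.trans ?_
      have : ‖s‖ / s.re ≤ 6 * E := by
        rw [div_le_iff₀ (by linarith)]; nlinarith
      have : ‖s - 1‖ * (‖s‖ / s.re) ≤ 4 * E * (6 * E) := by gcongr
      nlinarith
    have h6 : 27 * E ^ 2 * (ℓ * (2 + ℓ)) ≤ E ^ 10 := by
      calc 27 * E ^ 2 * (ℓ * (2 + ℓ)) ≤ (E * E) * E ^ 2 * (E * (E * E)) := by gcongr <;> nlinarith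
        _ = E ^ 7 := by ring
        _ ≤ E ^ 10 := pow_le_pow_right₀ (by linarith) (by norm_num)
    have hn := norm_nonneg (GG c)
    have hc1 : c ≠ 1 := by
      intro h; rw [h] at hcre; simp at hcre
    have hcm : 1/ℓ ≤ ‖c - 1‖ := by
      rw [← hcc]
      have := (le_abs_self _).trans (Complex.abs_re_le_norm (c - 1))
      simpa using this
    have hz : 1 ≤ ‖GG c‖ * (ℓ * (2 + ℓ)) := by
      rw [GG_eq (by linarith) hc1, norm_mul]
      have : 1 ≤ ‖c - 1‖ * ℓ := by rwa [div_le_iff₀ hℓ0] at hcm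
      calc (1:ℝ) = 1 * 1 := by ring
        _ ≤ (‖c - 1‖ * ℓ) * (‖riemannZeta c‖ * (2 + ℓ)) := by gcongr
        _ = _ := by ring
    calc ‖GG s‖ ≤ 27 * E ^ 2 * 1 := by linarith
      _ ≤ 27 * E ^ 2 * (‖GG c‖ * (ℓ * (2 + ℓ))) := by gcongr
      _ = (27 * E ^ 2 * (ℓ * (2 + ℓ))) * ‖GG c‖ := by ring
      _ ≤ _ := by gcongr

end

section

open Complex Set Metric

local notation "Λ" => ArithmeticFunction.vonMangoldt

lemma multiset_sum_re (Z : Multiset ℂ) (f : ℂ → ℂ) :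
    ((Z.map f).sum).re = (Z.map (fun ρ => (f ρ).re)).sum := by
  induction Z using Multiset.induction with
  | empty => simp
  | cons a s ih => simp [ih]

lemma multiset_norm_sum_le (Z : Multiset ℂ) (f : ℂ → ℂ) (g : ℂ → ℝ)
    (h : ∀ ρ ∈ Z, ‖f ρ‖ ≤ g ρ) : ‖(Z.map f).sum‖ ≤ (Z.map g).sum := by
  induction Z using Multiset.induction with
  | empty => simp
  | cons a s ih =>
    simp only [Multiset.map_cons, Multiset.sum_cons]
    refine (norm_add_le _ _).trans (add_le_add (h a (by simp)) (ih fun ρ hρ => h ρ (by simp [hρ])))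

lemma re_one_div_pos {z : ℂ} (hz : 0 < z.re) : 0 < (1 / z).re := by
  rw [one_div, Complex.inv_re]
  exact div_pos hz (Complex.normSq_pos.mpr (by rintro rfl; simp at hz))

lemma mem_small {ℓ a t : ℝ} (hℓ : 16 ≤ ℓ) (ha : 0 < a) (ha1 : a ≤ 1) :
    (⟨1 + a/ℓ, t⟩ : ℂ) ∈ closedBall (⟨1 + 1/ℓ, t⟩ : ℂ) (1/16) := by
  rw [mem_closedBall, dist_eq_norm]
  have : (⟨1 + a/ℓ, t⟩ : ℂ) - ⟨1 + 1/ℓ, t⟩ = ((a - 1)/ℓ : ℝ) := by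
    apply Complex.ext <;> simp; ring
  rw [this, Complex.norm_real, Real.norm_eq_abs, abs_div, abs_of_pos (by linarith : 0 < ℓ),
    div_le_iff₀ (by linarith), abs_le]
  constructor <;> linarith

lemma zeta_logDeriv_le {ℓ t a : ℝ} (hℓ : 16 ≤ ℓ) (ht : |t| ≤ 2 * Real.exp ℓ) (ha : 0 < a)
    (ha1 : a ≤ 1) :
    (LSeries (fun n => (Λ n : ℂ)) ⟨1 + a/ℓ, t⟩).re
      ≤ (1 / ((⟨a/ℓ, t⟩ : ℂ))).re + 2000 * ℓ := by
  obtain ⟨Z, h1, h2, h3⟩ := landau_G hℓ ht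
  set s : ℂ := ⟨1 + a/ℓ, t⟩ with hs
  have hℓ0 : 0 < ℓ := by linarith
  have hsre : 1 < s.re := by simp [hs]; positivity
  have hs1 : s ≠ 1 := by intro h; rw [h] at hsre; simp at hsre
  have h4 := h3 s (mem_small hℓ ha ha1) (GG_ne_zero hsre.le)
  have hz : riemannZeta s ≠ 0 := riemannZeta_ne_zero_of_one_le_re hsre.le
  have hld : logDeriv GG s = 1 / (s - 1) + deriv riemannZeta s / riemannZeta s := by
    have he : GG =ᶠ[nhds s] fun s => (s - 1) * riemannZeta s := by
      have : {z : ℂ | 1 < z.re} ∈ nhds s :=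
        (isOpen_lt continuous_const continuous_re).mem_nhds hsre
      filter_upwards [this] with z hz
      have hz' : 1 < z.re := hz
      refine GG_eq (by linarith) ?_
      rintro rfl; simp at hz'
    rw [(show logDeriv GG s = logDeriv (fun s => (s - 1) * riemannZeta s) s from by
      simp only [logDeriv_apply]; rw [he.deriv_eq, he.eq_of_nhds])]
    rw [logDeriv_mul (f := fun s => s - 1) s (sub_ne_zero.mpr hs1) hz (by fun_prop) (differentiableAt_riemannZeta hs1)]
    simp [logDeriv_apply]
  have hsm : s - 1 = ⟨a/ℓ, t⟩ := by apply Complex.ext <;> simp [hs]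
  have h5 : LSeries (fun n => (Λ n : ℂ)) s = 1 / (s - 1) - logDeriv GG s := by
    rw [hld, ArithmeticFunction.LSeries_vonMangoldt_eq_deriv_riemannZeta_div hsre]; ring
  rw [h5, hsm, Complex.sub_re]
  have h6 : 0 ≤ ((Z.map (fun ρ => 1/(s-ρ))).sum).re := by
    rw [multiset_sum_re]
    apply Multiset.sum_nonneg
    intro x hx
    obtain ⟨ρ, hρ, rfl⟩ := Multiset.mem_map.mp hx
    have hρ1 : ρ.re < 1 := by
      by_contra hcon
      exact GG_ne_zero (not_lt.mp hcon) (h1 ρ hρ).1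
    exact (re_one_div_pos (by rw [Complex.sub_re]; linarith)).le
  have h7 := (Complex.abs_re_le_norm _).trans h4
  rw [abs_le, Complex.sub_re] at h7
  linarith

lemma quad_real {q : ℕ} {χ : DirichletCharacter ℂ q} (hχ : χ.IsQuadratic) (a : ZMod q) :
    ∃ r : ℝ, χ a = r ∧ (r = 0 ∨ r = 1 ∨ r = -1) := by
  rcases hχ a with h | h | h
  · exact ⟨0, by simp [h], by simp⟩
  · exact ⟨1, by simp [h], by simp⟩
  · exact ⟨-1, by simp [h], by simp⟩

lemma LFun_logDeriv_eq {q : ℕ} [NeZero q] (χ : DirichletCharacter ℂ q) {s : ℂ} (hs : 1 < s.re) :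
    LSeries ((fun n : ℕ => χ n) * (fun n => (Λ n : ℂ))) s = - logDeriv χ.LFunction s := by
  rw [DirichletCharacter.LSeries_twist_vonMangoldt_eq χ hs, logDeriv_apply,
    DirichletCharacter.deriv_LFunction_eq_deriv_LSeries χ hs,
    DirichletCharacter.LFunction_eq_LSeries χ hs, neg_div]

lemma three_four_one {q : ℕ} [NeZero q] {χ : DirichletCharacter ℂ q} (hχ : χ.IsQuadratic)
    {σ t : ℝ} (hσ : 1 < σ) :
    0 ≤ 3 * (LSeries (fun n => (Λ n : ℂ)) ⟨σ, 0⟩).re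
      + 4 * (LSeries ((fun n : ℕ => χ n) * (fun n => (Λ n : ℂ))) ⟨σ, t⟩).re
      + (LSeries (fun n => (Λ n : ℂ)) ⟨σ, 2 * t⟩).re := by
  have s1 := ArithmeticFunction.LSeriesSummable_vonMangoldt (s := ⟨σ, 0⟩) hσ
  have s2 := DirichletCharacter.LSeriesSummable_twist_vonMangoldt χ (s := ⟨σ, t⟩) hσ
  have s3 := ArithmeticFunction.LSeriesSummable_vonMangoldt (s := ⟨σ, 2 * t⟩) hσ
  have e1 := (Complex.hasSum_re s1.hasSum)
  have e2 := (Complex.hasSum_re s2.hasSum)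
  have e3 := (Complex.hasSum_re s3.hasSum)
  have e := ((e1.mul_left 3).add (e2.mul_left 4)).add e3
  refine e.nonneg ?_
  intro n
  rcases eq_or_ne n 0 with rfl | hn
  · simp
  rw [LSeries.term_of_ne_zero hn, LSeries.term_of_ne_zero hn, LSeries.term_of_ne_zero hn]
  simp only [Pi.mul_apply]
  obtain ⟨r, hr, hr'⟩ := quad_real hχ n
  rw [hr]
  have hn0 : (n:ℂ) ≠ 0 := by exact_mod_cast hn
  set w : ℂ := (n:ℂ) ^ (-(t * I)) with hw
  have hnp : (0:ℝ) < n := by positivity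
  have hw1 : ‖w‖ = 1 := by
    rw [hw, Complex.norm_natCast_cpow_of_pos (Nat.pos_of_ne_zero hn)]; simp
  set m : ℝ := (n:ℝ) ^ (-σ) with hm
  have hmc : (n:ℂ) ^ (-(σ:ℂ)) = (m:ℂ) := by
    rw [hm, Complex.ofReal_cpow hnp.le]; simp
  have t1 : (Λ n : ℂ) / (n:ℂ) ^ (⟨σ, 0⟩ : ℂ) = ((Λ n * m : ℝ) : ℂ) := by
    rw [div_eq_mul_inv, ← Complex.cpow_neg, (show (⟨σ, 0⟩ : ℂ) = σ from rfl), hmc]; push_cast; ring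
  have t2 : (r * Λ n : ℂ) / (n:ℂ) ^ (⟨σ, t⟩ : ℂ) = ((Λ n * m * r: ℝ) : ℂ) * w := by
    rw [div_eq_mul_inv, ← Complex.cpow_neg,
      (show -(⟨σ, t⟩ : ℂ) = -σ + -(t * I) from by apply Complex.ext <;> simp),
      Complex.cpow_add _ _ hn0, hmc]; push_cast; ring
  have t3 : (Λ n : ℂ) / (n:ℂ) ^ (⟨σ, 2*t⟩ : ℂ) = ((Λ n * m : ℝ) : ℂ) * w ^ 2 := by
    rw [div_eq_mul_inv, ← Complex.cpow_neg,
      (show -(⟨σ, 2*t⟩ : ℂ) = -σ + (-(t * I) + -(t * I)) from by apply Complex.ext <;> simp; ring),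
      Complex.cpow_add _ _ hn0, Complex.cpow_add _ _ hn0, hmc]; push_cast; ring
  rw [t1, t2, t3, Complex.re_ofReal_mul, Complex.re_ofReal_mul, Complex.ofReal_re]
  have hp : 0 ≤ Λ n * m := mul_nonneg ArithmeticFunction.vonMangoldt_nonneg (by positivity)
  have hsq : w.re ^ 2 + w.im ^ 2 = 1 := by
    have := Complex.sq_norm w
    rw [hw1, Complex.normSq_apply] at this
    nlinarith
  have hw2 : (w ^ 2).re = 2 * w.re ^ 2 - 1 := by
    rw [pow_two, Complex.mul_re]; nlinarith
  rw [hw2]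
  have : 3 * (Λ n * m) + 4 * (Λ n * m * r * w.re) + Λ n * m * (2 * w.re ^ 2 - 1)
    = (Λ n * m) * (2 + 4 * r * w.re + 2 * w.re ^ 2) := by ring
  rw [this]
  refine mul_nonneg hp ?_
  rcases hr' with rfl | rfl | rfl
  · nlinarith [sq_nonneg w.re]
  · nlinarith [sq_nonneg (1 + w.re)]
  · nlinarith [sq_nonneg (1 - w.re)]

/-- Zero-free region away from the real axis. -/
lemma zero_free_away (δ : ℝ) (hδ : 0 < δ) : ∃ b > (0:ℝ), b ≤ 1 ∧
    ∀ (q : ℕ) [NeZero q] (χ : DirichletCharacter ℂ q), χ ≠ 1 → χ.IsQuadratic →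
    ∀ ℓ : ℝ, 16 ≤ ℓ → (q:ℝ) ≤ Real.exp ℓ → ∀ s : ℂ, 1 - b/ℓ ≤ s.re → δ/ℓ ≤ |s.im| →
    |s.im| ≤ Real.exp ℓ → χ.LFunction s ≠ 0 := by
  set a := min δ (1/100000) with ha
  have ha0 : 0 < a := lt_min hδ (by norm_num)
  have haδ : a ≤ δ := min_le_left _ _
  have hasm : a ≤ 1/100000 := min_le_right _ _
  refine ⟨a/7, by positivity, by linarith, ?_⟩
  intro q _ χ hχ hχq ℓ hℓ hq s hs1 hs2 hs3 hzero
  have hℓ0 : 0 < ℓ := by linarith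
  obtain ⟨β, t⟩ := s
  simp only at hs1 hs2 hs3
  have hβ : β < 1 := by
    by_contra hcon
    exact DirichletCharacter.LFunction_ne_zero_of_one_le_re χ (.inl hχ) (not_lt.mp hcon) hzero
  have hE := Real.exp_pos ℓ
  obtain ⟨Z, h1, h2, h3⟩ := landau_L hχ hℓ hq (t := t) (by linarith)
  have hσ : 1 < 1 + a/ℓ := by have : 0 < a/ℓ := by positivity
                              linarith
  set s : ℂ := ⟨1 + a/ℓ, t⟩ with hs
  have h4 := h3 s (mem_small hℓ ha0 (by linarith))
    (DirichletCharacter.LFunction_ne_zero_of_one_le_re χ (.inl hχ) hσ.le)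
  have hmem : (⟨β, t⟩ : ℂ) ∈ Z := by
    refine h2 _ ?_ hzero
    rw [mem_closedBall, dist_eq_norm]
    have : (⟨β, t⟩ : ℂ) - ⟨1 + 1/ℓ, t⟩ = (β - 1 - 1/ℓ : ℝ) := by
      apply Complex.ext <;> simp; ring
    rw [this, Complex.norm_real, Real.norm_eq_abs]
    have i1 : 1/ℓ ≤ 1/16 := by gcongr
    have i2 : a/7/ℓ ≤ 1/ℓ := by gcongr; linarith
    have i3 : 0 < 1/ℓ := by positivity
    rw [abs_le]; constructor <;> linarith
  have h5 : (1/(s - ⟨β, t⟩)).re ≤ ((Z.map (fun ρ => 1/(s-ρ))).sum).re := by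
    rw [multiset_sum_re]
    refine Multiset.single_le_sum ?_ _ (Multiset.mem_map_of_mem _ hmem)
    intro x hx
    obtain ⟨ρ, hρ, rfl⟩ := Multiset.mem_map.mp hx
    have hρ1 : ρ.re < 1 := by
      by_contra hcon
      exact DirichletCharacter.LFunction_ne_zero_of_one_le_re χ (.inl hχ) (not_lt.mp hcon) (h1 ρ hρ).1
    exact (re_one_div_pos (by rw [Complex.sub_re]; simp only [hs]; linarith)).le
  have h6 : 1/(s - ⟨β, t⟩) = ((1/(1 + a/ℓ - β) : ℝ) : ℂ) := by
    have : s - ⟨β, t⟩ = ((1 + a/ℓ - β : ℝ) : ℂ) := by apply Complex.ext <;> simp [hs]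
    rw [this]; push_cast; rfl
  rw [h6, Complex.ofReal_re] at h5
  have h7 := (Complex.abs_re_le_norm _).trans h4
  rw [abs_le, Complex.sub_re] at h7
  have h8 := three_four_one hχq (t := t) hσ
  rw [LFun_logDeriv_eq χ hσ, Complex.neg_re] at h8
  have h9 := zeta_logDeriv_le (t := 0) hℓ (by simp; positivity) ha0 (by linarith)
  have h10 := zeta_logDeriv_le (t := 2 * t) hℓ (by rw [abs_mul, abs_two]; linarith) ha0 (by linarith)
  have k1 : (1 / (⟨a/ℓ, 0⟩ : ℂ)).re = ℓ / a := by
    rw [(show (⟨a/ℓ, 0⟩ : ℂ) = ((a/ℓ : ℝ) : ℂ) from rfl), one_div, ← Complex.ofReal_inv,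
      Complex.ofReal_re, inv_div]
  have k2 : (1 / (⟨a/ℓ, 2 * t⟩ : ℂ)).re ≤ ℓ / (5 * a) := by
    rw [one_div, Complex.inv_re, Complex.normSq_apply]
    simp only
    have ht2 : (a/ℓ)^2 ≤ t^2 := by
      rw [← sq_abs t]
      have : a/ℓ ≤ |t| := le_trans (by gcongr) hs2
      gcongr
    have hal : 0 < a/ℓ := by positivity
    have : ℓ / (5 * a) = (a/ℓ) / (5 * (a/ℓ)^2) := by field_simp
    rw [this]
    gcongr
    nlinarith
  have k3 : 7 * ℓ / (8 * a) ≤ 1/(1 + a/ℓ - β) := by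
    have : 7 * ℓ / (8 * a) = 1 / (8 * a / (7 * ℓ)) := by field_simp
    rw [this]
    have e : 8 * a / (7 * ℓ) = a/ℓ + a/7/ℓ := by field_simp; ring
    have p : 0 < a/ℓ := by positivity
    apply one_div_le_one_div_of_le
    · linarith
    · rw [e]; linarith
  rw [k1] at h9
  have hfin : 0 ≤ 3 * (ℓ/a + 2000*ℓ) + 4 * (2000 * ℓ - 7*ℓ/(8*a)) + (ℓ/(5*a) + 2000 * ℓ) := by
    linarith
  have e : 3 * (ℓ/a + 2000*ℓ) + 4 * (2000 * ℓ - 7*ℓ/(8*a)) + (ℓ/(5*a) + 2000 * ℓ)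
     = ℓ/a * (16000 * a - 3/10) := by field_simp; ring
  rw [e] at hfin
  have : ℓ/a * (16000 * a - 3/10) < 0 := mul_neg_of_pos_of_neg (by positivity) (by linarith)
  linarith

/-- Bound of the logarithmic derivative in a zero-free region. -/
lemma logDeriv_bound {q : ℕ} [NeZero q] {χ : DirichletCharacter ℂ q} (hχ : χ ≠ 1)
    {b ℓ : ℝ} (hb : 0 < b) (hb1 : b ≤ 1) (hℓ' : 32 ≤ ℓ) (hq : (q:ℝ) ≤ Real.exp ℓ)
    (hzf : ∀ s : ℂ, 1 - b/ℓ ≤ s.re → |s.im| ≤ Real.exp ℓ → χ.LFunction s ≠ 0)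
    {s : ℂ} (hs1 : 1 - b/(2*ℓ) ≤ s.re) (hs2 : s.re ≤ 1 + 1/ℓ) (hs3 : |s.im| ≤ Real.exp ℓ - 1) :
    ‖logDeriv χ.LFunction s‖ ≤ (40000/b) * ℓ := by
  have hℓ : 16 ≤ ℓ := by linarith
  have hℓ0 : 0 < ℓ := by linarith
  have hE := Real.exp_pos ℓ
  obtain ⟨σ, t⟩ := s
  simp only at hs1 hs2 hs3
  obtain ⟨Z, h1, h2, h3⟩ := landau_L hχ hℓ hq (t := t) (by linarith)
  set c : ℂ := ⟨1 + 1/ℓ, t⟩ with hc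
  set s : ℂ := ⟨σ, t⟩ with hs
  have hbl : 0 < b/ℓ := by positivity
  have hb2 : b/(2*ℓ) = b/ℓ/2 := by field_simp
  have hil : 0 < 1/ℓ := by positivity
  have hbi : b/ℓ ≤ 1/ℓ := by gcongr
  have hi16 : 1/ℓ ≤ 1/32 := by gcongr
  have hcs : ‖c - s‖ ≤ 3/2 * (1/ℓ) := by
    have : c - s = ((1 + 1/ℓ - σ : ℝ) : ℂ) := by apply Complex.ext <;> simp [hc, hs]
    rw [this, Complex.norm_real, Real.norm_eq_abs, abs_le]
    constructor <;> linarith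
  have hsne : χ.LFunction s ≠ 0 := hzf s (by simp only [hs]; linarith) (by simp only [hs]; linarith)
  have hcre : 1 < c.re := by simp only [hc]; linarith
  have hcne : χ.LFunction c ≠ 0 :=
    DirichletCharacter.LFunction_ne_zero_of_one_le_re χ (.inl hχ) hcre.le
  have g1 := h3 s (by rw [mem_closedBall, dist_comm, dist_eq_norm]; linarith) hsne
  have g2 := h3 c (mem_closedBall_self (by norm_num)) hcne
  have hρ : ∀ ρ ∈ Z, ρ.re < 1 - b/ℓ := by
    intro ρ hρ
    by_contra hcon
    refine hzf ρ (not_lt.mp hcon) ?_ (h1 ρ hρ).1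
    have := (h1 ρ hρ).2
    rw [mem_closedBall, dist_eq_norm] at this
    have := (Complex.abs_im_le_norm _).trans this
    rw [Complex.sub_im] at this
    simp only [hc] at this
    have e := abs_add_le (ρ.im - t) t
    rw [sub_add_cancel] at e
    linarith
  have hterm : ∀ ρ ∈ Z, ‖1/(s-ρ) - 1/(c-ρ)‖ ≤ (8/b) * (1/(c-ρ)).re := by
    intro ρ hρZ
    have hr := hρ ρ hρZ
    have hsr : b/ℓ/2 ≤ (s-ρ).re := by rw [Complex.sub_re]; simp only [hs]; linarith
    have hcr : 1/ℓ ≤ (c-ρ).re := by rw [Complex.sub_re]; simp only [hc]; linarith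
    have hsn : b/ℓ/2 ≤ ‖s-ρ‖ := hsr.trans (Complex.re_le_norm _)
    have hcn : 1/ℓ ≤ ‖c-ρ‖ := hcr.trans (Complex.re_le_norm _)
    have hs0 : s - ρ ≠ 0 := by rw [← norm_pos_iff]; linarith
    have hc0 : c - ρ ≠ 0 := by rw [← norm_pos_iff]; linarith
    have hcs' : ‖c-ρ‖ ≤ ‖s-ρ‖ * (4/b) := by
      have e1 := norm_add_le (c - s) (s - ρ)
      rw [sub_add_sub_cancel] at e1
      have e2 : 3/2 * (1/ℓ) = (b/ℓ/2) * (3/b) := by field_simp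
      have e3 : (b/ℓ/2) * (3/b) ≤ ‖s-ρ‖ * (3/b) := by gcongr
      have e4 : ‖s-ρ‖ * 1 ≤ ‖s-ρ‖ * (1/b) := by gcongr; rw [le_div_iff₀ hb]; linarith
      have e5 : ‖s-ρ‖ * (4/b) = ‖s-ρ‖ * (3/b) + ‖s-ρ‖ * (1/b) := by ring
      linarith
    have e : 1/(s-ρ) - 1/(c-ρ) = (c - s) / ((s-ρ)*(c-ρ)) := by
      field_simp; ring
    rw [e, norm_div, norm_mul, one_div, Complex.inv_re, Complex.normSq_eq_norm_sq]
    have hsp : 0 < ‖s-ρ‖ := by linarith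
    have hcp : 0 < ‖c-ρ‖ := by linarith
    have hinv : 1/‖s-ρ‖ ≤ (4/b) / ‖c-ρ‖ := by
      rw [div_le_div_iff₀ hsp hcp]; linarith
    calc ‖c - s‖ / (‖s-ρ‖*‖c-ρ‖) = ‖c - s‖ * (1/‖s-ρ‖) / ‖c-ρ‖ := by field_simp
      _ ≤ (2 * (1/ℓ)) * ((4/b) / ‖c-ρ‖) / ‖c-ρ‖ := by gcongr; linarith
      _ = (8/b) * ((1/ℓ) / ‖c-ρ‖^2) := by field_simp; ring
      _ ≤ _ := by gcongr
  have hsum : ‖(Z.map (fun ρ => 1/(s-ρ))).sum - (Z.map (fun ρ => 1/(c-ρ))).sum‖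
      ≤ (8/b) * ((Z.map (fun ρ => 1/(c-ρ))).sum).re := by
    rw [← Multiset.sum_map_sub, multiset_sum_re, ← Multiset.sum_map_mul_left]
    exact multiset_norm_sum_le Z _ _ hterm
  have hLc : ‖logDeriv χ.LFunction c‖ ≤ 2001 * ℓ := by
    rw [← norm_neg, ← LFun_logDeriv_eq χ hcre]
    have z0 := zeta_logDeriv_le (t := 0) (a := 1) hℓ (by simp; positivity) one_pos le_rfl
    have k1 : (1 / (⟨1/ℓ, 0⟩ : ℂ)).re = ℓ := by
      rw [(show (⟨1/ℓ, 0⟩ : ℂ) = ((1/ℓ : ℝ) : ℂ) from rfl), ← Complex.ofReal_one,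
        ← Complex.ofReal_div, Complex.ofReal_re, one_div_one_div]
    rw [k1] at z0
    have s1 := ArithmeticFunction.LSeriesSummable_vonMangoldt (s := ⟨1 + 1/ℓ, 0⟩) hcre
    have e1 := (Complex.hasSum_re s1.hasSum)
    refine le_trans (tsum_of_norm_bounded e1 ?_) (by unfold LSeries at z0; linarith)
    intro n
    rcases eq_or_ne n 0 with rfl | hn
    · simp
    rw [LSeries.norm_term_eq, if_neg hn, LSeries.term_of_ne_zero hn]
    have hnp : (0:ℝ) < n := by positivity
    have : (Λ n : ℂ) / (n:ℂ) ^ (⟨1 + 1/ℓ, 0⟩ : ℂ) = ((Λ n / (n:ℝ)^(1 + 1/ℓ) : ℝ) : ℂ) := by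
      rw [(show (⟨1 + 1/ℓ, 0⟩ : ℂ) = ((1 + 1/ℓ : ℝ) : ℂ) from rfl)]
      rw [Complex.ofReal_div, Complex.ofReal_cpow hnp.le]; simp
    rw [this, Complex.ofReal_re]
    have hcr : c.re = 1 + 1/ℓ := rfl
    rw [hcr]
    gcongr
    rw [Pi.mul_apply, norm_mul, Complex.norm_real, Real.norm_of_nonneg ArithmeticFunction.vonMangoldt_nonneg]
    exact mul_le_of_le_one_left ArithmeticFunction.vonMangoldt_nonneg (χ.norm_le_one _)
  have hSc : ((Z.map (fun ρ => 1/(c-ρ))).sum).re ≤ 4001 * ℓ := by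
    have h7 := (Complex.abs_re_le_norm _).trans g2
    rw [abs_le, Complex.sub_re] at h7
    have h8 := (Complex.abs_re_le_norm _).trans hLc
    rw [abs_le] at h8
    linarith
  set S1 := (Z.map (fun ρ => 1/(s-ρ))).sum
  set S2 := (Z.map (fun ρ => 1/(c-ρ))).sum
  have hfin : ‖logDeriv χ.LFunction s‖ ≤ ‖logDeriv χ.LFunction s - S1‖ + ‖S1 - S2‖
      + ‖logDeriv χ.LFunction c - S2‖ + ‖logDeriv χ.LFunction c‖ := by
    have : logDeriv χ.LFunction s = (logDeriv χ.LFunction s - S1) + (S1 - S2)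
      + (-(logDeriv χ.LFunction c - S2)) + logDeriv χ.LFunction c := by ring
    conv_lhs => rw [this]
    refine (norm_add_le _ _).trans ?_
    gcongr
    refine (norm_add_le _ _).trans ?_
    rw [norm_neg]
    gcongr
    exact norm_add_le _ _
  have h9 : (8/b) * S2.re ≤ (8/b) * (4001 * ℓ) := by gcongr
  have h10 : 6001 * ℓ ≤ 6001 * ℓ * (1/b) := by
    apply le_mul_of_one_le_right (by positivity); rw [le_div_iff₀ hb]; linarith
  have h11 : (40000/b) * ℓ = (8/b) * (4001 * ℓ) + 6001 * ℓ * (1/b) + 1991*ℓ*(1/b) := by ring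
  have h12 : 0 ≤ 1991*ℓ*(1/b) := by positivity
  linarith

end

section

open NumberTheorySymbols

instance neZero_four_natAbs (D : ℤ) [NeZero D] : NeZero (4 * D.natAbs) :=
  ⟨by have := NeZero.ne D; simpa using this⟩

/-- the Kronecker-type symbol (D/n) for odd n, 0 for even n -/
def jac (D : ℤ) (n : ℕ) : ℤ := if Odd n then jacobiSym D n else 0

lemma jac_mod (D : ℤ) (n : ℕ) : jac D (n % (4 * D.natAbs)) = jac D n := by
  unfold jac
  have : Odd (n % (4 * D.natAbs)) ↔ Odd n := by
    rw [Nat.odd_iff, Nat.odd_iff, Nat.mod_mod_of_dvd n ⟨2 * D.natAbs, by ring⟩]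
  simp only [this]
  split_ifs with h
  · exact (jacobiSym.mod_right D h).symm
  · rfl

lemma jac_mul (D : ℤ) (m n : ℕ) : jac D (m * n) = jac D m * jac D n := by
  unfold jac
  by_cases hm : Odd m <;> by_cases hn : Odd n <;> simp [hm, hn, Nat.odd_mul]
  have : m ≠ 0 := by rintro rfl; simp at hm
  have : n ≠ 0 := by rintro rfl; simp at hn
  exact jacobiSym.mul_right' D ‹_› ‹_›

lemma jac_mul_left (D E : ℤ) (n : ℕ) : jac (D * E) n = jac D n * jac E n := by
  unfold jac
  split_ifs
  · exact jacobiSym.mul_left ..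
  · simp

lemma jac_tri (D : ℤ) (n : ℕ) : jac D n = 0 ∨ jac D n = 1 ∨ jac D n = -1 := by
  unfold jac
  split_ifs
  · exact jacobiSym.trichotomy D n
  · simp

lemma jac_zero (D : ℤ) : jac D 0 = 0 := by simp [jac]
lemma jac_one (D : ℤ) : jac D 1 = 1 := by simp [jac]

noncomputable def chiD (D : ℤ) [NeZero D] : DirichletCharacter ℂ (4 * D.natAbs) where
  toFun a := (jac D a.val : ℂ)
  map_one' := by
    have : Fact (1 < 4 * D.natAbs) := ⟨by have := NeZero.ne D; omega⟩
    rw [ZMod.val_one, jac_one]; simp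
  map_mul' a b := by
    rw [ZMod.val_mul, jac_mod, jac_mul]; push_cast; rfl
  map_nonunit' a ha := by
    rw [← ZMod.natCast_zmod_val a, ZMod.isUnit_iff_coprime] at ha
    unfold jac
    simp only [Int.cast_eq_zero]
    split_ifs with h
    · rw [jacobiSym.eq_zero_iff]
      refine ⟨by intro h0; rw [h0] at h; simp at h, ?_⟩
      intro hg
      apply ha
      rw [Nat.coprime_mul_iff_right]
      refine ⟨?_, ?_⟩
      · have : Nat.Coprime a.val (2 ^ 2) := Nat.Coprime.pow_right 2 (Nat.coprime_two_right.mpr h)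
        exact this
      · rw [Nat.coprime_comm, Nat.Coprime]; exact hg
    · rfl

lemma chiD_apply (D : ℤ) [NeZero D] (n : ℕ) : chiD D (n : ZMod (4 * D.natAbs)) = (jac D n : ℂ) := by
  change ((jac D (n : ZMod (4 * D.natAbs)).val : ℤ) : ℂ) = _
  rw [ZMod.val_natCast, jac_mod]

lemma chiD_quad (D : ℤ) [NeZero D] : (chiD D).IsQuadratic := by
  intro a
  change ((jac D a.val : ℤ) : ℂ) = 0 ∨ ((jac D a.val : ℤ) : ℂ) = 1 ∨ ((jac D a.val : ℤ) : ℂ) = -1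
  rcases jac_tri D a.val with h | h | h <;> simp [h]

lemma jac_sq (m : ℤ) (M : ℕ) (hM : Odd M) (h : m.gcd M = 1) : jac (m ^ 2) M = 1 := by
  unfold jac; rw [if_pos hM]; exact jacobiSym.sq_one' h

lemma exists_jac_neg_one {D : ℤ} (hD : D ≠ 0) (hns : ¬ IsSquare D) : ∃ M : ℕ, jac D M = -1 := by
  obtain ⟨a, m, hma, ha⟩ := Nat.sq_mul_squarefree D.natAbs
  have hDn : D.natAbs ≠ 0 := by simpa using hD
  have hm0 : m ≠ 0 := by rintro rfl; simp at hma; omega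
  have ha0 : a ≠ 0 := ha.ne_zero
  obtain ⟨u, hu, hDu⟩ : ∃ u : ℤ, (u = 1 ∨ u = -1) ∧ D = u * a * (m:ℤ)^2 := by
    rcases Int.natAbs_eq D with h | h
    · refine ⟨1, by simp, ?_⟩
      rw [h, ← hma]; push_cast; ring
    · refine ⟨-1, by simp, ?_⟩
      rw [h, ← hma]; push_cast; ring
  by_cases hp : ∃ p : ℕ, p.Prime ∧ p ≠ 2 ∧ p ∣ a
  · obtain ⟨p, hp, hp2, e, rfl⟩ := hp
    have hFp : Fact p.Prime := ⟨hp⟩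
    have hodd : Odd p := hp.odd_of_ne_two hp2
    have hpe : ¬ p ∣ e := by
      rintro ⟨f, rfl⟩
      have := ha p ⟨f, by ring⟩
      exact hp.not_isUnit this
    obtain ⟨i, m', hm', hmm⟩ := Nat.exists_eq_pow_mul_and_not_dvd hm0 p hp.ne_one
    obtain ⟨r, hr⟩ := FiniteField.exists_nonsquare (F := ZMod p) (by rw [ZMod.ringChar_zmod_n]; exact hp2)
    have hcop : Nat.Coprime (4 * (e * m')) p := by
      rw [Nat.coprime_comm, Nat.Prime.coprime_iff_not_dvd hp, hp.dvd_mul, hp.dvd_mul]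
      rintro (h | h | h)
      · have : p ∣ 2 ^ 2 := h
        have := hp.dvd_of_dvd_pow this
        exact hp2 ((Nat.prime_dvd_prime_iff_eq hp Nat.prime_two).mp this)
      · exact hpe h
      · exact hm' h
    obtain ⟨M, hM1, hM2⟩ := Nat.chineseRemainder hcop 1 r.val
    refine ⟨M, ?_⟩
    have hM4 : M % 4 = 1 := by
      have : M ≡ 1 [MOD 4] := hM1.of_dvd (Dvd.intro _ rfl)
      exact this
    have hMo : Odd M := by rw [Nat.odd_iff]; omega
    have hgm' : Nat.Coprime (e * m') M := by
      have : M ≡ 1 [MOD (e * m')] := hM1.of_dvd (Dvd.intro_left _ rfl)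
      rw [Nat.Coprime, Nat.gcd_comm, this.gcd_eq]; simp
    have hr0 : ((M : ℕ) : ZMod p) = r := by
      have := (ZMod.natCast_eq_natCast_iff M r.val p).mpr hM2
      rw [this, ZMod.natCast_zmod_val]
    have hgp : Nat.Coprime p M := by
      rw [Nat.Prime.coprime_iff_not_dvd hp, ← ZMod.natCast_eq_zero_iff, hr0]
      rintro rfl; exact hr (IsSquare.zero)
    have hgm : Nat.Coprime m M := by
      rw [hmm]
      exact (hgp.pow_left i).mul_left (hgm'.coprime_dvd_left (Dvd.intro_left _ rfl))
    have hJp : jacobiSym p M = -1 := by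
      rw [jacobiSym.quadratic_reciprocity_one_mod_four' hodd hM4, ← jacobiSym.legendreSym.to_jacobiSym,
        legendreSym.eq_neg_one_iff]
      simpa [hr0] using hr
    have hJe : jacobiSym e M = 1 := by
      rw [jacobiSym.mod_right' e hMo]
      have : M % (4 * e) = 1 % (4 * e) := hM1.of_dvd (⟨m', by ring⟩)
      rw [this, ← jacobiSym.mod_right' e odd_one]; simp
    have hJu : jacobiSym u M = 1 := by
      rcases hu with rfl | rfl
      · simp
      · rw [jacobiSym.at_neg_one hMo]; exact ZMod.χ₄_nat_one_mod_four hM4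
    have hJm : jacobiSym ((m:ℤ)^2) M = 1 := jacobiSym.sq_one' (by simpa using hgm)
    unfold jac
    rw [if_pos hMo, hDu, jacobiSym.mul_left, jacobiSym.mul_left, Nat.cast_mul, jacobiSym.mul_left, hJp, hJe, hJu, hJm]
    norm_num
  · have ha2 : a = 1 ∨ a = 2 := by
      have : a ∣ 2 := by
        have h := (Nat.prod_primeFactors_of_squarefree ha)
        rw [← h]
        have hsub : a.primeFactors ⊆ {2} := by
          intro p hpa
          rw [Finset.mem_singleton]
          by_contra hne
          exact hp ⟨p, Nat.prime_of_mem_primeFactors hpa, hne, Nat.dvd_of_mem_primeFactors hpa⟩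
        have := Finset.prod_dvd_prod_of_subset _ _ (fun p => p) hsub
        simpa using this
      exact (Nat.dvd_prime Nat.prime_two).mp this
    obtain ⟨i, m', hm', hmm⟩ := Nat.exists_eq_pow_mul_and_not_dvd hm0 2 (by norm_num)
    have hm'o : Odd m' := by rw [Nat.odd_iff]; omega
    have hcop : Nat.Coprime m' 8 := by
      have : Nat.Coprime m' (2 ^ 3) := Nat.Coprime.pow_right 3 (Nat.coprime_two_right.mpr hm'o)
      exact this
    have main : ∀ r, r = 3 ∨ r = 5 → ∃ M : ℕ, M % 8 = r ∧ Nat.Coprime m M := by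
      intro r hr
      obtain ⟨M, hM1, hM2⟩ := Nat.chineseRemainder hcop 1 r
      have hM8 : M % 8 = r % 8 := hM2
      refine ⟨M, by omega, ?_⟩
      rw [hmm]
      refine Nat.Coprime.mul_left (Nat.Coprime.pow_left _ ?_) ?_
      · rw [Nat.coprime_two_left, Nat.odd_iff]; omega
      · rw [Nat.Coprime, Nat.gcd_comm, hM1.gcd_eq]; simp
    rcases ha2 with rfl | rfl
    · have hu1 : u = -1 := by
        rcases hu with rfl | h
        · exact absurd ⟨(m:ℤ), by rw [hDu]; push_cast; ring⟩ hns
        · exact h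
      obtain ⟨M, hM8, hg⟩ := main 3 (by simp)
      have hMo : Odd M := by rw [Nat.odd_iff]; omega
      have hJm : jacobiSym ((m:ℤ)^2) M = 1 := jacobiSym.sq_one' (by simpa using hg)
      refine ⟨M, ?_⟩
      unfold jac
      rw [if_pos hMo, hDu, jacobiSym.mul_left, hJm, hu1, Nat.cast_one, mul_one, mul_one,
        jacobiSym.at_neg_one hMo]
      exact ZMod.χ₄_nat_three_mod_four (by omega)
    · obtain ⟨M, hM8, hg⟩ := main 5 (by simp)
      have hMo : Odd M := by rw [Nat.odd_iff]; omega
      have hJm : jacobiSym ((m:ℤ)^2) M = 1 := jacobiSym.sq_one' (by simpa using hg)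
      have hJu : jacobiSym u M = 1 := by
        rcases hu with rfl | rfl
        · simp
        · rw [jacobiSym.at_neg_one hMo]; exact ZMod.χ₄_nat_one_mod_four (by omega)
      refine ⟨M, ?_⟩
      unfold jac
      rw [if_pos hMo, hDu, jacobiSym.mul_left, jacobiSym.mul_left, hJm, hJu, Nat.cast_ofNat, 
        jacobiSym.at_two hMo, ZMod.χ₈_nat_eq_if_mod_eight]
      have h2 : M % 2 = 1 := by omega
      simp [h2, hM8]

lemma chiD_ne_one {D : ℤ} [NeZero D] (hns : ¬ IsSquare D) : chiD D ≠ 1 := by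
  obtain ⟨M, hM⟩ := exists_jac_neg_one (NeZero.ne D) hns
  intro h
  have h1 := chiD_apply D M
  rw [h, hM] at h1
  by_cases hu : IsUnit (M : ZMod (4 * D.natAbs))
  · rw [MulChar.one_apply hu] at h1; norm_num at h1
  · rw [MulChar.map_nonunit _ hu] at h1; norm_num at h1

/-- Good discriminant parameters. -/
def SqF (D : ℤ) : Prop := Squarefree D ∧ D ≠ 1

lemma SqF.not_isSquare {D : ℤ} (h : SqF D) : ¬ IsSquare D := by
  rintro ⟨c, hc⟩
  have h1 := h.1 c ⟨1, by rw [hc]; ring⟩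
  rcases Int.isUnit_iff.mp h1 with rfl | rfl <;> exact h.2 (by simp [hc])

lemma SqF.mul_not_isSquare {D E : ℤ} (h : SqF D) (h' : SqF E) (hne : D ≠ E) : ¬ IsSquare (D * E) := by
  rintro ⟨c, hc⟩
  have key : ∀ {D E : ℤ}, Squarefree D → Squarefree E → D * E = c * c → ∀ p : ℕ, p.Prime → p ∣ D.natAbs → p ∣ E.natAbs := by
    intro D E hD hE hc p hp hpD
    have hpi : Prime (p : ℤ) := Nat.prime_iff_prime_int.mp hp
    have hpD' : (p:ℤ) ∣ D := Int.natCast_dvd.mpr hpD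
    have hpc : (p:ℤ) ∣ c := by
      have : (p:ℤ) ∣ c * c := hc ▸ hpD'.mul_right E
      rcases hpi.dvd_or_dvd this with h | h <;> exact h
    obtain ⟨d, rfl⟩ := hpD'
    obtain ⟨f, rfl⟩ := hpc
    have hdE : (p:ℤ) ∣ d * E := by
      refine ⟨f * f, ?_⟩
      have hp0 : (p:ℤ) ≠ 0 := hpi.ne_zero
      apply mul_left_cancel₀ hp0
      linarith
    rcases hpi.dvd_or_dvd hdE with h | h
    · exfalso
      obtain ⟨g, rfl⟩ := h
      exact hpi.not_isUnit (hD p ⟨g, by ring⟩)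
    · exact Int.natCast_dvd.mp h
  have hab : D.natAbs = E.natAbs := by
    rw [Nat.Squarefree.ext_iff (Int.squarefree_natAbs.mpr h.1) (Int.squarefree_natAbs.mpr h'.1)]
    intro p hp
    exact ⟨key h.1 h'.1 hc p hp, key h'.1 h.1 (by rw [mul_comm]; exact hc) p hp⟩
  have hE0 : E ≠ 0 := h'.1.ne_zero
  rcases Int.natAbs_eq_natAbs_iff.mp hab with h1 | h1
  · exact hne h1
  · rw [h1] at hc
    nlinarith [mul_self_nonneg c, mul_self_pos.mpr hE0]

end

section

open Complex Set Metric Filter Topology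
open scoped ComplexOrder

lemma alternating_of_logDeriv {f h : ℂ → ℂ} {x : ℂ} (hf : AnalyticAt ℂ f x) (hh : AnalyticAt ℂ h x)
    (hd : deriv f =ᶠ[𝓝 x] fun s => - (h s * f s)) (h0 : 0 ≤ f x)
    (halt : ∀ m, 0 ≤ (-1) ^ m * iteratedDeriv m h x) (m : ℕ) :
    0 ≤ (-1) ^ m * iteratedDeriv m f x := by
  induction m using Nat.strong_induction_on with
  | _ m ih =>
    rcases m with _ | m
    · simpa using h0
    · have e : iteratedDeriv (m+1) f x = -∑ i ∈ Finset.range (m+1),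
          (m.choose i) * iteratedDeriv i h x * iteratedDeriv (m - i) f x := by
        rw [iteratedDeriv_succ', hd.iteratedDeriv_eq, iteratedDeriv_fun_neg,
          ← iteratedDeriv_mul hh.contDiffAt hf.contDiffAt]
        rfl
      rw [e, mul_neg, ← neg_mul, pow_succ, mul_neg_one, neg_neg, Finset.mul_sum]
      refine Finset.sum_nonneg fun i hi => ?_
      have him : i ≤ m := by simpa [Nat.lt_succ_iff] using hi
      have e2 : (-1:ℂ)^m = (-1)^i * (-1)^(m-i) := by rw [← pow_add]; congr 1; omega
      have e3 : (-1:ℂ)^m * ((m.choose i) * iteratedDeriv i h x * iteratedDeriv (m - i) f x)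
        = (m.choose i) * ((-1)^i * iteratedDeriv i h x) * ((-1)^(m-i) * iteratedDeriv (m - i) f x) := by
        rw [e2]; ring
      rw [e3]
      refine mul_nonneg (mul_nonneg ?_ (halt i)) (ih (m-i) (by omega))
      exact_mod_cast Nat.zero_le _

lemma estermann_abs {F f : ℂ → ℂ} {M lam b0 : ℝ} (hF : DifferentiableOn ℂ F (ball 2 2))
    (hM : ∀ s ∈ sphere (2:ℂ) (3/2), ‖dslope F 1 s‖ ≤ M) (hlam : F 1 = lam)
    (hfF : ∀ s : ℂ, 0 < s.re → s ≠ 1 → f s = F s / (s - 1))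
    (halt : ∀ m, 0 ≤ (-1) ^ m * iteratedDeriv m f 2) (hb0 : b0 ≤ (f 2).re)
    {β : ℝ} (hβ : 7/8 ≤ β) (hβ1 : β < 1) (N : ℕ) (hN : 1 ≤ N) :
    b0 - lam * (2 - β)^N / (1 - β) - 4 * M * (3/4)^N ≤ (f β).re := by
  set g := dslope F 1 with hg
  have hgd : DifferentiableOn ℂ g (ball 2 2) := by
    rw [hg, Complex.differentiableOn_dslope]
    · exact hF
    · exact isOpen_ball.mem_nhds (by rw [mem_ball, dist_eq_norm]; norm_num)
  have hgs : ∀ s : ℂ, s ≠ 1 → 0 < s.re → g s = f s - lam * (1 * s - 1)⁻¹ := by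
    intro s hs hs0
    rw [hg, dslope_of_ne _ hs, slope_def_module, hlam, hfF s hs0 hs]
    simp only [smul_eq_mul]
    field_simp
  have hM0 : 0 ≤ M := (norm_nonneg _).trans (hM (2 + 3/2) (by rw [mem_sphere, dist_eq_norm]; norm_num))
  -- coefficients
  have hfan : AnalyticAt ℂ f 2 := by
    have h1 : AnalyticAt ℂ F 2 := hF.analyticAt (isOpen_ball.mem_nhds (mem_ball_self (by norm_num)))
    have h2 : AnalyticAt ℂ (fun s => F s / (s - 1)) 2 := h1.div (by fun_prop) (by norm_num)
    refine h2.congr ?_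
    have m1 : {s : ℂ | 1 < s.re} ∈ 𝓝 (2:ℂ) :=
      (isOpen_lt continuous_const continuous_re).mem_nhds (by simp)
    filter_upwards [m1] with s hs
    have hs' : 1 < s.re := hs
    rw [hfF s (by linarith) (by rintro rfl; simp at hs')]
  set c : ℕ → ℂ := fun m => (m.factorial : ℂ)⁻¹ * ((-1)^m * iteratedDeriv m g 2) with hc
  have hcb : ∀ m, c m = (m.factorial : ℂ)⁻¹ * ((-1)^m * iteratedDeriv m f 2) - lam := by
    intro m
    have he : g =ᶠ[𝓝 2] fun s => f s - lam * (1 * s - 1)⁻¹ := by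
      have m1 : {s : ℂ | 1 < s.re} ∈ 𝓝 (2:ℂ) :=
        (isOpen_lt continuous_const continuous_re).mem_nhds (by simp)
      filter_upwards [m1] with s hs
      have hs' : 1 < s.re := hs
      exact hgs s (by rintro rfl; simp at hs') (by linarith)
    have hinv : AnalyticAt ℂ (fun s : ℂ => (1 * s - 1)⁻¹) 2 :=
      AnalyticAt.inv (by fun_prop) (by norm_num)
    have hinv' : AnalyticAt ℂ (fun s : ℂ => lam * (1 * s - 1)⁻¹) 2 := analyticAt_const.mul hinv
    have e1 : iteratedDeriv m g 2 = iteratedDeriv m f 2 - lam * ((-1)^m * m.factorial) := by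
      rw [he.iteratedDeriv_eq, iteratedDeriv_fun_sub hfan.contDiffAt hinv'.contDiffAt,
        iteratedDeriv_const_mul_field, iteratedDeriv_eq_iterate (f := fun s : ℂ => (1 * s - 1)⁻¹),
        iter_deriv_inv_linear_sub]
      norm_num
    simp only [hc]
    rw [e1]
    have hmf : (m.factorial : ℂ) ≠ 0 := by exact_mod_cast m.factorial_ne_zero
    have hp : ((-1:ℂ)^m) * (-1)^m = 1 := by rw [← mul_pow]; simp
    have : (m.factorial : ℂ)⁻¹ * ((-1)^m * (iteratedDeriv m f 2 - lam * ((-1)^m * m.factorial)))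
      = (m.factorial : ℂ)⁻¹ * ((-1)^m * iteratedDeriv m f 2) - lam * ((-1)^m * (-1)^m) * ((m.factorial : ℂ)⁻¹ * m.factorial) := by ring
    rw [this, hp, inv_mul_cancel₀ hmf]; ring
  have hcre : ∀ m, -lam ≤ (c m).re := by
    intro m
    rw [hcb, Complex.sub_re, Complex.ofReal_re]
    have : 0 ≤ (m.factorial : ℂ)⁻¹ * ((-1)^m * iteratedDeriv m f 2) :=
      mul_nonneg (by rw [← Complex.ofReal_natCast, ← Complex.ofReal_inv]; exact_mod_cast (by positivity)) (halt m)
    have := (Complex.nonneg_iff.mp this).1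
    linarith
  have hc0 : b0 - lam ≤ (c 0).re := by
    rw [hcb, Complex.sub_re, Complex.ofReal_re]; simpa using hb0
  have hcn : ∀ m, ‖c m‖ ≤ M * (2/3)^m := by
    intro m
    have hdc : DiffContOnCl ℂ g (ball 2 (3/2)) := by
      refine DifferentiableOn.diffContOnCl ?_
      rw [closure_ball _ (by norm_num)]
      exact hgd.mono (closedBall_subset_ball (by norm_num))
    have := Complex.norm_iteratedDeriv_le_of_forall_mem_sphere_norm_le m (by norm_num) hdc hM
    simp only [hc, norm_mul, norm_inv, norm_pow, norm_neg, norm_one, one_pow, one_mul,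
      Complex.norm_natCast]
    have hmf : (0:ℝ) < m.factorial := by exact_mod_cast m.factorial_pos
    rw [inv_mul_le_iff₀ hmf]
    refine this.trans (le_of_eq ?_)
    rw [div_pow, div_pow]
    have : (2:ℝ)^m ≠ 0 := by positivity
    field_simp
  set y : ℝ := 2 - β with hy
  have hy1 : 1 < y := by linarith
  have hy2 : y ≤ 9/8 := by linarith
  have hsum : HasSum (fun m => (c m).re * y ^ m) (g β).re := by
    have h1 := Complex.hasSum_taylorSeries_on_ball hgd (z := (β:ℂ))
      (by
        rw [mem_ball, dist_eq_norm, (by push_cast; ring : (β:ℂ) - 2 = ((β - 2 : ℝ) : ℂ)), Complex.norm_real, Real.norm_eq_abs, abs_lt]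
        constructor <;> linarith)
    have h2 := Complex.hasSum_re h1
    refine h2.congr_fun ?_ |> fun h => h
    intro m
    have : (m.factorial : ℂ)⁻¹ • ((β:ℂ) - 2)^m • iteratedDeriv m g 2 = (c m) * ((y^m : ℝ) : ℂ) := by
      simp only [hc, smul_eq_mul, hy]
      have : ((β:ℂ) - 2)^m = (-1)^m * ((2 - β : ℝ):ℂ)^m := by rw [← mul_pow]; push_cast; congr 1; ring
      rw [this]; push_cast; ring
    rw [this, Complex.re_mul_ofReal]
  have hsplit := hsum.summable.sum_add_tsum_nat_add N
  rw [hsum.tsum_eq] at hsplit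
  have hhead : b0 - lam * ∑ m ∈ Finset.range N, y^m ≤ ∑ m ∈ Finset.range N, (c m).re * y^m := by
    obtain ⟨K, rfl⟩ : ∃ K, N = K + 1 := ⟨N - 1, by omega⟩
    rw [Finset.sum_range_succ', Finset.sum_range_succ', mul_add, Finset.mul_sum]
    have : ∑ m ∈ Finset.range K, -(lam * y^(m+1)) ≤ ∑ m ∈ Finset.range K, (c (m+1)).re * y^(m+1) := by
      refine Finset.sum_le_sum fun m _ => ?_
      rw [← neg_mul]
      have := hcre (m+1)
      gcongr
    rw [Finset.sum_neg_distrib] at this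
    simp only [pow_zero, mul_one]
    linarith
  have htail : -(4 * M * (3/4)^N) ≤ ∑' m, (c (m + N)).re * y^(m+N) := by
    have hgeo : HasSum (fun m : ℕ => -(M * (3/4:ℝ)^N * (3/4)^m)) (-(4 * M * (3/4)^N)) := by
      have := ((hasSum_geometric_of_lt_one (r := (3/4:ℝ)) (by norm_num) (by norm_num)).mul_left (M * (3/4:ℝ)^N)).neg
      have e : -(4 * M * (3/4:ℝ)^N) = -(M * (3/4:ℝ)^N * (1 - 3/4)⁻¹) := by norm_num; ring_nf
      rw [e]; exact this
    refine hasSum_le ?_ hgeo (((summable_nat_add_iff N).mpr hsum.summable).hasSum)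
    intro m
    have h1 := (Complex.abs_re_le_norm _).trans (hcn (m+N))
    rw [abs_le] at h1
    have hyp : (0:ℝ) < y^(m+N) := by positivity
    have h2 : -(M * (2/3)^(m+N)) * y^(m+N) ≤ (c (m+N)).re * y^(m+N) := by gcongr; exact h1.1
    refine le_trans ?_ h2
    rw [neg_mul, neg_le_neg_iff, mul_assoc, ← mul_pow, mul_assoc, ← pow_add, add_comm N m]
    gcongr
    linarith
  have hgf := hgs β (by intro h; have : β = 1 := by exact_mod_cast h
                        linarith) (by simp; linarith)
  have hfre : (f β).re = (g β).re - lam / (1 - β) := by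
    rw [hgf, Complex.sub_re]
    have : (lam:ℂ) * (1 * (β:ℂ) - 1)⁻¹ = ((- (lam / (1 - β)) : ℝ) : ℂ) := by
      have h1 : (1:ℂ) - β ≠ 0 := by
        rw [sub_ne_zero]; intro h; have : (1:ℝ) = β := by exact_mod_cast h
        linarith
      have h2 : (1:ℂ) * β - 1 ≠ 0 := by
        intro h; apply h1; linear_combination -h
      push_cast
      rw [show (1:ℂ) * β - 1 = -(1 - β) by ring, inv_neg]; ring
    rw [this, Complex.ofReal_re]; ring
  have hgs : ∑ m ∈ Finset.range N, y^m = (y^N - 1)/(1 - β) := by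
    rw [geom_sum_eq hy1.ne', hy]; congr 1; ring
  rw [hgs] at hhead
  have : lam * ((y^N - 1)/(1 - β)) = lam * y^N/(1-β) - lam/(1-β) := by ring
  rw [this] at hhead
  linarith

lemma estermann_abs' {F f : ℂ → ℂ} {M lam b0 : ℝ} (hF : DifferentiableOn ℂ F (ball 2 2))
    (hM : ∀ s ∈ sphere (2:ℂ) (3/2), ‖dslope F 1 s‖ ≤ M) (hM1 : 1 ≤ M) (hlam : F 1 = lam) (hl0 : 0 ≤ lam)
    (hfF : ∀ s : ℂ, 0 < s.re → s ≠ 1 → f s = F s / (s - 1))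
    (halt : ∀ m, 0 ≤ (-1) ^ m * iteratedDeriv m f 2) (hb0 : b0 ≤ (f 2).re) (hb : b0 = 1/81)
    {β : ℝ} (hβ : 7/8 ≤ β) (hβ1 : β < 1) :
    1/162 - 3 * lam * (648 * M) ^ (4 * (1 - β)) / (1 - β) ≤ (f β).re := by
  set N := ⌈4 * Real.log (648 * M)⌉₊ with hN
  have hlog : 0 < Real.log (648 * M) := Real.log_pos (by linarith)
  have hN1 : 1 ≤ N := Nat.one_le_ceil_iff.mpr (by positivity)
  have hNle : (N:ℝ) ≤ 4 * Real.log (648 * M) + 1 := (Nat.ceil_lt_add_one (by positivity)).le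
  have hNge : 4 * Real.log (648 * M) ≤ N := Nat.le_ceil _
  have h := estermann_abs hF hM hlam hfF halt hb0 hβ hβ1 N hN1
  have h1b : 0 < 1 - β := by linarith
  have hpow : (2 - β)^N ≤ 3 * (648 * M) ^ (4 * (1 - β)) := by
    calc (2 - β)^N = ((1 - β) + 1)^N := by ring
      _ ≤ (Real.exp (1 - β))^N := by gcongr; exact Real.add_one_le_exp _
      _ = Real.exp (N * (1 - β)) := by rw [← Real.exp_nat_mul]
      _ ≤ Real.exp ((4 * Real.log (648 * M) + 1) * (1 - β)) := by gcongr
      _ = Real.exp (1 - β) * Real.exp (Real.log (648 * M) * (4 * (1 - β))) := by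
          rw [← Real.exp_add]; congr 1; ring
      _ = Real.exp (1 - β) * (648 * M) ^ (4 * (1 - β)) := by
          rw [Real.rpow_def_of_pos (by linarith)]
      _ ≤ 3 * (648 * M) ^ (4 * (1 - β)) := by
          gcongr
          have : Real.exp (1 - β) ≤ Real.exp 1 := by gcongr; linarith
          linarith [Real.exp_one_lt_d9]
  have htail : 4 * M * (3/4)^N ≤ 1/162 := by
    have e1 : (3/4:ℝ) ≤ Real.exp (-(1/4)) := by
      have := Real.add_one_le_exp (-(1/4):ℝ); linarith
    have e2 : Real.exp (1/4) ≤ (4/3 : ℝ) := by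
      have h1 : Real.exp (1/4) ^ 4 ≤ (4/3:ℝ)^4 := by
        rw [← Real.exp_nat_mul]; norm_num
        linarith [Real.exp_one_lt_d9]
      exact le_of_pow_le_pow_left₀ (by norm_num) (by norm_num) h1
    have e3 : 648 * M ≤ (4/3)^N := by
      calc 648 * M = Real.exp (Real.log (648 * M)) := by rw [Real.exp_log (by linarith)]
        _ ≤ Real.exp (N * (1/4)) := by gcongr; linarith
        _ = Real.exp (1/4) ^ N := by rw [Real.exp_nat_mul]
        _ ≤ (4/3)^N := by gcongr
    have e4 : (3/4:ℝ)^N * (4/3)^N = 1 := by rw [← mul_pow]; norm_num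
    have e5 : (0:ℝ) < (3/4)^N := by positivity
    nlinarith
  have : lam * (2 - β)^N / (1 - β) ≤ 3 * lam * (648 * M) ^ (4 * (1 - β)) / (1 - β) := by
    rw [show 3 * lam * (648 * M) ^ (4 * (1 - β)) = lam * (3 * (648 * M) ^ (4 * (1 - β))) by ring]
    exact div_le_div_of_nonneg_right (mul_le_mul_of_nonneg_left hpow hl0) h1b.le
  linarith

end

section

open Complex Set Metric Filter Topology
open scoped ComplexOrder
local notation "Λ" => ArithmeticFunction.vonMangoldt

noncomputable def LD (D : ℤ) [NeZero D] : ℂ → ℂ := (chiD D).LFunction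

lemma LD_im {D : ℤ} [NeZero D] (hns : ¬ IsSquare D) {σ : ℝ} (hσ : 0 < σ) : (LD D σ).im = 0 := by
  refine LFun_real (chiD_ne_one hns) (fun n => ?_) hσ
  rw [chiD_apply]; exact Complex.intCast_im _

lemma LD_diff {D : ℤ} [NeZero D] (hns : ¬ IsSquare D) : Differentiable ℂ (LD D) :=
  DirichletCharacter.differentiable_LFunction (chiD_ne_one hns)

lemma LD_two (D : ℤ) [NeZero D] : 1/3 ≤ (LD D 2).re := by
  have h1 : LD D 2 = LSeries (fun n : ℕ => chiD D n) 2 :=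
    DirichletCharacter.LFunction_eq_LSeries _ (by simp)
  have hs : LSeriesSummable (fun n : ℕ => chiD D n) 2 :=
    DirichletCharacter.LSeriesSummable_of_one_lt_re _ (by simp)
  have h2 := Complex.hasSum_re hs.hasSum
  have h3 := (hasSum_ite_eq 1 (2:ℝ)).sub hasSum_zeta_two
  have h4 := hasSum_le (fun n => ?_) h3 h2
  · have e : (∑' n, LSeries.term (fun n : ℕ => chiD D n) 2 n) = LSeries (fun n : ℕ => chiD D n) 2 := rfl
    rw [e, ← h1] at h4
    have := Real.pi_lt_d2
    have := Real.pi_pos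
    nlinarith
  · rcases eq_or_ne n 0 with rfl | hn
    · simp
    rw [LSeries.term_of_ne_zero hn, chiD_apply, Complex.cpow_ofNat]
    have : ((jac D n : ℂ) / (n:ℂ)^2) = (((jac D n : ℝ) / (n:ℝ)^2 : ℝ) : ℂ) := by push_cast; rfl
    rw [this, Complex.ofReal_re]
    rcases eq_or_ne n 1 with rfl | h1
    · simp [jac_one]; norm_num
    · rw [if_neg h1, zero_sub, ← neg_div]
      gcongr
      rcases jac_tri D n with h | h | h <;> simp [h]

lemma LD_pos {D : ℤ} [NeZero D] (hns : ¬ IsSquare D) {σ0 : ℝ} (h0 : 0 < σ0) (h1 : σ0 ≤ 2)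
    (hz : ∀ σ : ℝ, σ0 ≤ σ → σ ≤ 2 → LD D σ ≠ 0) : 0 < (LD D σ0).re := by
  by_contra hneg
  push Not at hneg
  have hc : ContinuousOn (fun σ : ℝ => (LD D σ).re) (Icc σ0 2) := by
    have := (LD_diff hns).continuous
    exact (continuous_re.comp (this.comp continuous_ofReal)).continuousOn
  have h2 : (0:ℝ) ∈ Icc ((LD D σ0).re) ((LD D (2:ℝ)).re) := by
    refine ⟨hneg, ?_⟩
    have := LD_two D
    push_cast; linarith
  obtain ⟨σ, hσ, he⟩ := intermediate_value_Icc h1 hc h2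
  apply hz σ hσ.1 hσ.2
  apply Complex.ext
  · exact he
  · simpa using LD_im hns (lt_of_lt_of_le h0 hσ.1)

lemma LD_ne_zero_ge_one {D : ℤ} [NeZero D] (hns : ¬ IsSquare D) {s : ℂ} (hs : 1 ≤ s.re) : LD D s ≠ 0 :=
  DirichletCharacter.LFunction_ne_zero_of_one_le_re (chiD D) (.inl (chiD_ne_one hns)) hs

lemma LD_one_pos {D : ℤ} [NeZero D] (hns : ¬ IsSquare D) : 0 < (LD D 1).re := by
  have := LD_pos hns (σ0 := 1) one_pos (by norm_num) (fun σ h _ => LD_ne_zero_ge_one hns (by simpa using h))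
  simpa using this

/-- growth -/
lemma LD_bound {D : ℤ} [NeZero D] (hns : ¬ IsSquare D) {ε : ℝ} (h0 : 0 ≤ ε) (h1 : ε ≤ 1) {s : ℂ}
    (hs : 0 < s.re) (hs' : 1 - ε < s.re) :
    ‖LD D s‖ ≤ ‖s‖ * (4 * (D.natAbs:ℝ)) ^ ε / (s.re - (1 - ε)) := by
  have := LFun_bound (chiD_ne_one hns) h0 h1 hs hs'
  push_cast at this
  exact this

/-- the product function -/
noncomputable def PF (D E : ℤ) [NeZero D] [NeZero E] (s : ℂ) : ℂ :=
  riemannZeta s * LD D s * LD E s * LD (D * E) s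

noncomputable def PG (D E : ℤ) [NeZero D] [NeZero E] (s : ℂ) : ℂ :=
  GG s * LD D s * LD E s * LD (D * E) s

lemma ofReal_of_im {z : ℂ} (h : z.im = 0) : z = (z.re : ℂ) := by
  apply Complex.ext <;> simp [h]

lemma PF_two {D E : ℤ} [NeZero D] [NeZero E] (hD : ¬ IsSquare D) (hE : ¬ IsSquare E)
    (hDE : ¬ IsSquare (D * E)) : 0 ≤ PF D E 2 ∧ 1/81 ≤ (PF D E 2).re := by
  have a1 := LD_two D
  have a2 := LD_two E
  have a3 := LD_two (D * E)
  have i1 := ofReal_of_im (by simpa using LD_im hD two_pos : (LD D 2).im = 0)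
  have i2 := ofReal_of_im (by simpa using LD_im hE two_pos : (LD E 2).im = 0)
  have i3 := ofReal_of_im (by simpa using LD_im hDE two_pos : (LD (D * E) 2).im = 0)
  set x := (LD D 2).re
  set y := (LD E 2).re
  set z := (LD (D * E) 2).re
  have e : PF D E 2 = ((Real.pi^2/6 * x * y * z : ℝ) : ℂ) := by
    unfold PF; rw [riemannZeta_two, i1, i2, i3]; push_cast; ring
  have hpi : 1 ≤ Real.pi^2/6 := by nlinarith [Real.pi_gt_three]
  have h : 1/81 ≤ Real.pi^2/6 * x * y * z := by
    calc (1:ℝ)/81 ≤ 1 * (1/3) * (1/3) * (1/3) := by norm_num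
      _ ≤ _ := by gcongr
  rw [e]
  refine ⟨?_, by rw [ofReal_re]; exact h⟩
  exact_mod_cast (by linarith : (0:ℝ) ≤ _)

lemma PF_alt {D E : ℤ} [NeZero D] [NeZero E] (hD : ¬ IsSquare D) (hE : ¬ IsSquare E)
    (hDE : ¬ IsSquare (D * E)) (m : ℕ) : 0 ≤ (-1)^m * iteratedDeriv m (PF D E) 2 := by
  have hre : {s : ℂ | 1 < s.re} ∈ 𝓝 (2:ℂ) :=
    (isOpen_lt continuous_const continuous_re).mem_nhds (by simp)
  set a : ℕ → ℂ := fun n => (Λ n : ℂ) * (1 + jac D n) * (1 + jac E n) with ha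
  have ha0 : 0 ≤ a := by
    intro n
    have : a n = ((Λ n * (1 + (jac D n:ℝ)) * (1 + (jac E n:ℝ)) : ℝ) : ℂ) := by simp [ha]
    rw [this]
    have h1 : (0:ℝ) ≤ 1 + (jac D n:ℝ) := by rcases jac_tri D n with h | h | h <;> simp [h]
    have h2 : (0:ℝ) ≤ 1 + (jac E n:ℝ) := by rcases jac_tri E n with h | h | h <;> simp [h]
    have h3 : 0 ≤ Λ n := ArithmeticFunction.vonMangoldt_nonneg
    simp only [Pi.zero_apply]
    exact_mod_cast mul_nonneg (mul_nonneg h3 h1) h2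
  have hdec : a = (fun n : ℕ => (Λ n : ℂ)) + ((fun n : ℕ => chiD D n) * (fun n : ℕ => (Λ n : ℂ)))
      + ((fun n : ℕ => chiD E n) * (fun n : ℕ => (Λ n : ℂ)))
      + ((fun n : ℕ => chiD (D * E) n) * (fun n : ℕ => (Λ n : ℂ))) := by
    funext n
    simp only [ha, Pi.add_apply, Pi.mul_apply, chiD_apply, jac_mul_left]
    push_cast; ring
  have S0 : ∀ s : ℂ, 1 < s.re → LSeriesSummable (fun n : ℕ => (Λ n : ℂ)) s := fun s hs =>
    ArithmeticFunction.LSeriesSummable_vonMangoldt hs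
  have S1 : ∀ (D : ℤ) [NeZero D] (s : ℂ), 1 < s.re →
    LSeriesSummable ((fun n : ℕ => chiD D n) * (fun n : ℕ => (Λ n : ℂ))) s := fun D _ s hs =>
    DirichletCharacter.LSeriesSummable_twist_vonMangoldt _ hs
  have hsum : ∀ s : ℂ, 1 < s.re → LSeriesSummable a s := by
    intro s hs
    rw [hdec]
    exact (((S0 s hs).add (S1 D s hs)).add (S1 E s hs)).add (S1 (D*E) s hs)
  have hab : LSeries.abscissaOfAbsConv a < (2:ℝ) := by
    refine lt_of_le_of_lt (LSeries.abscissaOfAbsConv_le_of_forall_lt_LSeriesSummable (x := 1) ?_) ?_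
    · intro y hy; exact hsum y (by simpa using hy)
    · exact_mod_cast one_lt_two
  have hls : ∀ s : ℂ, 1 < s.re → LSeries a s = - deriv riemannZeta s / riemannZeta s
      - logDeriv (LD D) s - logDeriv (LD E) s - logDeriv (LD (D*E)) s := by
    intro s hs
    rw [hdec, LSeries_add (((S0 s hs).add (S1 D s hs)).add (S1 E s hs)) (S1 (D*E) s hs),
      LSeries_add ((S0 s hs).add (S1 D s hs)) (S1 E s hs), LSeries_add (S0 s hs) (S1 D s hs),
      LFun_logDeriv_eq _ hs, LFun_logDeriv_eq _ hs, LFun_logDeriv_eq _ hs,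
      ArithmeticFunction.LSeries_vonMangoldt_eq_deriv_riemannZeta_div hs]
    simp only [LD]; ring
  have hd : deriv (PF D E) =ᶠ[𝓝 2] fun s => - (LSeries a s * PF D E s) := by
    filter_upwards [hre] with s hs
    have hs' : 1 < s.re := hs
    have hs1 : s ≠ 1 := by rintro rfl; simp at hs'
    have d0 := (differentiableAt_riemannZeta hs1).hasDerivAt
    have d1 := (LD_diff hD s).hasDerivAt
    have d2 := (LD_diff hE s).hasDerivAt
    have d3 := (LD_diff hDE s).hasDerivAt
    have := (((d0.mul d1).mul d2).mul d3).deriv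
    have n0 : riemannZeta s ≠ 0 := riemannZeta_ne_zero_of_one_lt_re hs'
    have n1 := LD_ne_zero_ge_one hD hs'.le
    have n2 := LD_ne_zero_ge_one hE hs'.le
    have n3 := LD_ne_zero_ge_one hDE hs'.le
    have e : PF D E = ((riemannZeta * LD D) * LD E) * LD (D * E) := rfl
    rw [e, this, hls s hs']
    simp only [logDeriv_apply, Pi.mul_apply]
    field_simp
    ring
  have hfan : AnalyticAt ℂ (PF D E) 2 := by
    have hz : AnalyticAt ℂ riemannZeta 2 := by
      have : DifferentiableOn ℂ riemannZeta {s : ℂ | 1 < s.re} := fun s hs =>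
        (differentiableAt_riemannZeta (by rintro rfl; simp at hs)).differentiableWithinAt
      exact this.analyticAt hre
    exact ((hz.mul ((LD_diff hD).analyticAt 2)).mul ((LD_diff hE).analyticAt 2)).mul ((LD_diff hDE).analyticAt 2)
  have hhan : AnalyticAt ℂ (LSeries a) 2 := by
    refine LSeries_analyticOnNhd a 2 ?_
    simpa using hab
  refine alternating_of_logDeriv hfan hhan hd ?_ (fun m => ?_) m
  · exact (PF_two hD hE hDE).1
  · have := LSeries.iteratedDeriv_alternating ha0 hab m
    simpa using this


lemma PG_bound {D E : ℤ} [NeZero D] [NeZero E] (hD : ¬ IsSquare D) (hE : ¬ IsSquare E)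
    (hDE : ¬ IsSquare (D * E)) {s : ℂ} (hs : s ∈ closedBall (2:ℂ) (3/2)) :
    ‖PG D E s‖ ≤ 460992 * ((D * E).natAbs:ℝ)^2 := by
  rw [mem_closedBall, dist_eq_norm] at hs
  have hre : 1/2 ≤ s.re := by
    have := (abs_le.mp ((Complex.abs_re_le_norm (s-2)).trans hs)).1
    simp at this; linarith
  have hn : ‖s‖ ≤ 7/2 := by
    calc ‖s‖ = ‖(s - 2) + 2‖ := by ring_nf
      _ ≤ ‖s-2‖ + ‖(2:ℂ)‖ := norm_add_le _ _
      _ ≤ 3/2 + 2 := by gcongr; simp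
      _ = 7/2 := by norm_num
  have hn1 : ‖s - 1‖ ≤ 5/2 := by
    calc ‖s - 1‖ = ‖(s - 2) + 1‖ := by ring_nf
      _ ≤ ‖s-2‖ + ‖(1:ℂ)‖ := norm_add_le _ _
      _ ≤ 3/2 + 1 := by gcongr; simp
      _ = 5/2 := by norm_num
  have hG : ‖GG s‖ ≤ 21 := by
    calc _ ≤ _ := GG_bound (by linarith)
      _ ≤ 7/2 + 5/2 * ((7/2) / (1/2)) := by gcongr
      _ = 21 := by norm_num
  have hL : ∀ {D : ℤ} [NeZero D] (hD : ¬ IsSquare D), ‖LD D s‖ ≤ 28 * (D.natAbs:ℝ) := by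
    intro D _ hD
    calc ‖LD D s‖ ≤ ‖s‖ * (4 * (D.natAbs:ℝ)) ^ (1:ℝ) / (s.re - (1 - 1)) :=
        LD_bound hD zero_le_one le_rfl (by linarith) (by linarith)
      _ = ‖s‖ * (4 * (D.natAbs:ℝ)) / s.re := by rw [Real.rpow_one]; ring_nf
      _ ≤ (7/2) * (4 * (D.natAbs:ℝ)) / (1/2) := by gcongr
      _ = _ := by ring
  unfold PG
  rw [norm_mul, norm_mul, norm_mul]
  calc ‖GG s‖ * ‖LD D s‖ * ‖LD E s‖ * ‖LD (D*E) s‖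
      ≤ 21 * (28 * (D.natAbs:ℝ)) * (28 * (E.natAbs:ℝ)) * (28 * ((D*E).natAbs:ℝ)) := by
        gcongr
        · exact hL hD
        · exact hL hE
        · exact hL hDE
    _ = _ := by rw [Int.natAbs_mul]; push_cast; ring

lemma estermann {D E : ℤ} [NeZero D] [NeZero E] (hD : ¬ IsSquare D) (hE : ¬ IsSquare E)
    (hDE : ¬ IsSquare (D * E)) {β : ℝ} (hβ : 7/8 ≤ β) (hβ1 : β < 1) :
    1/162 - 3 * ((LD D 1).re * (LD E 1).re * (LD (D*E) 1).re) *
      (2^31 * ((D * E).natAbs:ℝ)^2) ^ (4 * (1 - β)) / (1 - β) ≤ (PF D E β).re := by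
  have hX : (1:ℝ) ≤ ((D*E).natAbs : ℝ) := by
    exact_mod_cast Nat.one_le_iff_ne_zero.mpr (by simpa using NeZero.ne (D * E))
  have p1 := LD_one_pos hD
  have p2 := LD_one_pos hE
  have p3 := LD_one_pos hDE
  have i1 := ofReal_of_im (by simpa using LD_im hD one_pos : (LD D 1).im = 0)
  have i2 := ofReal_of_im (by simpa using LD_im hE one_pos : (LD E 1).im = 0)
  have i3 := ofReal_of_im (by simpa using LD_im hDE one_pos : (LD (D * E) 1).im = 0)
  set X := ((D*E).natAbs : ℝ)
  have hre : ∀ s ∈ ball (2:ℂ) 2, 0 < s.re := by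
    intro s hs
    rw [mem_ball, dist_eq_norm] at hs
    have := (abs_lt.mp ((Complex.abs_re_le_norm (s-2)).trans_lt hs)).1
    simp at this; linarith
  have key := estermann_abs' (F := PG D E) (f := PF D E) (M := 2^31 * X^2 / 648)
    (lam := (LD D 1).re * (LD E 1).re * (LD (D*E) 1).re) (b0 := 1/81) (β := β) ?_ ?_ ?_ ?_ (by positivity) ?_
    (PF_alt hD hE hDE) (PF_two hD hE hDE).2 rfl hβ hβ1
  · rwa [mul_div_cancel₀ _ (by norm_num : (648:ℝ) ≠ 0)] at key
  · intro s hs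
    exact ((((GG_diff (hre s hs)).mul (LD_diff hD s)).mul (LD_diff hE s)).mul (LD_diff hDE s)).differentiableWithinAt
  · intro s hs
    have h1 : ‖s - 1‖ ≥ 1/2 := by
      rw [mem_sphere, dist_eq_norm] at hs
      have : ‖s - 2‖ ≤ ‖s - 1‖ + ‖(1:ℂ)‖ := by
        calc ‖s - 2‖ = ‖(s - 1) - 1‖ := by ring_nf
          _ ≤ _ := norm_sub_le _ _
      rw [hs, norm_one] at this; linarith
    have hne : s ≠ 1 := by rintro rfl; norm_num at h1
    have b1 := PG_bound hD hE hDE (sphere_subset_closedBall hs)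
    have b2 := PG_bound hD hE hDE (s := 1) (by rw [mem_closedBall, dist_eq_norm]; norm_num)
    rw [dslope_of_ne _ hne, slope_def_module, norm_smul, norm_inv]
    calc ‖s-1‖⁻¹ * ‖PG D E s - PG D E 1‖ ≤ (1/2)⁻¹ * (460992 * X^2 + 460992 * X^2) := by
          gcongr
          exact (norm_sub_le _ _).trans (add_le_add b1 b2)
      _ ≤ _ := by
        have := sq_nonneg X
        linarith
  · have : 1 ≤ X^2 := one_le_pow₀ hX
    linarith
  · unfold PG
    rw [GG_one, i1, i2, i3]; push_cast; ring_nf; simp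
  · intro s hs h1
    have : s - 1 ≠ 0 := sub_ne_zero.mpr h1
    unfold PF PG
    rw [GG_eq hs h1]
    field_simp

/-- Siegel's theorem. -/
lemma siegel {ε : ℝ} (h0 : 0 < ε) (h1 : ε ≤ 1/8) :
    ∃ c > 0, ∀ (D : ℤ) [NeZero D], SqF D → c * (D.natAbs:ℝ) ^ (-(9 * ε)) ≤ (LD D 1).re := by
  obtain ⟨E, hE0, hE, β, hβ, hβ1, hneg⟩ : ∃ (E : ℤ) (_ : NeZero E) (_ : SqF E) (β : ℝ), 1 - ε ≤ β ∧ β < 1 ∧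
      ∀ (D : ℤ) [NeZero D], SqF D → D ≠ E → (PF D E β).re ≤ 0 := by
    by_cases hz : ∃ (E : ℤ) (_ : NeZero E) (_ : SqF E) (β : ℝ), 1 - ε ≤ β ∧ β < 1 ∧ LD E β = 0
    · obtain ⟨E, hE0, hE, β, hβ, hβ1, hz⟩ := hz
      refine ⟨E, hE0, hE, β, hβ, hβ1, ?_⟩
      intro D _ _ _
      simp [PF, hz]
    · push Not at hz
      refine ⟨-1, ⟨by norm_num⟩, ⟨by rw [← Int.squarefree_natAbs]; simp, by norm_num⟩, 1 - ε, le_rfl, by linarith, ?_⟩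
      intro D _ hD hne
      haveI : NeZero (-1 : ℤ) := ⟨by norm_num⟩
      have hpos : ∀ (E : ℤ) [NeZero E], SqF E → 0 < (LD E (1 - ε : ℝ)).re := by
        intro E _ hE
        refine LD_pos hE.not_isSquare (by linarith) (by linarith) ?_
        intro σ hσ _
        by_cases h : σ < 1
        · exact hz E ‹_› hE σ hσ h
        · exact LD_ne_zero_ge_one hE.not_isSquare (by simpa using h)
      have hm1 : SqF (-1) := ⟨by rw [← Int.squarefree_natAbs]; simp, by norm_num⟩
      have hDm : SqF (D * (-1)) := by
        refine ⟨?_, fun h => hne (by linarith)⟩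
        rw [← Int.squarefree_natAbs]; simpa [Int.squarefree_natAbs] using hD.1
      have p1 := hpos D hD
      have p2 := hpos (-1) hm1
      have p3 := hpos (D * (-1)) hDm
      have hε0 : (0:ℝ) < 1 - ε := by linarith
      have i1 := ofReal_of_im (LD_im hD.not_isSquare hε0)
      have i2 := ofReal_of_im (LD_im hm1.not_isSquare hε0)
      have i3 := ofReal_of_im (LD_im hDm.not_isSquare hε0)
      obtain ⟨g1, g2⟩ := GG_real_pos hε0 (by linarith)
      have ig := ofReal_of_im g1
      have hne1 : ((1 - ε : ℝ) : ℂ) ≠ 1 := by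
        intro h; have : 1 - ε = 1 := by exact_mod_cast h
        linarith
      have hz := GG_eq (s := ((1 - ε : ℝ) : ℂ)) (by simpa using hε0) hne1
      have hze : riemannZeta ((1 - ε : ℝ) : ℂ) = ((-((GG (1 - ε : ℝ)).re / ε) : ℝ) : ℂ) := by
        have : riemannZeta ((1 - ε : ℝ) : ℂ) = GG ((1 - ε : ℝ) : ℂ) / (((1 - ε : ℝ) : ℂ) - 1) := by
          rw [hz]; field_simp [sub_ne_zero.mpr hne1]
        rw [this, ig]
        have hεc : (ε : ℂ) ≠ 0 := by exact_mod_cast h0.ne'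
        rw [show (((1 - ε : ℝ) : ℂ) - 1) = -(ε:ℂ) by push_cast; ring]
        simp only [ofReal_re]
        push_cast
        rw [div_neg]
      unfold PF
      rw [hze, i1, i2, i3]
      set x := (LD D (1 - ε : ℝ)).re
      set y := (LD (-1) (1 - ε : ℝ)).re
      set z := (LD (D * -1) (1 - ε : ℝ)).re
      set g := (GG (1 - ε : ℝ)).re
      rw [← ofReal_mul, ← ofReal_mul, ← ofReal_mul, ofReal_re]
      have : 0 ≤ (g / ε) * x * y * z := by positivity
      linarith
  have hLE := LD_one_pos hE.not_isSquare
  set l := (LD E 1).re with hl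
  have hEn : (1:ℝ) ≤ (E.natAbs : ℝ) := by
    exact_mod_cast Nat.one_le_iff_ne_zero.mpr (by simpa using NeZero.ne E)
  have h1β : 0 < 1 - β := by linarith
  set c1 := (1 - β) * ε * (E.natAbs:ℝ) ^ (-(9 * ε)) / (162 * 3 * 2^16 * 4 * l) with hc1
  have hc1p : 0 < c1 := by positivity
  refine ⟨min c1 l, lt_min hc1p hLE, ?_⟩
  intro D _ hD
  have hDn : (1:ℝ) ≤ (D.natAbs : ℝ) := by
    exact_mod_cast Nat.one_le_iff_ne_zero.mpr (by simpa using NeZero.ne D)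
  have hDp : (D.natAbs:ℝ) ^ (-(9 * ε)) ≤ 1 := Real.rpow_le_one_of_one_le_of_nonpos hDn (by linarith)
  have hDp0 : 0 < (D.natAbs:ℝ) ^ (-(9 * ε)) := by positivity
  by_cases hDE : D = E
  · subst hDE
    calc min c1 l * (D.natAbs:ℝ) ^ (-(9 * ε)) ≤ l * 1 := by gcongr; exact min_le_right _ _
      _ = _ := by rw [mul_one]
  have hns := hD.mul_not_isSquare hE hDE
  have hest := (estermann hD.not_isSquare hE.not_isSquare hns (by linarith) hβ1).trans (hneg D hD hDE)
  set X := ((D*E).natAbs : ℝ) with hXdef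
  have hXm : X = D.natAbs * E.natAbs := by rw [hXdef, Int.natAbs_mul]; push_cast; rfl
  have hX : 1 ≤ X := by rw [hXm]; nlinarith
  have hL12 : (LD (D*E) 1).re ≤ 4 * X ^ ε / ε := by
    have := LD_bound hns h0.le (by linarith : ε ≤ 1) (s := 1) (by simp) (by simp [h0])
    rw [norm_one, one_mul, one_re, sub_sub_cancel] at this
    refine (Complex.re_le_norm _).trans (this.trans ?_)
    gcongr
    rw [Real.mul_rpow (by norm_num) (by positivity)]
    gcongr
    calc (4:ℝ)^ε ≤ 4^(1:ℝ) := by gcongr; norm_num; linarith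
      _ = 4 := by simp
  have hpow : (2^31 * X^2) ^ (4 * (1 - β)) ≤ 2^16 * X ^ (8 * ε) := by
    calc (2^31 * X^2) ^ (4 * (1 - β)) ≤ (2^31 * X^2) ^ (4 * ε) := by
          have : (1:ℝ) ≤ X^2 := one_le_pow₀ hX
          apply Real.rpow_le_rpow_of_exponent_le
          · linarith
          · linarith
      _ = (2:ℝ) ^ (31 * (4 * ε)) * X ^ (8 * ε) := by
          rw [Real.mul_rpow (by norm_num) (by positivity), ← Real.rpow_natCast, ← Real.rpow_natCast,
            ← Real.rpow_mul (by norm_num), ← Real.rpow_mul (by positivity)]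
          push_cast; ring_nf
      _ ≤ (2:ℝ)^(16:ℝ) * X ^ (8 * ε) := by
          gcongr
          · norm_num
          · linarith
      _ = _ := by norm_num
  have hLD := LD_one_pos hD.not_isSquare
  have hL12p := LD_one_pos hns
  have hfin : 1/162 ≤ 3 * ((LD D 1).re * l * (4 * X ^ ε / ε)) * (2^16 * X ^ (8 * ε)) / (1 - β) := by
    have : 3 * ((LD D 1).re * l * (LD (D*E) 1).re) * (2^31 * X^2) ^ (4 * (1 - β)) / (1 - β) ≤
      3 * ((LD D 1).re * l * (4 * X ^ ε / ε)) * (2^16 * X ^ (8 * ε)) / (1 - β) := by gcongr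
    linarith
  have hXX : X ^ ε * X ^ (8 * ε) = X ^ (9 * ε) := by rw [← Real.rpow_add (by linarith)]; ring_nf
  have hXn : X ^ (9 * ε) * X ^ (-(9 * ε)) = 1 := by rw [← Real.rpow_add (by linarith)]; simp
  have hXs : X ^ (-(9 * ε)) = (D.natAbs:ℝ) ^ (-(9 * ε)) * (E.natAbs:ℝ) ^ (-(9 * ε)) := by
    rw [hXm, Real.mul_rpow (by positivity) (by positivity)]
  have hXp : 0 < X ^ (-(9 * ε)) := by positivity
  have e1 : 3 * ((LD D 1).re * l * (4 * X ^ ε / ε)) * (2^16 * X ^ (8 * ε)) / (1 - β)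
     = (LD D 1).re * (X ^ (9 * ε)) * (3 * 2^16 * 4 * l / (ε * (1 - β))) := by
    rw [← hXX]; field_simp
  rw [e1] at hfin
  have h2 : 1/162 * X ^ (-(9 * ε)) ≤ (LD D 1).re * (3 * 2^16 * 4 * l / (ε * (1 - β))) := by
    calc _ ≤ ((LD D 1).re * (X ^ (9 * ε)) * (3 * 2^16 * 4 * l / (ε * (1 - β)))) * X ^ (-(9 * ε)) := by gcongr
      _ = (LD D 1).re * (3 * 2^16 * 4 * l / (ε * (1 - β))) * (X ^ (9 * ε) * X ^ (-(9 * ε))) := by ring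
      _ = _ := by rw [hXn, mul_one]
  calc min c1 l * (D.natAbs:ℝ) ^ (-(9 * ε)) ≤ c1 * (D.natAbs:ℝ) ^ (-(9 * ε)) := by gcongr; exact min_le_left _ _
    _ = (1/162 * X ^ (-(9 * ε))) / (3 * 2^16 * 4 * l / (ε * (1 - β))) := by
        rw [hc1, hXs]; field_simp
    _ ≤ _ := by rw [div_le_iff₀ (by positivity)]; exact h2

end

section

open Complex Set Metric Filter Topology

lemma zero_free_near (k : ℕ) : ∃ δ > (0:ℝ), ∀ (D : ℤ) [NeZero D], SqF D → ∀ ℓ : ℝ, 1 ≤ ℓ →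
    (D.natAbs:ℝ) ≤ ℓ^k → ∀ s : ℂ, ‖s - 1‖ ≤ 2 * δ / ℓ → LD D s ≠ 0 := by
  set K : ℝ := k + 1 with hK
  have hK1 : 1 ≤ K := by simp [hK]
  have hkK : (k:ℝ) / K ≤ 1 := by rw [div_le_one (by linarith)]; linarith
  obtain ⟨c, hc, hsie⟩ := siegel (ε := 1/(36*K)) (by positivity)
    (by rw [div_le_div_iff₀ (by positivity) (by norm_num)]; linarith)
  refine ⟨min (1/(32*K)) (c/(6400*K^2)), by positivity, ?_⟩
  set δ := min (1/(32*K)) (c/(6400*K^2)) with hδ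
  have hδ1 : δ ≤ 1/(32*K) := min_le_left _ _
  have hδ2 : δ ≤ c/(6400*K^2) := min_le_right _ _
  have hδ0 : 0 < δ := by positivity
  intro D _ hD ℓ hℓ hDℓ s hs h0
  have hℓ0 : 0 < ℓ := by linarith
  have hDn : (1:ℝ) ≤ (D.natAbs : ℝ) := by
    exact_mod_cast Nat.one_le_iff_ne_zero.mpr (by simpa using NeZero.ne D)
  have hns := hD.not_isSquare
  set η := 1/(4*K) with hη
  have hη0 : 0 < η := by positivity
  have hη1 : η ≤ 1/4 := by rw [hη, div_le_div_iff₀ (by positivity) (by norm_num)]; linarith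
  have hDη : (4 * (D.natAbs:ℝ)) ^ η ≤ 4 * ℓ ^ (1/4:ℝ) := by
    rw [Real.mul_rpow (by norm_num) (by positivity)]
    gcongr
    · calc (4:ℝ)^η ≤ 4^(1:ℝ) := by gcongr; norm_num; linarith
        _ = 4 := by simp
    · calc (D.natAbs:ℝ)^η ≤ (ℓ^k)^η := by gcongr
        _ = ℓ ^ (k * η) := by rw [← Real.rpow_natCast, ← Real.rpow_mul hℓ0.le]
        _ ≤ _ := by
          apply Real.rpow_le_rpow_of_exponent_le hℓ
          rw [hη]; calc (k:ℝ) * (1/(4*K)) = (k/K) * (1/4) := by field_simp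
            _ ≤ 1 * (1/4) := by gcongr
            _ = _ := by norm_num
  set U := ℓ ^ (1/4:ℝ) with hU
  have hU0 : 0 < U := by positivity
  have hbd : ∀ z ∈ ball (1:ℂ) (η/2), ‖LD D z‖ ≤ 64 * K * U := by
    intro z hz
    rw [mem_ball, dist_eq_norm] at hz
    have hre : 1 - η/2 < z.re := by
      have := (abs_lt.mp ((Complex.abs_re_le_norm (z-1)).trans_lt hz)).1
      simp at this; linarith
    have hn : ‖z‖ ≤ 2 := by
      calc ‖z‖ = ‖(z - 1) + 1‖ := by ring_nf
        _ ≤ ‖z-1‖ + ‖(1:ℂ)‖ := norm_add_le _ _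
        _ ≤ 2 := by rw [norm_one]; linarith
    refine (LD_bound hns hη0.le (by linarith) (by linarith) (by linarith)).trans ?_
    calc ‖z‖ * (4 * (D.natAbs:ℝ)) ^ η / (z.re - (1 - η)) ≤ 2 * (4 * U) / (η / 2) := by
          gcongr
          linarith
      _ = 64 * K * U := by rw [hη]; field_simp; norm_num
  have h1 := hbd 1 (mem_ball_self (by positivity))
  have hmaps : MapsTo (LD D) (ball 1 (η/2)) (ball (LD D 1) (200 * K * U)) := by
    intro z hz
    rw [mem_ball, dist_eq_norm]
    have hKU : 0 < K * U := by positivity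
    calc _ ≤ ‖LD D z‖ + ‖LD D 1‖ := norm_sub_le _ _
      _ ≤ 64 * K * U + 64 * K * U := add_le_add (hbd z hz) h1
      _ < _ := by nlinarith
  have hsb : s ∈ ball (1:ℂ) (η/2) := by
    rw [mem_ball, dist_eq_norm]
    refine lt_of_le_of_lt hs ?_
    calc 2 * δ / ℓ ≤ 2 * δ / 1 := by gcongr
      _ ≤ 2 * (1/(32*K)) := by linarith
      _ < η / 2 := by rw [hη]; have : 0 < 1/K := by positivity
                      have e1 : 1/(32*K) = 1/K/32 := by field_simp
                      have e2 : 1/(4*K) = 1/K/4 := by field_simp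
                      rw [e1, e2]; linarith
  have hd := Complex.dist_le_div_mul_dist_of_mapsTo_ball (LD_diff hns).differentiableOn (hmaps.mono_right ball_subset_closedBall) hsb
  rw [h0, dist_eq_norm, dist_eq_norm, zero_sub, norm_neg] at hd
  have hsg := hsie D hD
  have hl1 : (D.natAbs:ℝ) ^ (-(9 * (1/(36*K)))) ≥ U⁻¹ := by
    rw [hU, ← Real.rpow_neg hℓ0.le]
    calc ℓ ^ (-(1/4:ℝ)) ≤ ℓ ^ (k * (-(9 * (1/(36*K))))) := by
          apply Real.rpow_le_rpow_of_exponent_le hℓ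
          have : (k:ℝ) * (-(9 * (1/(36*K)))) = -((k/K) * (1/4)) := by field_simp; norm_num; ring
          rw [this]; linarith
      _ = (ℓ^k) ^ (-(9 * (1/(36*K)))) := by rw [← Real.rpow_natCast, ← Real.rpow_mul hℓ0.le]
      _ ≤ _ := by
          apply Real.rpow_le_rpow_of_nonpos (by positivity) hDℓ
          rw [neg_nonpos]; positivity
  have h2 : c * U⁻¹ ≤ ‖LD D 1‖ :=
    calc c * U⁻¹ ≤ c * (D.natAbs:ℝ) ^ (-(9 * (1/(36*K)))) := by gcongr
      _ ≤ _ := hsg.trans (Complex.re_le_norm _)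
  have h3 : 200 * K * U / (η/2) * ‖s - 1‖ ≤ (c/2) * (U / ℓ) := by
    calc _ ≤ 200 * K * U / (η/2) * (2 * δ / ℓ) := by gcongr
      _ = 3200 * K^2 * δ * (U / ℓ) := by rw [hη]; field_simp; norm_num
      _ ≤ 3200 * K^2 * (c/(6400*K^2)) * (U/ℓ) := by gcongr
      _ = _ := by field_simp; norm_num
  have h4 : U / ℓ ≤ U⁻¹ := by
    rw [div_le_iff₀ hℓ0, ← div_eq_inv_mul, le_div_iff₀ hU0, hU, ← Real.rpow_add hℓ0]
    calc ℓ ^ (1/4 + 1/4 : ℝ) ≤ ℓ ^ (1:ℝ) := Real.rpow_le_rpow_of_exponent_le hℓ (by norm_num)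
      _ = ℓ := Real.rpow_one _
  have h5 : (c/2) * (U/ℓ) ≤ (c/2) * U⁻¹ := by gcongr
  have h6 : 0 < c * U⁻¹ := by positivity
  linarith

lemma sw_logDeriv (k : ℕ) : ∃ b > (0:ℝ), b ≤ 1 ∧ ∃ B > (0:ℝ), ∃ ℓ0 ≥ (32:ℝ), ∀ (D : ℤ) [NeZero D], SqF D →
    ∀ ℓ : ℝ, ℓ0 ≤ ℓ → (D.natAbs:ℝ) ≤ ℓ^k → ∀ s : ℂ, 1 - b/ℓ ≤ s.re → s.re ≤ 1 + 1/ℓ →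
    |s.im| ≤ Real.exp ℓ - 1 → LD D s ≠ 0 ∧ ‖logDeriv (LD D) s‖ ≤ B * ℓ := by
  obtain ⟨δ, hδ, hnear⟩ := zero_free_near k
  obtain ⟨b0, hb0, hb01, haway⟩ := zero_free_away δ hδ
  set b := min b0 δ with hb
  have hbp : 0 < b := lt_min hb0 hδ
  have hbb : b ≤ b0 := min_le_left _ _
  have hbδ : b ≤ δ := min_le_right _ _
  obtain ⟨ℓ1, hℓ1⟩ : ∃ ℓ1 : ℝ, ∀ ℓ ≥ ℓ1, 4 * ℓ^k ≤ Real.exp ℓ := by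
    have h := Real.tendsto_pow_mul_exp_neg_atTop_nhds_zero k
    have := (h.eventually_lt_const (by norm_num : (0:ℝ) < 1/4))
    obtain ⟨a, ha⟩ := eventually_atTop.mp this
    refine ⟨a, fun ℓ h => ?_⟩
    have h2 := ha ℓ h
    rw [Real.exp_neg, ← div_eq_mul_inv, div_lt_iff₀ (Real.exp_pos _)] at h2
    linarith
  refine ⟨b/2, by positivity, by linarith, 40000/b, by positivity, max 32 ℓ1, le_max_left _ _, ?_⟩
  intro D _ hD ℓ hℓ hDℓ s hs1 hs2 hs3
  have hℓ32 : 32 ≤ ℓ := (le_max_left _ _).trans hℓ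
  have hℓ0 : 0 < ℓ := by linarith
  have hq : ((4 * D.natAbs : ℕ) : ℝ) ≤ Real.exp ℓ := by
    push_cast
    have := hℓ1 ℓ ((le_max_right _ _).trans hℓ)
    linarith
  have hns := hD.not_isSquare
  have hzf : ∀ s : ℂ, 1 - b/ℓ ≤ s.re → |s.im| ≤ Real.exp ℓ → (chiD D).LFunction s ≠ 0 := by
    intro s hs1 hs2
    by_cases h1 : 1 ≤ s.re
    · exact LD_ne_zero_ge_one hns h1
    push Not at h1
    by_cases h2 : δ/ℓ ≤ |s.im|
    · exact haway _ (chiD D) (chiD_ne_one hns) (chiD_quad D) ℓ (by linarith) hq s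
        (le_trans (by gcongr) hs1) h2 hs2
    push Not at h2
    refine hnear D hD ℓ (by linarith) hDℓ s ?_
    refine (Complex.norm_le_abs_re_add_abs_im _).trans ?_
    have hbl : b/ℓ ≤ δ/ℓ := by gcongr
    simp only [sub_re, one_re, sub_im, one_im, sub_zero]
    rw [abs_of_neg (by linarith)]
    have : 2 * δ / ℓ = δ/ℓ + δ/ℓ := by ring
    rw [this]; linarith
  have hs1' : 1 - b/(2*ℓ) ≤ s.re := by
    rw [show b/(2*ℓ) = b/2/ℓ by field_simp]; exact hs1
  refine ⟨hzf s (le_trans ?_ hs1) (by linarith), logDeriv_bound (chiD_ne_one hns) hbp (by linarith) hℓ32 hq hzf hs1' hs2 hs3⟩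
  have : b/2/ℓ ≤ b/ℓ := by gcongr; linarith
  linarith

end

section

open Complex Set MeasureTheory Filter Topology

noncomputable def cesK (u : ℝ) : ℂ :=
  indicator (Ioc (0:ℝ) 1) (fun _ => (1:ℂ)) u - indicator (Ioc (0:ℝ) 1) (fun t : ℝ => (t:ℂ)^(1:ℂ)) u

lemma cesK_eq {u : ℝ} (hu : 0 < u) : cesK u = ((max 0 (1 - u) : ℝ) : ℂ) := by
  unfold cesK
  by_cases h : u ≤ 1
  · have hm : u ∈ Ioc (0:ℝ) 1 := ⟨hu, h⟩
    rw [indicator_of_mem hm, indicator_of_mem hm, max_eq_right (by linarith)]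
    simp
  · have hm : u ∉ Ioc (0:ℝ) 1 := fun h' => h h'.2
    rw [indicator_of_notMem hm, indicator_of_notMem hm, max_eq_left (by linarith)]
    simp

lemma cesK_mellin {s : ℂ} (hs : 0 < s.re) : HasMellin cesK s (1/s - 1/(s+1)) := by
  have h1 := hasMellin_one_Ioc hs
  have h2 := hasMellin_cpow_Ioc 1 (s := s) (by simp; linarith)
  have := hasMellin_sub h1.1 h2.1
  rw [h1.2, h2.2] at this
  exact this

lemma kern_norm {κ t : ℝ} (hκ : 1/2 ≤ κ) :
    ‖(1:ℂ)/(κ + t * I) - 1/((κ + t * I) + 1)‖ ≤ 4 * (1 + t^2)⁻¹ := by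
  set s : ℂ := κ + t * I with hs
  have hre : s.re = κ := by simp [hs]
  have him : s.im = t := by simp [hs]
  have h0 : s ≠ 0 := by intro h; rw [h] at hre; simp at hre; linarith
  have h1 : s + 1 ≠ 0 := by
    intro h
    have := congrArg Complex.re h
    simp [hre] at this; linarith
  have e : (1:ℂ)/s - 1/(s+1) = 1/(s * (s+1)) := by field_simp; ring
  rw [e, norm_div, norm_one, norm_mul]
  have a1 : ‖s‖^2 = κ^2 + t^2 := by
    rw [Complex.sq_norm, Complex.normSq_apply, hre, him]; ring
  have a2 : ‖s + 1‖^2 = (κ+1)^2 + t^2 := by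
    rw [Complex.sq_norm, Complex.normSq_apply]; simp [hre, him]; ring
  have a3 : ‖s‖ ≤ ‖s+1‖ := by
    rw [← sq_le_sq₀ (norm_nonneg _) (norm_nonneg _), a1, a2]; nlinarith
  have a4 : (1 + t^2)/4 ≤ ‖s‖ * ‖s+1‖ := by
    nlinarith [norm_nonneg s]
  calc 1/(‖s‖ * ‖s+1‖) ≤ 1/((1 + t^2)/4) := by gcongr
    _ = _ := by field_simp

lemma kern_cont {κ : ℝ} (hκ : 1/2 ≤ κ) :
    Continuous (fun t : ℝ => (1:ℂ)/(κ + t * I) - 1/((κ + t * I) + 1)) := by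
  refine Continuous.sub ?_ ?_
  · refine continuous_const.div (by fun_prop) (fun t h => ?_)
    have := congrArg Complex.re h
    simp at this; linarith
  · refine continuous_const.div (by fun_prop) (fun t h => ?_)
    have := congrArg Complex.re h
    simp at this; linarith

lemma kern_int {κ : ℝ} (hκ : 1/2 ≤ κ) :
    Integrable (fun t : ℝ => (1:ℂ)/(κ + t * I) - 1/((κ + t * I) + 1)) :=
  Integrable.mono' (integrable_inv_one_add_sq.const_mul 4) (kern_cont hκ).aestronglyMeasurable
    (Eventually.of_forall fun _ => kern_norm hκ)

lemma cesK_inv {κ : ℝ} (hκ : 1/2 ≤ κ) {u : ℝ} (hu : 0 < u) :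
    (1 / (2 * Real.pi) : ℂ) * ∫ t : ℝ, (u:ℂ) ^ (-(κ + t * I)) * ((1:ℂ)/(κ + t * I) - 1/((κ + t * I) + 1))
      = ((max 0 (1 - u) : ℝ) : ℂ) := by
  have hm : ∀ t : ℝ, mellin cesK (κ + t * I) = (1:ℂ)/(κ + t * I) - 1/((κ + t * I) + 1) := fun t =>
    (cesK_mellin (by simp; linarith)).2
  have h := mellinInv_mellin_eq κ cesK hu (cesK_mellin (by simp; linarith)).1 ?_ ?_
  · rw [cesK_eq hu] at h
    rw [← h, mellinInv]
    simp only [hm, smul_eq_mul, Complex.real_smul]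
    push_cast
    rfl
  · unfold VerticalIntegrable
    simp only [hm]
    exact kern_int hκ
  · have : ContinuousAt (fun u : ℝ => ((max 0 (1 - u) : ℝ) : ℂ)) u := by fun_prop
    refine this.congr ?_
    filter_upwards [lt_mem_nhds hu] with v hv
    exact (cesK_eq hv).symm

lemma perron {a : ℕ → ℂ} {κ X : ℝ} (hκ : 1/2 ≤ κ) (hX : 0 < X) (ha0 : a 0 = 0)
    (hs : LSeriesSummable a κ) :
    ∑ n ∈ Finset.range (⌊X⌋₊ + 1), a n * ((1 - n / X : ℝ) : ℂ) =
      (1 / (2 * Real.pi) : ℂ) * ∫ t : ℝ, LSeries a (κ + t * I) * ((X:ℂ) ^ ((κ:ℂ) + t * I) *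
        ((1:ℂ)/(κ + t * I) - 1/((κ + t * I) + 1))) := by
  have hXc : (X:ℂ) ≠ 0 := by exact_mod_cast hX.ne'
  set M : ℝ → ℂ := fun t => (1:ℂ)/(κ + t * I) - 1/((κ + t * I) + 1) with hM
  set F : ℕ → ℝ → ℂ := fun n t => LSeries.term a (κ + t * I) n * ((X:ℂ) ^ ((κ:ℂ) + t * I) * M t) with hF
  have hnX : ∀ t : ℝ, ‖(X:ℂ) ^ ((κ:ℂ) + t * I)‖ = X ^ κ := by
    intro t; rw [Complex.norm_cpow_eq_rpow_re_of_pos hX]; simp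
  have hnt : ∀ (n : ℕ) (t : ℝ), ‖LSeries.term a (κ + t * I) n‖ = ‖LSeries.term a κ n‖ := by
    intro n t
    rw [LSeries.norm_term_eq, LSeries.norm_term_eq]; simp
  have hnF : ∀ n t, ‖F n t‖ = ‖LSeries.term a κ n‖ * X ^ κ * ‖M t‖ := by
    intro n t; simp only [hF]; rw [norm_mul, norm_mul, hnX, hnt]; ring
  have hFc : ∀ n, Continuous (F n) := by
    intro n
    have c1 : Continuous (fun t : ℝ => (X:ℂ) ^ ((κ:ℂ) + t * I)) :=
      Continuous.const_cpow (by fun_prop) (Or.inl hXc)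
    refine Continuous.mul ?_ (c1.mul (kern_cont hκ))
    rcases eq_or_ne n 0 with rfl | hn
    · simpa using continuous_const
    · simp only [LSeries.term_of_ne_zero hn]
      have hnc : (n:ℂ) ≠ 0 := by exact_mod_cast hn
      refine continuous_const.div (Continuous.const_cpow (by fun_prop) (Or.inl hnc)) (fun t h => ?_)
      rw [Complex.cpow_eq_zero_iff] at h
      exact hnc h.1
  have hFi : ∀ n, Integrable (F n) := by
    intro n
    refine Integrable.mono' ((kern_int hκ).norm.const_mul (‖LSeries.term a κ n‖ * X ^ κ))
      (hFc n).aestronglyMeasurable (Eventually.of_forall fun t => (hnF n t).le)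
  have hFs : Summable (fun n => ∫ t, ‖F n t‖) := by
    simp only [hnF]
    simp only [integral_const_mul]
    exact (hs.norm.mul_right _).mul_right _
  have hInt0 := integral_tsum_of_summable_integral_norm hFi hFs
  have e1 : ∀ t : ℝ, ∑' n, F n t = LSeries a (κ + t * I) * ((X:ℂ) ^ ((κ:ℂ) + t * I) * M t) := by
    intro t
    simp only [hF]
    rw [tsum_mul_right]; rfl
  have e2 : ∀ n : ℕ, (1 / (2 * Real.pi) : ℂ) * ∫ t, F n t = a n * ((max 0 (1 - n / X) : ℝ) : ℂ) := by
    intro n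
    rcases eq_or_ne n 0 with rfl | hn
    · simp [hF, ha0]
    have hnp : (0:ℝ) < n := by positivity
    rw [← cesK_inv hκ (div_pos hnp hX), mul_left_comm (a n), ← integral_const_mul (a n)]
    congr 1
    refine integral_congr_ae (Eventually.of_forall fun t => ?_)
    simp only [hF, hM]
    rw [LSeries.term_of_ne_zero hn, Complex.cpow_neg]
    rw [Complex.ofReal_div, Complex.div_cpow_ofReal_nonneg hnp.le hX.le, inv_div, Complex.ofReal_natCast]
    ring
  have e3 : ∫ t : ℝ, LSeries a (κ + t * I) * ((X:ℂ) ^ ((κ:ℂ) + t * I) * M t) = ∫ t, ∑' n, F n t :=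
    integral_congr_ae (Eventually.of_forall fun t => (e1 t).symm)
  rw [e3, ← hInt0, ← tsum_mul_left, tsum_congr e2, tsum_eq_sum (s := Finset.range (⌊X⌋₊ + 1))]
  · refine Finset.sum_congr rfl fun n hn => ?_
    rw [max_eq_right]
    have : n ≤ ⌊X⌋₊ := by simpa [Nat.lt_succ_iff] using hn
    have : (n:ℝ) ≤ X := (Nat.le_floor_iff hX.le).mp this
    rw [sub_nonneg, div_le_one hX]; exact this
  · intro n hn
    have : ⌊X⌋₊ + 1 ≤ n := by simpa using hn
    have : X < n := (Nat.lt_floor_add_one X).trans_le (by exact_mod_cast this)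
    rw [max_eq_left]
    · simp
    · rw [sub_nonpos, le_div_iff₀ hX]; linarith

end

section

open Complex Set MeasureTheory Filter Topology

lemma arctan_le_self' {x : ℝ} (hx : 0 < x) : Real.arctan x ≤ x := by
  have := Real.lt_tan (Real.arctan_pos.mpr hx) (Real.arctan_lt_pi_div_two x)
  rw [Real.tan_arctan] at this; exact this.le

lemma contour_bound {G : ℂ → ℂ} {σ κ T X B A : ℝ} (hσ : 1/2 ≤ σ) (hσκ : σ ≤ κ) (hκ2 : κ ≤ σ + 2) (hT : 1 ≤ T)
    (hX : 1 ≤ X) (hd : ∀ s : ℂ, σ ≤ s.re → s.re ≤ κ → |s.im| ≤ T → DifferentiableAt ℂ G s)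
    (hB : ∀ s : ℂ, σ ≤ s.re → s.re ≤ κ → |s.im| ≤ T → ‖G s‖ ≤ B)
    (hA : ∀ t : ℝ, ‖G (κ + t * I)‖ ≤ A) (hc : Continuous (fun t : ℝ => G (κ + t * I))) :
    ‖∫ t : ℝ, G (κ + t * I) * ((X:ℂ) ^ ((κ:ℂ) + t * I) * ((1:ℂ)/(κ + t * I) - 1/((κ + t * I) + 1)))‖
      ≤ 16 * B * X ^ σ + 16 * B * X ^ κ / T + 8 * A * X ^ κ / T := by
  have hX0 : 0 < X := by linarith
  have hXc : (X:ℂ) ≠ 0 := by exact_mod_cast hX0.ne'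
  have hκ : 1/2 ≤ κ := by linarith
  have hA0 : 0 ≤ A := (norm_nonneg _).trans (hA 0)
  have hB0 : 0 ≤ B := (norm_nonneg _).trans (hB κ (by simpa using hσκ) (by simp) (by simp; linarith))
  set g : ℂ → ℂ := fun s => G s * ((X:ℂ) ^ s * ((1:ℂ)/s - 1/(s + 1))) with hg
  have hgn : ∀ x t C : ℝ, 1/2 ≤ x → ‖G (x + t * I)‖ ≤ C → ‖g (x + t * I)‖ ≤ C * X ^ x * 4 * (1 + t^2)⁻¹ := by
    intro x t C hx hC
    simp only [hg]
    rw [norm_mul, norm_mul, Complex.norm_cpow_eq_rpow_re_of_pos hX0]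
    have h1 := kern_norm (t := t) hx
    have h2 : ((x:ℂ) + t * I).re = x := by simp
    rw [h2]
    have hC0 : 0 ≤ C := (norm_nonneg _).trans hC
    calc ‖G (x + t * I)‖ * (X ^ x * ‖(1:ℂ)/(x + t * I) - 1/((x + t * I) + 1)‖) ≤ C * (X ^ x * (4 * (1 + t^2)⁻¹)) := by
          gcongr
      _ = _ := by ring
  have hgc : Continuous (fun t : ℝ => g (κ + t * I)) := by
    have c1 : Continuous (fun t : ℝ => (X:ℂ) ^ ((κ:ℂ) + t * I)) :=
      Continuous.const_cpow (by fun_prop) (Or.inl hXc)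
    exact hc.mul (c1.mul (kern_cont hκ))
  have hmaj : Integrable (fun t : ℝ => A * X ^ κ * 4 * (1 + t^2)⁻¹) := integrable_inv_one_add_sq.const_mul _
  have hgi : Integrable (fun t : ℝ => g (κ + t * I)) :=
    Integrable.mono' hmaj hgc.aestronglyMeasurable (Eventually.of_forall fun t => hgn κ t A hκ (hA t))
  have hdiff : DifferentiableOn ℂ g (uIcc σ κ ×ℂ uIcc (-T) T) := by
    intro s hs
    rw [mem_reProdIm, uIcc_of_le hσκ, uIcc_of_le (by linarith : -T ≤ T)] at hs
    obtain ⟨⟨h1, h2⟩, h3, h4⟩ := hs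
    have hs0 : s ≠ 0 := by rintro rfl; simp at h1; linarith
    have hs1 : s + 1 ≠ 0 := by
      intro h
      have := congrArg Complex.re h
      simp at this; linarith
    have d1 := hd s h1 h2 (abs_le.mpr ⟨h3, h4⟩)
    have d2 : DifferentiableAt ℂ (fun s : ℂ => (X:ℂ) ^ s) s := by
      refine DifferentiableAt.const_cpow (by fun_prop) (Or.inl hXc)
    have d3 : DifferentiableAt ℂ (fun s : ℂ => (1:ℂ)/s - 1/(s + 1)) s := by
      refine DifferentiableAt.sub ?_ ?_
      · exact (differentiableAt_const _).div (by fun_prop) hs0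
      · exact (differentiableAt_const _).div (by fun_prop) hs1
    exact (d1.mul (d2.mul d3)).differentiableWithinAt
  have hrect := Complex.integral_boundary_rect_eq_zero_of_differentiableOn g ⟨σ, -T⟩ ⟨κ, T⟩ hdiff
  simp only [smul_eq_mul] at hrect
  -- horizontal bounds
  have hhor : ∀ t : ℝ, |t| = T → ‖∫ x in σ..κ, g (x + (t:ℂ) * I)‖ ≤ 8 * B * X ^ κ / T := by
    intro t ht
    have := intervalIntegral.norm_integral_le_of_norm_le_const (a := σ) (b := κ) (f := fun x : ℝ => g (x + (t:ℂ) * I))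
      (C := B * X ^ κ * 4 / T) ?_
    · refine this.trans ?_
      rw [abs_of_nonneg (by linarith)]
      calc B * X ^ κ * 4 / T * (κ - σ) ≤ B * X ^ κ * 4 / T * 2 := by gcongr; linarith
        _ = _ := by ring
    · intro x hx
      rw [uIoc_of_le hσκ] at hx
      refine (hgn x t B (by linarith [hx.1]) (hB _ (by simpa using hx.1.le) (by simpa using hx.2) (by simp [ht]))).trans ?_
      have e1 : (1 + t^2)⁻¹ ≤ 1/T := by
        rw [← sq_abs, ht, inv_eq_one_div]
        gcongr
        nlinarith
      calc B * X ^ x * 4 * (1 + t^2)⁻¹ ≤ B * X ^ κ * 4 * (1/T) := by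
            gcongr
            exact hx.2
        _ = _ := by ring
  have hleft : ‖∫ t in (-T)..T, g (σ + (t:ℂ) * I)‖ ≤ 16 * B * X ^ σ := by
    have := intervalIntegral.norm_integral_le_of_norm_le (μ := volume) (by linarith : -T ≤ T) (f := fun t : ℝ => g (σ + (t:ℂ) * I))
      (g := fun t : ℝ => B * X ^ σ * 4 * (1 + t^2)⁻¹) (Eventually.of_forall fun t ht => ?_)
      (integrable_inv_one_add_sq.const_mul _).intervalIntegrable
    · refine this.trans ?_
      rw [intervalIntegral.integral_const_mul, integral_inv_one_add_sq]
      have h1 : Real.arctan T - Real.arctan (-T) ≤ 4 := by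
        have := Real.arctan_lt_pi_div_two T
        have := Real.neg_pi_div_two_lt_arctan (-T)
        linarith [Real.pi_lt_four]
      calc B * X ^ σ * 4 * (Real.arctan T - Real.arctan (-T)) ≤ B * X ^ σ * 4 * 4 := by gcongr
        _ = _ := by ring
    · exact hgn σ t B hσ (hB _ (by simp) (by simpa using hσκ) (by simp; exact abs_le.mpr ⟨ht.1.le, ht.2⟩))
  have hTi : 0 < T⁻¹ := by positivity
  have htp : ‖∫ t in Ioi T, g (κ + (t:ℂ) * I)‖ ≤ 4 * A * X ^ κ / T := by
    refine (norm_integral_le_of_norm_le (hmaj.integrableOn) (Eventually.of_forall fun t => hgn κ t A hκ (hA t))).trans ?_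
    rw [integral_const_mul, integral_Ioi_inv_one_add_sq, ← Real.arctan_inv_of_pos (by linarith)]
    calc A * X ^ κ * 4 * Real.arctan T⁻¹ ≤ A * X ^ κ * 4 * T⁻¹ := by gcongr; exact arctan_le_self' hTi
      _ = _ := by ring
  have htm : ‖∫ t in Iic (-T), g (κ + (t:ℂ) * I)‖ ≤ 4 * A * X ^ κ / T := by
    refine (norm_integral_le_of_norm_le (hmaj.integrableOn) (Eventually.of_forall fun t => hgn κ t A hκ (hA t))).trans ?_
    rw [integral_const_mul, integral_Iic_inv_one_add_sq, Real.arctan_neg, neg_add_eq_sub, ← Real.arctan_inv_of_pos (by linarith)]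
    calc A * X ^ κ * 4 * Real.arctan T⁻¹ ≤ A * X ^ κ * 4 * T⁻¹ := by gcongr; exact arctan_le_self' hTi
      _ = _ := by ring
  have hsplit : ∫ t : ℝ, g (κ + t * I) = (∫ t in Iic (-T), g (κ + (t:ℂ) * I)) +
      ((∫ t in (-T)..T, g (κ + (t:ℂ) * I)) + ∫ t in Ioi T, g (κ + (t:ℂ) * I)) := by
    rw [intervalIntegral.integral_interval_add_Ioi hgi.integrableOn hgi.integrableOn,
      intervalIntegral.integral_Iic_add_Ioi hgi.integrableOn hgi.integrableOn]
  have hmid : ‖∫ t in (-T)..T, g (κ + (t:ℂ) * I)‖ ≤ 16 * B * X ^ σ + 16 * B * X ^ κ / T := by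
    set P := ∫ t in (-T)..T, g (κ + (t:ℂ) * I)
    set Q := ∫ t in (-T)..T, g (σ + (t:ℂ) * I)
    have h1 := hhor (-T) (by rw [abs_neg, abs_of_pos (by linarith)])
    have h2 := hhor T (abs_of_pos (by linarith))
    set R1 := ∫ x in σ..κ, g (x + ((-T : ℝ):ℂ) * I)
    set R2 := ∫ x in σ..κ, g (x + (T:ℂ) * I)
    have e : I * P = I * Q - R1 + R2 := by linear_combination hrect
    have : ‖P‖ = ‖I * P‖ := by rw [norm_mul, Complex.norm_I, one_mul]
    rw [this, e]
    calc _ ≤ ‖I * Q - R1‖ + ‖R2‖ := norm_add_le _ _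
      _ ≤ ‖I * Q‖ + ‖R1‖ + ‖R2‖ := by gcongr; exact norm_sub_le _ _
      _ = ‖Q‖ + ‖R1‖ + ‖R2‖ := by rw [norm_mul, Complex.norm_I, one_mul]
      _ ≤ 16 * B * X ^ σ + 8 * B * X ^ κ / T + 8 * B * X ^ κ / T := by gcongr
      _ = _ := by ring
  change ‖∫ t : ℝ, g (κ + t * I)‖ ≤ _
  rw [hsplit]
  calc _ ≤ _ := norm_add_le _ _
    _ ≤ 4 * A * X ^ κ / T + (16 * B * X ^ σ + 16 * B * X ^ κ / T + 4 * A * X ^ κ / T) := by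
        refine add_le_add htm ((norm_add_le _ _).trans (add_le_add hmid htp))
    _ = _ := by ring

end

section

open Complex Set MeasureTheory Filter Topology
local notation "Λ" => ArithmeticFunction.vonMangoldt

lemma twist_norm_le {D : ℤ} [NeZero D] {κ : ℝ} (hκ : 1 < κ) (t : ℝ) :
    ‖LSeries ((fun n : ℕ => chiD D n) * (fun n => (Λ n : ℂ))) (κ + t * I)‖ ≤
      (LSeries (fun n => (Λ n : ℂ)) κ).re := by
  have s1 := ArithmeticFunction.LSeriesSummable_vonMangoldt (s := (κ:ℂ)) (by simpa using hκ)
  have e1 := (Complex.hasSum_re s1.hasSum)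
  refine tsum_of_norm_bounded e1 ?_
  intro n
  rcases eq_or_ne n 0 with rfl | hn
  · simp
  rw [LSeries.norm_term_eq, if_neg hn, LSeries.term_of_ne_zero hn, Pi.mul_apply, norm_mul]
  have hnp : (0:ℝ) < n := by positivity
  have t1 : (Λ n : ℂ) / (n:ℂ) ^ (κ : ℂ) = ((Λ n / (n:ℝ)^κ : ℝ) : ℂ) := by
    rw [Complex.ofReal_div, Complex.ofReal_cpow hnp.le]; simp
  rw [t1, Complex.ofReal_re]
  have h1 := (chiD D).norm_le_one (n : ZMod _)
  have h2 : ‖(Λ n : ℂ)‖ = Λ n := by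
    rw [Complex.norm_real, Real.norm_of_nonneg ArithmeticFunction.vonMangoldt_nonneg]
  have h3 : ((κ:ℂ) + t * I).re = κ := by simp
  rw [h2, h3]
  have h4 : 0 ≤ Λ n := ArithmeticFunction.vonMangoldt_nonneg
  gcongr
  exact mul_le_of_le_one_left h4 h1

lemma sw_smooth (k : ℕ) : ∃ c > (0:ℝ), ∃ C > (0:ℝ), ∃ X0 ≥ (1:ℝ), ∀ (D : ℤ) [NeZero D], SqF D →
    ∀ X : ℝ, X0 ≤ X → (D.natAbs:ℝ) ≤ (Real.log X)^k →
    |∑ n ∈ Finset.range (⌊X⌋₊ + 1), Λ n * jac D n * (1 - n / X)| ≤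
      C * X * Real.exp (-c * Real.sqrt (Real.log X)) := by
  obtain ⟨b, hb, hb1, B, hB, ℓ0, hℓ0, H⟩ := sw_logDeriv (2*k)
  refine ⟨b/2, by positivity, (112*B+96048) * (8/b^2), by positivity, Real.exp (ℓ0^2), Real.one_le_exp (by positivity), ?_⟩
  intro D _ hD X hX hDX
  have hns := hD.not_isSquare
  have hXpos : 0 < X := (Real.exp_pos _).trans_le hX
  have hX1 : 1 ≤ X := (Real.one_le_exp (by positivity)).trans hX
  have hlog : ℓ0^2 ≤ Real.log X := (Real.le_log_iff_exp_le hXpos).mpr hX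
  set ℓ := Real.sqrt (Real.log X) with hℓdef
  have hℓsq : ℓ^2 = Real.log X := Real.sq_sqrt (by nlinarith)
  have hℓ : ℓ0 ≤ ℓ := Real.le_sqrt_of_sq_le hlog
  have hℓ32 : 32 ≤ ℓ := hℓ0.trans hℓ
  have hℓp : 0 < ℓ := by linarith
  have hDℓ : (D.natAbs:ℝ) ≤ ℓ^(2*k) := by rw [pow_mul, hℓsq]; exact hDX
  have HH := H D hD ℓ hℓ hDℓ
  set κ := 1 + 1/ℓ^2 with hκdef
  have hκ1 : 1 < κ := by rw [hκdef]; have : 0 < 1/ℓ^2 := by positivity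
                         linarith
  have hκ2 : κ ≤ 1 + 1/ℓ := by
    rw [hκdef]
    have : 1/ℓ^2 ≤ 1/ℓ := by gcongr; nlinarith
    linarith
  have hbℓ : b/ℓ ≤ 1/32 := by rw [div_le_div_iff₀ hℓp (by norm_num)]; nlinarith
  have h1ℓ : 1/ℓ ≤ 1/32 := by gcongr
  have hbℓ0 : 0 < b/ℓ := by positivity
  set a : ℕ → ℂ := (fun n : ℕ => chiD D n) * (fun n => (Λ n : ℂ)) with ha
  have hP := perron (a := a) (κ := κ) (X := X) (by linarith) hXpos (by simp [ha])
    (DirichletCharacter.LSeriesSummable_twist_vonMangoldt _ (by simpa using hκ1))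
  have hLS : ∀ t : ℝ, LSeries a (κ + t * I) = - logDeriv (LD D) (κ + t * I) := fun t =>
    LFun_logDeriv_eq _ (by simpa using hκ1)
  simp only [hLS] at hP
  have hsum : ∑ n ∈ Finset.range (⌊X⌋₊ + 1), a n * ((1 - n / X : ℝ) : ℂ) =
      ((∑ n ∈ Finset.range (⌊X⌋₊ + 1), Λ n * jac D n * (1 - n / X) : ℝ) : ℂ) := by
    push_cast
    refine Finset.sum_congr rfl fun n _ => ?_
    simp only [ha, Pi.mul_apply, chiD_apply]; ring
  rw [hsum] at hP
  have hdiff : ∀ s : ℂ, LD D s ≠ 0 → DifferentiableAt ℂ (fun s => - logDeriv (LD D) s) s := by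
    intro s hs
    have h1 : DifferentiableAt ℂ (deriv (LD D)) s := ((LD_diff hns).analyticAt s).deriv.differentiableAt
    exact (h1.div (LD_diff hns s) hs).neg
  have hT1 : 2 ≤ Real.exp ℓ := by have := Real.add_one_le_exp ℓ; linarith
  have hcb := contour_bound (G := fun s => - logDeriv (LD D) s) (σ := 1 - b/ℓ) (κ := κ) (T := Real.exp ℓ - 1) (X := X)
    (B := B * ℓ) (A := 2001 * ℓ^2) (by linarith) (by linarith) (by linarith) (by linarith) hX1
    (fun s h1 h2 h3 => hdiff s (HH s h1 (h2.trans hκ2) h3).1)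
    (fun s h1 h2 h3 => by rw [norm_neg]; exact (HH s h1 (h2.trans hκ2) h3).2)
    (fun t => by
      rw [← hLS t]
      refine (twist_norm_le hκ1 t).trans ?_
      have hz := zeta_logDeriv_le (ℓ := ℓ^2) (t := 0) (a := 1) (by nlinarith) (by simp; positivity) one_pos le_rfl
      have e1 : (⟨1 + 1/ℓ^2, 0⟩ : ℂ) = (κ:ℂ) := rfl
      have e2 : (1 / (⟨1/ℓ^2, 0⟩ : ℂ)).re = ℓ^2 := by
        have : (⟨1/ℓ^2, 0⟩ : ℂ) = ((1/ℓ^2 : ℝ) : ℂ) := rfl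
        rw [this, ← ofReal_one, ← ofReal_div, ofReal_re]; field_simp
      rw [e1, e2] at hz
      linarith)
    (by
      rw [continuous_iff_continuousAt]
      intro t
      have h := (hdiff (κ + t * I) (LD_ne_zero_ge_one hns (by simpa using hκ1.le))).continuousAt
      exact ContinuousAt.comp (f := fun t : ℝ => (κ:ℂ) + t * I) h (by fun_prop))
  have hXκ : X ^ κ ≤ 3 * X := by
    rw [hκdef, Real.rpow_add hXpos, Real.rpow_one, Real.rpow_def_of_pos hXpos, ← hℓsq, mul_one_div_cancel (by positivity)]
    nlinarith [Real.exp_one_lt_d9]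
  have hXσ : X ^ (1 - b/ℓ) = X * Real.exp (-(b * ℓ)) := by
    rw [sub_eq_add_neg, Real.rpow_add hXpos, Real.rpow_one, Real.rpow_def_of_pos hXpos, ← hℓsq]
    congr 2; field_simp
  have hTinv : 1/(Real.exp ℓ - 1) ≤ 2 * Real.exp (-(b*ℓ)) := by
    have h1 : Real.exp (-ℓ) ≤ Real.exp (-(b*ℓ)) := by gcongr; nlinarith
    have h2 : 1/(Real.exp ℓ - 1) ≤ 1/(Real.exp ℓ/2) := by gcongr; linarith
    have h3 : 1/(Real.exp ℓ/2) = 2 * Real.exp (-ℓ) := by rw [Real.exp_neg]; field_simp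
    linarith
  set Y := Real.exp (-(b*ℓ)) with hY
  have hY0 : 0 < Y := Real.exp_pos _
  have hT0 : 0 < Real.exp ℓ - 1 := by linarith
  have hN := congrArg norm hP
  rw [norm_mul, Complex.norm_real, Real.norm_eq_abs] at hN
  rw [hN]
  have hpi : ‖(1 / (2 * Real.pi) : ℂ)‖ ≤ 1 := by
    have : (1 / (2 * Real.pi) : ℂ) = ((1 / (2 * Real.pi) : ℝ) : ℂ) := by push_cast; rfl
    rw [this, Complex.norm_real, Real.norm_of_nonneg (by positivity), div_le_one (by positivity)]
    linarith [Real.pi_gt_three]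
  have hexp : ℓ^2 * Y ≤ (8/b^2) * Real.exp (-(b/2) * ℓ) := by
    have h := Real.pow_div_factorial_le_exp (b/2*ℓ) (by positivity) 2
    have e : Y = Real.exp (-(b/2) * ℓ) * Real.exp (-(b/2) * ℓ) := by rw [hY, ← Real.exp_add]; congr 1; ring
    have e2 : Real.exp (b/2*ℓ) * Real.exp (-(b/2) * ℓ) = 1 := by rw [← Real.exp_add]; simp
    rw [e, ← mul_assoc]
    have h3 : ℓ^2 ≤ 8/b^2 * Real.exp (b/2*ℓ) := by
      rw [div_mul_eq_mul_div, le_div_iff₀ (by positivity)]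
      norm_num [Nat.factorial] at h
      nlinarith
    calc ℓ^2 * Real.exp (-(b/2) * ℓ) * Real.exp (-(b/2) * ℓ) ≤ (8/b^2 * Real.exp (b/2*ℓ)) * Real.exp (-(b/2) * ℓ) * Real.exp (-(b/2) * ℓ) := by gcongr
      _ = 8/b^2 * (Real.exp (b/2*ℓ) * Real.exp (-(b/2) * ℓ)) * Real.exp (-(b/2) * ℓ) := by ring
      _ = _ := by rw [e2, mul_one]
  calc _ ≤ 1 * (16 * (B * ℓ) * X ^ (1 - b/ℓ) + 16 * (B * ℓ) * X ^ κ / (Real.exp ℓ - 1) + 8 * (2001 * ℓ^2) * X ^ κ / (Real.exp ℓ - 1)) := by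
        gcongr
    _ = 16 * (B * ℓ) * X ^ (1 - b/ℓ) + (16 * (B * ℓ) + 8 * (2001 * ℓ^2)) * X ^ κ * (1 / (Real.exp ℓ - 1)) := by ring
    _ ≤ 16 * (B * ℓ) * (X * Y) + (16 * (B * ℓ) + 8 * (2001 * ℓ^2)) * (3 * X) * (2 * Y) := by
        rw [hXσ]; gcongr
    _ = X * Y * (112 * B * ℓ + 96048 * ℓ^2) := by ring
    _ ≤ X * Y * (112 * B * ℓ^2 + 96048 * ℓ^2) := by gcongr; nlinarith
    _ = (112*B + 96048) * X * (ℓ^2 * Y) := by ring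
    _ ≤ (112*B + 96048) * X * ((8/b^2) * Real.exp (-(b/2) * ℓ)) := by gcongr
    _ = _ := by ring

end

section

local notation "Λ" => ArithmeticFunction.vonMangoldt

lemma poly_exp {a ℓ : ℝ} (ha : 0 < a) (hℓ : 0 ≤ ℓ) :
    ℓ^2 * Real.exp (-a * ℓ) ≤ (8/a^2) * Real.exp (-(a/2) * ℓ) := by
  have h := Real.pow_div_factorial_le_exp (a/2*ℓ) (by positivity) 2
  have e : Real.exp (-a * ℓ) = Real.exp (-(a/2) * ℓ) * Real.exp (-(a/2) * ℓ) := by rw [← Real.exp_add]; congr 1; ring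
  have e2 : Real.exp (a/2*ℓ) * Real.exp (-(a/2) * ℓ) = 1 := by rw [← Real.exp_add]; simp
  rw [e, ← mul_assoc]
  have h3 : ℓ^2 ≤ 8/a^2 * Real.exp (a/2*ℓ) := by
    rw [div_mul_eq_mul_div, le_div_iff₀ (by positivity)]
    norm_num [Nat.factorial] at h
    nlinarith
  calc ℓ^2 * Real.exp (-(a/2) * ℓ) * Real.exp (-(a/2) * ℓ) ≤ (8/a^2 * Real.exp (a/2*ℓ)) * Real.exp (-(a/2) * ℓ) * Real.exp (-(a/2) * ℓ) := by gcongr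
    _ = 8/a^2 * (Real.exp (a/2*ℓ) * Real.exp (-(a/2) * ℓ)) * Real.exp (-(a/2) * ℓ) := by ring
    _ = _ := by rw [e2, mul_one]

lemma abs_jac_le (D : ℤ) (n : ℕ) : |(jac D n : ℝ)| ≤ 1 := by
  rcases jac_tri D n with h | h | h <;> simp [h]

/-- Abstract desmoothing. -/
lemma desmooth {a : ℕ → ℝ} (ha : ∀ n, |a n| ≤ Λ n) {X h Q : ℝ} (hX : 2 ≤ X) (hh : 0 < h) (hhX : h ≤ X)
    (h1 : |∑ n ∈ Finset.range (⌊X⌋₊ + 1), a n * (1 - n / X)| ≤ Q)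
    (h2 : |∑ n ∈ Finset.range (⌊X + h⌋₊ + 1), a n * (1 - n / (X + h))| ≤ Q) :
    |∑ n ∈ Finset.range (⌊X⌋₊ + 1), a n| ≤ 3 * X * Q / h + (h + 1) * (2 * Real.log X) := by
  have hX0 : 0 < X := by linarith
  have hXh0 : 0 < X + h := by linarith
  have hQ : 0 ≤ Q := (abs_nonneg _).trans h1
  set S := ∑ n ∈ Finset.range (⌊X⌋₊ + 1), a n with hS
  set P1 := ∑ n ∈ Finset.range (⌊X⌋₊ + 1), a n * (1 - n / X) with hP1
  set P2 := ∑ n ∈ Finset.range (⌊X + h⌋₊ + 1), a n * (1 - n / (X + h)) with hP2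
  have hfl : ⌊X⌋₊ + 1 ≤ ⌊X + h⌋₊ + 1 := by
    have : ⌊X⌋₊ ≤ ⌊X + h⌋₊ := Nat.floor_le_floor (by linarith)
    omega
  set R := ∑ n ∈ Finset.Ico (⌊X⌋₊ + 1) (⌊X + h⌋₊ + 1), a n * (X + h - n) with hR
  have e1 : X * P1 = ∑ n ∈ Finset.range (⌊X⌋₊ + 1), a n * (X - n) := by
    rw [hP1, Finset.mul_sum]; refine Finset.sum_congr rfl fun n _ => ?_; field_simp
  have e2 : (X + h) * P2 = ∑ n ∈ Finset.range (⌊X + h⌋₊ + 1), a n * (X + h - n) := by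
    rw [hP2, Finset.mul_sum]; refine Finset.sum_congr rfl fun n _ => ?_; field_simp
  have key : h * S = (X + h) * P2 - X * P1 - R := by
    rw [hR, Finset.sum_Ico_eq_sub _ hfl, e1, e2, hS, Finset.mul_sum]
    have : ∑ n ∈ Finset.range (⌊X⌋₊ + 1), a n * (X + h - n) = ∑ n ∈ Finset.range (⌊X⌋₊ + 1), h * a n +
      ∑ n ∈ Finset.range (⌊X⌋₊ + 1), a n * (X - n) := by
      rw [← Finset.sum_add_distrib]; refine Finset.sum_congr rfl fun n _ => ?_; ring
    linarith
  have hlog : Real.log (X + h) ≤ 2 * Real.log X := by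
    have : Real.log (X + h) ≤ Real.log (X^2) := Real.log_le_log hXh0 (by nlinarith)
    rw [Real.log_pow] at this; exact_mod_cast this
  have hRb : |R| ≤ h * ((h + 1) * (2 * Real.log X)) := by
    have hlX : 0 ≤ Real.log X := Real.log_nonneg (by linarith)
    calc |R| ≤ ∑ n ∈ Finset.Ico (⌊X⌋₊ + 1) (⌊X + h⌋₊ + 1), |a n * (X + h - n)| := Finset.abs_sum_le_sum_abs _ _
      _ ≤ ∑ n ∈ Finset.Ico (⌊X⌋₊ + 1) (⌊X + h⌋₊ + 1), (2 * Real.log X) * h := by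
          refine Finset.sum_le_sum fun n hn => ?_
          rw [Finset.mem_Ico] at hn
          have n1 : X < n := (Nat.lt_floor_add_one X).trans_le (by exact_mod_cast hn.1)
          have n2 : (n:ℝ) ≤ X + h := (Nat.le_floor_iff hXh0.le).mp (by omega)
          rw [abs_mul, abs_of_nonneg (by linarith : 0 ≤ X + h - n)]
          have l1 : |a n| ≤ 2 * Real.log X :=
            (ha n).trans (ArithmeticFunction.vonMangoldt_le_log.trans ((Real.log_le_log (by linarith) n2).trans hlog))
          gcongr
          linarith
      _ = ((⌊X + h⌋₊:ℝ) - ⌊X⌋₊) * ((2 * Real.log X) * h) := by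
          rw [Finset.sum_const, Nat.card_Ico, nsmul_eq_mul, Nat.cast_sub hfl]; push_cast; ring
      _ ≤ (h + 1) * ((2 * Real.log X) * h) := by
          gcongr
          have f1 := Nat.floor_le hXh0.le
          have f2 := Nat.lt_floor_add_one X
          linarith
      _ = _ := by ring
  have hhS : h * |S| ≤ 3 * X * Q + h * ((h + 1) * (2 * Real.log X)) := by
    have : h * |S| = |h * S| := by rw [abs_mul, abs_of_pos hh]
    rw [this, key]
    calc _ ≤ |(X + h) * P2 - X * P1| + |R| := abs_sub _ _
      _ ≤ |(X + h) * P2| + |X * P1| + |R| := by gcongr; exact abs_sub _ _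
      _ = (X + h) * |P2| + X * |P1| + |R| := by rw [abs_mul, abs_mul, abs_of_pos hX0, abs_of_pos hXh0]
      _ ≤ (2 * X) * Q + X * Q + h * ((h + 1) * (2 * Real.log X)) := by gcongr; linarith
      _ = _ := by ring
  have : |S| ≤ (3 * X * Q + h * ((h + 1) * (2 * Real.log X))) / h := by
    rw [le_div_iff₀ hh]; linarith
  refine this.trans (le_of_eq ?_)
  field_simp

lemma sw_psi (k : ℕ) : ∃ c > (0:ℝ), c ≤ 1 ∧ ∃ C > (0:ℝ), ∃ X0 ≥ (3:ℝ), ∀ (D : ℤ) [NeZero D], SqF D →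
    ∀ X : ℝ, X0 ≤ X → (D.natAbs:ℝ) ≤ (Real.log X)^k →
    |∑ n ∈ Finset.range (⌊X⌋₊ + 1), Λ n * jac D n| ≤
      C * X * Real.exp (-c * Real.sqrt (Real.log X)) := by
  obtain ⟨c0, hc0, C0, hC0, X0, hX0, H⟩ := sw_smooth k
  set c := min c0 1 with hc
  have hcp : 0 < c := by positivity
  have hc1 : c ≤ 1 := min_le_right _ _
  have hcc : c ≤ c0 := min_le_left _ _
  refine ⟨c/4, by positivity, by linarith, 6 * C0 + 4 * (8/(c/2)^2), by positivity, max X0 3, le_max_right _ _, ?_⟩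
  intro D _ hD X hX hDX
  have hX3 : 3 ≤ X := (le_max_right _ _).trans hX
  have hXX : X0 ≤ X := (le_max_left _ _).trans hX
  have hXp : 0 < X := by linarith
  have hlog1 : 1 ≤ Real.log X := by
    rw [Real.le_log_iff_exp_le hXp]; linarith [Real.exp_one_lt_d9]
  set ℓ := Real.sqrt (Real.log X) with hℓ
  have hℓsq : ℓ^2 = Real.log X := Real.sq_sqrt (by linarith)
  have hℓ1 : 1 ≤ ℓ := Real.one_le_sqrt.mpr hlog1
  set h := X * Real.exp (-(c/2) * ℓ) with hh
  have hhp : 0 < h := by positivity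
  have hexp1 : Real.exp (-(c/2) * ℓ) ≤ 1 := by rw [Real.exp_le_one_iff]; nlinarith
  have hhX : h ≤ X := by rw [hh]; nlinarith
  have hlogm : Real.log X ≤ Real.log (X + h) := Real.log_le_log hXp (by linarith)
  set Q := C0 * (2 * X) * Real.exp (-c * ℓ) with hQ
  have b1 := H D hD X hXX hDX
  have b2 := H D hD (X + h) (by linarith) (hDX.trans (by gcongr))
  have hd := desmooth (a := fun n => Λ n * jac D n) (X := X) (h := h) (Q := Q) (fun n => ?_) (by linarith) hhp hhX ?_ ?_
  · refine hd.trans ?_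
    have t1 : 3 * X * Q / h = 6 * C0 * X * Real.exp (-(c/2) * ℓ) := by
      have e : Real.exp (-c * ℓ) = Real.exp (-(c/2) * ℓ) * Real.exp (-(c/2) * ℓ) := by rw [← Real.exp_add]; congr 1; ring
      rw [hQ, hh, e]; field_simp; ring
    have t2 : 1 ≤ h := by
      have : X = Real.exp (ℓ^2) := by rw [hℓsq, Real.exp_log hXp]
      rw [hh]
      nth_rewrite 1 [this]
      rw [← Real.exp_add]
      apply Real.one_le_exp
      nlinarith
    have t3 : Real.exp (-(c/2) * ℓ) ≤ Real.exp (-(c/4) * ℓ) := by gcongr; linarith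
    have t4 := poly_exp (a := c/2) (ℓ := ℓ) (by positivity) (by linarith)
    rw [show c/2/2 = c/4 by ring] at t4
    rw [t1, ← hℓsq]
    calc 6 * C0 * X * Real.exp (-(c/2) * ℓ) + (h + 1) * (2 * ℓ^2)
        ≤ 6 * C0 * X * Real.exp (-(c/4) * ℓ) + (h + h) * (2 * ℓ^2) := by gcongr
      _ = 6 * C0 * X * Real.exp (-(c/4) * ℓ) + 4 * X * (ℓ^2 * Real.exp (-(c/2) * ℓ)) := by rw [hh]; ring
      _ ≤ 6 * C0 * X * Real.exp (-(c/4) * ℓ) + 4 * X * (8/(c/2)^2 * Real.exp (-(c/4) * ℓ)) := by gcongr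
      _ = _ := by ring
  · simp only [abs_mul]
    rw [abs_of_nonneg ArithmeticFunction.vonMangoldt_nonneg]
    exact mul_le_of_le_one_right ArithmeticFunction.vonMangoldt_nonneg (abs_jac_le D n)
  · refine b1.trans ?_
    rw [hQ]
    gcongr
    linarith
  · refine b2.trans ?_
    rw [hQ]
    have hs : ℓ ≤ Real.sqrt (Real.log (X + h)) := Real.sqrt_le_sqrt hlogm
    have : -c0 * Real.sqrt (Real.log (X + h)) ≤ -c * ℓ := by
      have : c * ℓ ≤ c0 * Real.sqrt (Real.log (X + h)) := by gcongr
      linarith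
    gcongr
    linarith

end

section

local notation "Λ" => ArithmeticFunction.vonMangoldt

lemma one_le_ell {X : ℝ} (hX : 3 ≤ X) : 1 ≤ Real.log X ∧ 1 ≤ √(Real.log X) := by
  have h : 1 ≤ Real.log X := by
    rw [Real.le_log_iff_exp_le (by linarith)]; linarith [Real.exp_one_lt_d9]
  exact ⟨h, Real.one_le_sqrt.mpr h⟩

lemma sqrt_le_exp {X : ℝ} (hX : 3 ≤ X) : √X ≤ X * Real.exp (-(1/2) * √(Real.log X)) := by
  obtain ⟨h1, h2⟩ := one_le_ell hX
  set ℓ := √(Real.log X) with hℓ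
  have hℓsq : ℓ^2 = Real.log X := Real.sq_sqrt (by linarith)
  have hX' : X = Real.exp (ℓ^2) := by rw [hℓsq, Real.exp_log (by linarith)]
  have e : √X = Real.exp (ℓ^2/2) := by
    rw [Real.exp_half, ← hX']
  have e3 : X * Real.exp (-(1/2) * ℓ) = Real.exp (ℓ^2 + -(1/2) * ℓ) := by rw [Real.exp_add, ← hX']
  rw [e, e3]
  apply Real.exp_le_exp.mpr
  nlinarith

/-- The summand of the twisted theta function. -/
noncomputable def thj (D : ℤ) (n : ℕ) : ℝ := if n.Prime then Real.log n * jac D n else 0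

lemma abs_thj_le (D : ℤ) (n : ℕ) : |thj D n| ≤ if n.Prime then Real.log n else 0 := by
  unfold thj
  split_ifs
  · rw [abs_mul, abs_of_nonneg (Real.log_natCast_nonneg n)]
    exact mul_le_of_le_one_right (Real.log_natCast_nonneg n) (abs_jac_le D n)
  · simp

lemma range_succ_sum_eq (f : ℕ → ℝ) (h0 : f 0 = 0) (N : ℕ) :
    ∑ n ∈ Finset.range (N+1), f n = ∑ n ∈ Finset.Ioc 0 N, f n := by
  symm
  apply Finset.sum_subset
  · intro i hi; simp at hi ⊢; omega
  · intro i hi h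
    simp at hi h
    have : i = 0 := by omega
    rw [this, h0]

lemma thj_trivial (D : ℤ) {u : ℝ} (hu : 0 ≤ u) :
    |∑ n ∈ Finset.range (⌊u⌋₊ + 1), thj D n| ≤ 2 * u := by
  refine (Finset.abs_sum_le_sum_abs _ _).trans ?_
  refine (Finset.sum_le_sum fun n _ => abs_thj_le D n).trans ?_
  rw [range_succ_sum_eq _ (by simp), ← Finset.sum_filter]
  have := Chebyshev.theta_le_log4_mul_x hu
  have h4 : Real.log 4 ≤ 2 := by
    rw [show (4:ℝ) = 2^2 by norm_num, Real.log_pow]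
    have := Real.log_two_lt_d9
    push_cast; linarith
  unfold Chebyshev.theta at this
  refine this.trans ?_
  gcongr

lemma sw_theta (k : ℕ) : ∃ c > (0:ℝ), c ≤ 1 ∧ ∃ C > (0:ℝ), ∃ X0 ≥ (3:ℝ), ∀ (D : ℤ), SqF D →
    ∀ X, X0 ≤ X → (D.natAbs : ℝ) ≤ (Real.log X)^k →
    |∑ n ∈ Finset.range (⌊X⌋₊ + 1), thj D n| ≤ C * X * Real.exp (-c * √(Real.log X)) := by
  obtain ⟨c, hc, hc1, C, hC, X0, hX0, H⟩ := sw_psi k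
  refine ⟨c/4, by positivity, by linarith, C + 64, by positivity, X0, hX0, ?_⟩
  intro D hD X hX hDX
  have : NeZero D := ⟨hD.1.ne_zero⟩
  have h := H D hD X hX hDX
  have hX3 : 3 ≤ X := hX0.le.trans hX
  obtain ⟨h1, h2⟩ := one_le_ell hX3
  have hs := sqrt_le_exp hX3
  set ℓ := √(Real.log X) with hℓ
  have hℓsq : ℓ^2 = Real.log X := Real.sq_sqrt (by linarith)
  have hdiff : |∑ n ∈ Finset.range (⌊X⌋₊ + 1), Λ n * jac D n - ∑ n ∈ Finset.range (⌊X⌋₊ + 1), thj D n|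
      ≤ 2 * √X * Real.log X := by
    refine le_trans ?_ (Chebyshev.psi_sub_theta_le (x := X) (by linarith))
    rw [Chebyshev.psi_sub_theta_eq_sum_not_prime, ← Finset.sum_sub_distrib, Finset.sum_filter,
      range_succ_sum_eq _ (by simp [thj])]
    refine (Finset.abs_sum_le_sum_abs _ _).trans ?_
    refine Finset.sum_le_sum fun n _ => ?_
    unfold thj
    by_cases hn : n.Prime
    · simp [hn, ArithmeticFunction.vonMangoldt_apply_prime hn]
    · simp only [hn, if_false, sub_zero, not_false_eq_true, if_true, abs_mul]
      rw [abs_of_nonneg ArithmeticFunction.vonMangoldt_nonneg]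
      exact mul_le_of_le_one_right ArithmeticFunction.vonMangoldt_nonneg (abs_jac_le D n)
  have hp := poly_exp (a := 1/2) (ℓ := ℓ) (by norm_num) (by linarith)
  have e1 : Real.exp (-c * ℓ) ≤ Real.exp (-(c/4) * ℓ) := by gcongr; linarith
  have e2 : Real.exp (-(1/2/2) * ℓ) ≤ Real.exp (-(c/4) * ℓ) := by apply Real.exp_le_exp.mpr; nlinarith
  have hXp : 0 < X := by linarith
  have hb : 2 * √X * Real.log X ≤ 64 * X * Real.exp (-(c/4) * ℓ) := by
    rw [← hℓsq]
    calc 2 * √X * ℓ^2 ≤ 2 * (X * Real.exp (-(1/2) * ℓ)) * ℓ^2 := by gcongr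
      _ = 2 * X * (ℓ^2 * Real.exp (-(1/2) * ℓ)) := by ring
      _ ≤ 2 * X * (8/(1/2)^2 * Real.exp (-(1/2/2) * ℓ)) := by gcongr
      _ ≤ 2 * X * (8/(1/2)^2 * Real.exp (-(c/4) * ℓ)) := by gcongr
      _ = _ := by ring
  have hb2 : C * X * Real.exp (-c * ℓ) ≤ C * X * Real.exp (-(c/4) * ℓ) := by gcongr
  rw [abs_le] at *
  constructor <;> nlinarith

/-- Uniform version. -/
lemma sw_theta_unif (k : ℕ) : ∃ c > (0:ℝ), c ≤ 1 ∧ ∃ C > (0:ℝ), ∃ X0 ≥ (3:ℝ), ∀ (D : ℤ), SqF D →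
    ∀ X, X0 ≤ X → (D.natAbs : ℝ) ≤ (Real.log X)^k → ∀ u, 0 ≤ u → u ≤ X →
    |∑ n ∈ Finset.range (⌊u⌋₊ + 1), thj D n| ≤ C * X * Real.exp (-c * √(Real.log X)) := by
  obtain ⟨c, hc, hc1, C, hC, X0, hX0, H⟩ := sw_theta (2*k)
  refine ⟨c/2, by positivity, by linarith, C + 2, by positivity, max (X0^2) 81, by simp; right; norm_num, ?_⟩
  intro D hD X hX hDX u hu0 huX
  have hX81 : 81 ≤ X := (le_max_right _ _).trans hX
  have hXX : X0^2 ≤ X := (le_max_left _ _).trans hX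
  have hX3 : 3 ≤ X := by linarith
  have hXp : 0 < X := by linarith
  obtain ⟨h1, h2⟩ := one_le_ell hX3
  have hs := sqrt_le_exp hX3
  have hlogs : Real.log (√X) = Real.log X / 2 := Real.log_sqrt (by linarith)
  have h9 : 9 ≤ √X := by
    apply Real.le_sqrt_of_sq_le; linarith
  have h9log : 2 ≤ Real.log (√X) := by
    rw [Real.le_log_iff_exp_le (by linarith)]
    have := Real.exp_one_lt_d9
    rw [show (2:ℝ) = 1 + 1 by norm_num, Real.exp_add]
    nlinarith [Real.exp_pos 1]
  set ℓ := √(Real.log X) with hℓ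
  have hℓsq : ℓ^2 = Real.log X := Real.sq_sqrt (by linarith)
  rcases le_or_gt (√X) u with h | h
  · have hlu : Real.log X / 2 ≤ Real.log u := by
      rw [← hlogs]; exact Real.log_le_log (by linarith) h
    have hlu2 : 2 ≤ Real.log u := by linarith
    have hX0u : X0 ≤ u := by
      refine le_trans ?_ h
      exact Real.le_sqrt_of_sq_le hXX
    have hDu : (D.natAbs : ℝ) ≤ (Real.log u)^(2*k) := by
      refine hDX.trans ?_
      rw [pow_mul]
      gcongr
      nlinarith
    refine (H D hD u hX0u hDu).trans ?_
    have hsq : ℓ / 2 ≤ √(Real.log u) := by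
      apply Real.le_sqrt_of_sq_le
      nlinarith
    have : Real.exp (-c * √(Real.log u)) ≤ Real.exp (-(c/2) * ℓ) := by
      apply Real.exp_le_exp.mpr; nlinarith
    calc C * u * Real.exp (-c * √(Real.log u)) ≤ C * X * Real.exp (-(c/2) * ℓ) := by gcongr
      _ ≤ _ := by gcongr; linarith
  · refine (thj_trivial D hu0).trans ?_
    have : Real.exp (-(1/2) * ℓ) ≤ Real.exp (-(c/2) * ℓ) := by gcongr
    calc 2 * u ≤ 2 * (X * Real.exp (-(1/2) * ℓ)) := by linarith
      _ ≤ 2 * (X * Real.exp (-(c/2) * ℓ)) := by gcongr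
      _ = 2 * X * Real.exp (-(c/2) * ℓ) := by ring
      _ ≤ _ := by gcongr; linarith

end

section

lemma abel_ineq {b w : ℕ → ℝ} (hw : Antitone w) (hw0 : ∀ n, 0 ≤ w n) {M : ℝ} {N : ℕ}
    (hM : ∀ m ≤ N, |∑ i ∈ Finset.range m, b i| ≤ M) :
    |∑ i ∈ Finset.range N, b i * w i| ≤ w 0 * M := by
  have hM0 : 0 ≤ M := by simpa using hM 0 (Nat.zero_le _)
  have key : ∀ m ≤ N, |∑ i ∈ Finset.range m, b i * w i - (∑ i ∈ Finset.range m, b i) * w m| ≤ (w 0 - w m) * M := by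
    intro m
    induction m with
    | zero => simp
    | succ m ih =>
      intro hm
      have h1 := ih (by omega)
      have h2 := hM (m+1) hm
      have h3 : 0 ≤ w m - w (m+1) := by linarith [hw (Nat.le_succ m)]
      have e : ∑ i ∈ Finset.range (m+1), b i * w i - (∑ i ∈ Finset.range (m+1), b i) * w (m+1)
        = (∑ i ∈ Finset.range m, b i * w i - (∑ i ∈ Finset.range m, b i) * w m) + (∑ i ∈ Finset.range (m+1), b i) * (w m - w (m+1)) := by
        rw [Finset.sum_range_succ, Finset.sum_range_succ]; ring
      rw [e]
      refine (abs_add_le _ _).trans ?_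
      rw [abs_mul, abs_of_nonneg h3]
      nlinarith [mul_le_mul_of_nonneg_right h2 h3]
  have h1 := key N le_rfl
  have h2 := hM N le_rfl
  have h3 : |(∑ i ∈ Finset.range N, b i) * w N| ≤ M * w N := by
    rw [abs_mul, abs_of_nonneg (hw0 N)]; exact mul_le_mul_of_nonneg_right h2 (hw0 N)
  rw [abs_le] at *
  constructor <;> linarith

lemma sw_pi (k : ℕ) : ∃ c > (0:ℝ), c ≤ 1 ∧ ∃ C > (0:ℝ), ∃ X0 ≥ (3:ℝ), ∀ (D : ℤ), SqF D →
    ∀ X, X0 ≤ X → (D.natAbs : ℝ) ≤ (Real.log X)^k →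
    |∑ p ∈ (Finset.range (⌊X⌋₊ + 1)).filter Nat.Prime, (jac D p : ℝ)| ≤ C * X * Real.exp (-c * √(Real.log X)) := by
  obtain ⟨c, hc, hc1, C, hC, X0, hX0, H⟩ := sw_theta_unif k
  refine ⟨c, hc, hc1, 2 * C, by positivity, X0, hX0, ?_⟩
  intro D hD X hX hDX
  have hX3 : 3 ≤ X := hX0.le.trans hX
  have hl2 : 1/2 ≤ Real.log 2 := by linarith [Real.log_two_gt_d9]
  set w : ℕ → ℝ := fun n => 1 / Real.log ((max n 2 : ℕ) : ℝ) with hwdef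
  have hwl : ∀ n : ℕ, Real.log 2 ≤ Real.log ((max n 2 : ℕ) : ℝ) := by
    intro n
    apply Real.log_le_log (by norm_num)
    exact_mod_cast le_max_right n 2
  have hw : Antitone w := by
    intro m n hmn
    simp only [hwdef]
    apply one_div_le_one_div_of_le
    · linarith [hwl m]
    · apply Real.log_le_log
      · have := le_max_right m 2
        exact_mod_cast (by omega : 0 < max m 2)
      · exact_mod_cast max_le_max_right 2 hmn
  have hw0 : ∀ n, 0 ≤ w n := by
    intro n
    have := hwl n
    simp only [hwdef]
    apply one_div_nonneg.mpr; linarith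
  have hB := abel_ineq (b := thj D) (N := ⌊X⌋₊ + 1) (M := C * X * Real.exp (-c * √(Real.log X))) hw hw0 ?_
  · have e : ∑ p ∈ (Finset.range (⌊X⌋₊ + 1)).filter Nat.Prime, (jac D p : ℝ) = ∑ i ∈ Finset.range (⌊X⌋₊ + 1), thj D i * w i := by
      rw [Finset.sum_filter]
      refine Finset.sum_congr rfl fun p _ => ?_
      unfold thj
      split_ifs with hp
      · have h2 := hp.two_le
        simp only [hwdef, max_eq_left h2]
        have : Real.log p ≠ 0 := by
          have := hwl p
          rw [max_eq_left h2] at this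
          linarith
        field_simp
      · simp
    rw [e]
    refine hB.trans ?_
    have : w 0 ≤ 2 := by
      simp only [hwdef]
      norm_num
      rw [inv_le_comm₀ (by linarith) (by norm_num)]
      linarith
    have hXp : 0 < X := by linarith
    calc w 0 * (C * X * Real.exp (-c * √(Real.log X))) ≤ 2 * (C * X * Real.exp (-c * √(Real.log X))) := by gcongr
      _ = _ := by ring
  · intro m hm
    rcases m with _ | m
    · simp; positivity
    · have hmX : (m:ℝ) ≤ X := (Nat.le_floor_iff (by linarith)).mp (by omega)
      have := H D hD X hX hDX m (by positivity) hmX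
      simpa using this

end

lemma leg_sub_jac {n a b p : ℕ} (hn : b^2 * a = n) (hp : p.Prime) (hp2 : Odd p) :
    |(legendreSym' p n : ℝ) - (jac a p : ℝ)| ≤ if p ∣ n then 1 else 0 := by
  have : Fact p.Prime := ⟨hp⟩
  have e : legendreSym' p n = legendreSym p n := by simp [legendreSym', hp]
  rw [e]
  by_cases h : p ∣ n
  · have : legendreSym p n = 0 := by
      rw [legendreSym.eq_zero_iff]
      have := (ZMod.natCast_eq_zero_iff n p).mpr h
      simpa using this
    rw [this]
    simpa [h] using abs_jac_le a p
  · have h1 : legendreSym p n = jac n p := by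
      rw [jac, if_pos hp2, jacobiSym.legendreSym.to_jacobiSym]
    have hb : jac ((b:ℤ)^2) p = 1 := by
      apply jac_sq _ _ hp2
      rw [Int.gcd_natCast_natCast, Nat.gcd_comm]
      apply (Nat.Prime.coprime_iff_not_dvd hp).mpr
      intro hd
      apply h
      rw [← hn]
      exact Dvd.dvd.mul_right (Dvd.dvd.trans hd (Dvd.intro_left (b^(2-1)) (by ring))) a
    have h2 : jac n p = jac a p := by
      rw [← hn]; push_cast
      rw [jac_mul_left, hb, one_mul]
    rw [h1, h2]; simp [h]

lemma ind_jac (ε : ℕ) (hε : ε = 1 ∨ ε = 3) : ∃ s : ℝ, |s| = 1 ∧ ∀ (d : ℤ) (p : ℕ), p.Prime →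
    (if p % 4 = ε then (jac d p : ℝ) else 0) = (jac d p + s * jac (-d) p) / 2 := by
  have hneg : ∀ (d : ℤ) (p : ℕ), jac (-d) p = jac (-1) p * jac d p := by
    intro d p; rw [← jac_mul_left]; simp
  refine ⟨if ε = 1 then 1 else -1, by split_ifs <;> simp, ?_⟩
  intro d p hp
  rw [hneg]
  rcases hp.eq_two_or_odd' with rfl | ho
  · have : ∀ D, jac D 2 = 0 := by
      intro D; unfold jac; rw [if_neg (by decide)]
    simp [this]
  · have hm1 : jac (-1) p = ZMod.χ₄ p := by
      rw [jac, if_pos ho, jacobiSym.at_neg_one ho]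
    have h4 : p % 4 = 1 ∨ p % 4 = 3 := by
      have := Nat.odd_iff.mp ho; omega
    rcases h4 with h | h
    · have : jac (-1) p = 1 := by rw [hm1, ZMod.χ₄_nat_one_mod_four h]
      rcases hε with rfl | rfl <;> simp [h, this]
    · have : jac (-1) p = -1 := by rw [hm1, ZMod.χ₄_nat_three_mod_four h]
      rcases hε with rfl | rfl <;> simp [h, this]

lemma sum_ind (ε : ℕ) (hε : ε = 1 ∨ ε = 3) : ∃ s : ℝ, |s| = 1 ∧ ∀ (d : ℤ) (N : ℕ),
    ∑ p ∈ (Finset.range N).filter (fun p => p.Prime ∧ p % 4 = ε), (jac d p : ℝ) =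
    (∑ p ∈ (Finset.range N).filter Nat.Prime, (jac d p : ℝ) +
      s * ∑ p ∈ (Finset.range N).filter Nat.Prime, (jac (-d) p : ℝ)) / 2 := by
  obtain ⟨s, hs, H⟩ := ind_jac ε hε
  refine ⟨s, hs, fun d N => ?_⟩
  rw [← Finset.filter_filter, Finset.sum_filter, Finset.mul_sum, ← Finset.sum_add_distrib, Finset.sum_div]
  refine Finset.sum_congr rfl fun p hp => ?_
  exact H d p (Finset.mem_filter.mp hp).2

lemma odd_of_eps {ε p : ℕ} (hε : ε = 1 ∨ ε = 3) (h : p % 4 = ε) : Odd p := by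
  rw [Nat.odd_iff]; omega

lemma jac_one_left {p : ℕ} (hp : Odd p) : jac 1 p = 1 := by
  have := jac_sq 1 p hp (by simp)
  simpa using this

lemma card_dvd_le (n : ℕ) (hn : 0 < n) (S : Finset ℕ) :
    ∑ p ∈ S, (if p ∣ n then (1:ℝ) else 0) ≤ n := by
  rw [← Finset.sum_filter]
  simp only [Finset.sum_const, nsmul_eq_mul, mul_one]
  have : S.filter (· ∣ n) ⊆ Finset.Icc 1 n := by
    intro p hp
    have hd := (Finset.mem_filter.mp hp).2
    exact Finset.mem_Icc.mpr ⟨Nat.pos_of_dvd_of_pos hd hn, Nat.le_of_dvd hn hd⟩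
  have := Finset.card_le_card this
  rw [Nat.card_Icc] at this
  exact_mod_cast (by omega : (S.filter (· ∣ n)).card ≤ n)

lemma sum_leg_sub (ε : ℕ) (hε : ε = 1 ∨ ε = 3) {n a b : ℕ} (hn0 : 0 < n) (hn : b^2 * a = n) (N : ℕ) :
    |∑ p ∈ (Finset.range N).filter (fun p => p.Prime ∧ p % 4 = ε), (legendreSym' p n : ℝ) -
      ∑ p ∈ (Finset.range N).filter (fun p => p.Prime ∧ p % 4 = ε), (jac a p : ℝ)| ≤ n := by
  rw [← Finset.sum_sub_distrib]
  refine (Finset.abs_sum_le_sum_abs _ _).trans ?_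
  refine le_trans (Finset.sum_le_sum fun p hp => ?_) (card_dvd_le n hn0 _)
  obtain ⟨_, hp1, hp2⟩ := Finset.mem_filter.mp hp
  exact leg_sub_jac hn hp1 (odd_of_eps hε hp2)

lemma sqF_neg_one : SqF (-1) := ⟨(isUnit_neg_one).squarefree, by norm_num⟩

lemma sqF_nat {a : ℕ} (ha : Squarefree a) (h1 : a ≠ 1) : SqF (a:ℤ) :=
  ⟨Int.squarefree_natCast.mpr ha, by exact_mod_cast h1⟩

lemma sqF_neg_nat {a : ℕ} (ha : Squarefree a) : SqF (-(a:ℤ)) :=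
  ⟨by rw [← Int.squarefree_natAbs]; simpa using ha, by omega⟩

lemma card_eq_jac (ε : ℕ) (hε : ε = 1 ∨ ε = 3) (N : ℕ) :
    ∑ p ∈ (Finset.range N).filter (fun p => p.Prime ∧ p % 4 = ε), (jac 1 p : ℝ) =
    (((Finset.range N).filter (fun p => p.Prime ∧ p % 4 = ε)).card : ℝ) := by
  rw [Finset.card_eq_sum_ones]
  push_cast
  refine Finset.sum_congr rfl fun p hp => ?_
  rw [jac_one_left (odd_of_eps hε (Finset.mem_filter.mp hp).2.2)]; simp

lemma pi_sub_one_le (x : ℝ) : (Nat.primeCounting ⌊x⌋₊ : ℝ) - 1 ≤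
    ∑ p ∈ (Finset.range (⌊x⌋₊+1)).filter Nat.Prime, (jac 1 p : ℝ) := by
  have h1 : (Nat.primeCounting ⌊x⌋₊ : ℝ) = ∑ p ∈ (Finset.range (⌊x⌋₊+1)).filter Nat.Prime, (1:ℝ) := by
    rw [Nat.primeCounting, Nat.primeCounting', Nat.count_eq_card_filter_range]; simp
  have h2 : ∑ p ∈ (Finset.range (⌊x⌋₊+1)).filter Nat.Prime, (1 - (jac 1 p : ℝ)) ≤ 1 := by
    calc ∑ p ∈ (Finset.range (⌊x⌋₊+1)).filter Nat.Prime, (1 - (jac 1 p : ℝ))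
        ≤ ∑ p ∈ (Finset.range (⌊x⌋₊+1)).filter Nat.Prime, (if p = 2 then (1:ℝ) else 0) := by
          refine Finset.sum_le_sum fun p hp => ?_
          rcases (Finset.mem_filter.mp hp).2.eq_two_or_odd' with rfl | ho
          · have : jac 1 2 = 0 := by unfold jac; rw [if_neg (by decide)]
            simp [this]
          · rw [jac_one_left ho]; split_ifs <;> simp
      _ ≤ 1 := by
          rw [Finset.sum_ite_eq']; split_ifs <;> simp
  rw [Finset.sum_sub_distrib] at h2
  linarith

lemma card_lower (ε : ℕ) (hε : ε = 1 ∨ ε = 3) : ∃ X1 ≥ (3:ℝ), ∀ x ≥ X1,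
    x ≤ 8 * (((Finset.range (⌊x⌋₊ + 1)).filter (fun p => p.Prime ∧ p % 4 = ε)).card : ℝ) * Real.log x := by
  obtain ⟨c, hc, hc1, C, hC, X0, hX0, H⟩ := sw_pi 0
  obtain ⟨s, hs, Hs⟩ := sum_ind ε hε
  have ev1 : ∀ᶠ x : ℝ in Filter.atTop, Real.log x ≤ (1/100) * x := by
    have := Real.isLittleO_log_id_atTop.bound (c := 1/100) (by norm_num)
    filter_upwards [this, Filter.eventually_ge_atTop 1] with x hx hx1
    rw [Real.norm_eq_abs, Real.norm_eq_abs, id, abs_of_nonneg (Real.log_nonneg hx1), abs_of_nonneg (by linarith)] at hx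
    exact hx
  have ev2 : ∀ᶠ x : ℝ in Filter.atTop, Real.exp (-(c/2) * √(Real.log x)) < 1 / (32 * C / c^2) := by
    have t1 : Filter.Tendsto (fun x => (c/2) * √(Real.log x)) Filter.atTop Filter.atTop :=
      (Real.tendsto_sqrt_atTop.comp Real.tendsto_log_atTop).const_mul_atTop (by positivity)
    have t2 := (Real.tendsto_exp_neg_atTop_nhds_zero.comp t1).eventually (gt_mem_nhds (show 0 < 1 / (32 * C / c^2) by positivity))
    filter_upwards [t2] with x hx
    simpa using hx
  obtain ⟨Y, hY⟩ := Filter.eventually_atTop.mp (ev1.and ev2)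
  refine ⟨max (max X0 Y) 100, le_max_of_le_right (by norm_num), ?_⟩
  intro x hx
  have hx100 : 100 ≤ x := (le_max_right _ _).trans hx
  have hxX : X0 ≤ x := (le_max_left _ _).trans ((le_max_left _ _).trans hx)
  have hxY : Y ≤ x := (le_max_right _ _).trans ((le_max_left _ _).trans hx)
  obtain ⟨h1, h2⟩ := hY x hxY
  obtain ⟨hl, hl2⟩ := one_le_ell (X := x) (by linarith)
  have hR := H (-1) sqF_neg_one x hxX (by simp)
  have hpi := Chebyshev.pi_ge' (x := x) (by linarith)
  have hpj := pi_sub_one_le x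
  have hS := Hs 1 (⌊x⌋₊+1)
  rw [card_eq_jac ε hε] at hS
  set S := (((Finset.range (⌊x⌋₊ + 1)).filter (fun p => p.Prime ∧ p % 4 = ε)).card : ℝ)
  set R := ∑ p ∈ (Finset.range (⌊x⌋₊+1)).filter Nat.Prime, (jac (-1) p : ℝ)
  set J := ∑ p ∈ (Finset.range (⌊x⌋₊+1)).filter Nat.Prime, (jac 1 p : ℝ)
  set ℓ := √(Real.log x) with hℓ
  have hℓsq : ℓ^2 = Real.log x := Real.sq_sqrt (by linarith)
  have hsR : -|R| ≤ s * R := by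
    have := neg_abs_le (s * R)
    rwa [abs_mul, hs, one_mul] at this
  have hp := poly_exp (a := c) (ℓ := ℓ) hc (by linarith)
  have hxp : 0 < x := by linarith
  have hRl : |R| * Real.log x ≤ x / 4 := by
    rw [lt_div_iff₀ (by positivity)] at h2
    calc |R| * Real.log x ≤ (C * x * Real.exp (-c * ℓ)) * ℓ^2 := by rw [← hℓsq]; gcongr
      _ = C * x * (ℓ^2 * Real.exp (-c * ℓ)) := by ring
      _ ≤ C * x * (8/c^2 * Real.exp (-(c/2) * ℓ)) := by gcongr
      _ = x / 4 * (Real.exp (-(c/2) * ℓ) * (32 * C / c^2)) := by ring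
      _ ≤ x / 4 * 1 := by gcongr
      _ = x / 4 := by ring
  have hlp : 0 < Real.log x := by linarith
  have hlog2 : Real.log (x + 2) ≤ Real.log 2 + Real.log x := by
    rw [← Real.log_mul (by norm_num) (by linarith)]
    apply Real.log_le_log <;> linarith
  rw [div_le_iff₀ hlp] at hpi
  have g1 := Real.log_two_gt_d9
  have g2 := Real.log_two_lt_d9
  have hJ : x / 2 ≤ J * Real.log x := by
    have : (Nat.primeCounting ⌊x⌋₊ : ℝ) * Real.log x - Real.log x ≤ J * Real.log x := by nlinarith
    nlinarith
  have hSl : 8 * S * Real.log x = 4 * (J * Real.log x) + 4 * (s * R * Real.log x) := by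
    rw [hS]; ring
  have : -|R| * Real.log x ≤ s * R * Real.log x := by gcongr
  rw [hSl]; linarith

lemma isSq_iff {n a b : ℕ} (hn0 : 0 < n) (hn : b^2 * a = n) (ha : Squarefree a) : IsSquare n ↔ a = 1 := by
  constructor
  · rintro ⟨m, hm⟩
    have hb : b ≠ 0 := by rintro rfl; simp at hn; omega
    have hd : b^2 ∣ m^2 := ⟨a, by rw [hn, hm]; ring⟩
    rw [Nat.pow_dvd_pow_iff (by norm_num)] at hd
    obtain ⟨t, rfl⟩ := hd
    have : a = t * t := by
      have h : b^2 * a = b^2 * (t*t) := by rw [hn, hm]; ring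
      exact Nat.eq_of_mul_eq_mul_left (by positivity) h
    have ht := ha t ⟨1, by rw [this]; ring⟩
    rw [Nat.isUnit_iff] at ht
    simp [this, ht]
  · rintro rfl
    exact ⟨b, by rw [← hn]; ring⟩

lemma logpow_le (k : ℕ) {x : ℝ} (hx : 3 ≤ x) :
    Real.log x ^ k ≤ (2^k * k.factorial) * (x * Real.exp (-(1/2) * √(Real.log x))) := by
  obtain ⟨hl, _⟩ := one_le_ell hx
  have h := Real.pow_div_factorial_le_exp (Real.log x / 2) (by linarith) k
  rw [Real.exp_half, Real.exp_log (by linarith), div_pow, div_div, div_le_iff₀ (by positivity)] at h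
  have := sqrt_le_exp hx
  calc _ ≤ _ := h
    _ = (2^k * k.factorial) * √x := by ring
    _ ≤ _ := by gcongr

lemma large_case (k : ℕ) (ε : ℕ) (hε : ε = 1 ∨ ε = 3) :
    ∃ c > (0 : ℝ), ∃ C > (0 : ℝ), ∃ X1 ≥ (3:ℝ), ∀ x : ℝ, X1 ≤ x → ∀ n : ℕ, 0 < n →
      (n : ℝ) ≤ Real.log x ^ k →
      |((∑ p ∈ (Finset.range (⌊x⌋₊ + 1)).filter (fun p => p.Prime ∧ p % 4 = ε),
            (legendreSym' p (n : ℤ) : ℝ)) : ℝ) -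
          (if IsSquare n then (1 : ℝ) else 0) *
            (((Finset.range (⌊x⌋₊ + 1)).filter
              (fun p => p.Prime ∧ p % 4 = ε)).card : ℝ)| ≤
        C * (((Finset.range (⌊x⌋₊ + 1)).filter
              (fun p => p.Prime ∧ p % 4 = ε)).card : ℝ) *
          Real.exp (-c * Real.sqrt (Real.log x)) := by
  obtain ⟨c, hc, hc1, C, hC, X0, hX0, H⟩ := sw_pi k
  obtain ⟨X1, hX1, H1⟩ := card_lower ε hε
  obtain ⟨s, hs, Hs⟩ := sum_ind ε hε
  set K : ℝ := 2^k * k.factorial with hK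
  have hKp : 0 < K := by positivity
  refine ⟨c/4, by positivity, 8 * (K + C) * (8/(c/2)^2), by positivity, max X0 X1, le_max_of_le_left hX0, ?_⟩
  intro x hx n hn0 hnx
  have hxX : X0 ≤ x := (le_max_left _ _).trans hx
  have hxX1 : X1 ≤ x := (le_max_right _ _).trans hx
  have hx3 : 3 ≤ x := hX0.le.trans hxX
  have hxp : 0 < x := by linarith
  obtain ⟨a, b, hab, ha⟩ := Nat.sq_mul_squarefree n
  have hL := sum_leg_sub ε hε hn0 hab (⌊x⌋₊+1)
  have hcard := H1 x hxX1
  have hlp := logpow_le k hx3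
  obtain ⟨hl1, hl2⟩ := one_le_ell hx3
  have hmain : |((∑ p ∈ (Finset.range (⌊x⌋₊ + 1)).filter (fun p => p.Prime ∧ p % 4 = ε),
            (legendreSym' p (n : ℤ) : ℝ)) : ℝ) -
          (if IsSquare n then (1 : ℝ) else 0) *
            (((Finset.range (⌊x⌋₊ + 1)).filter
              (fun p => p.Prime ∧ p % 4 = ε)).card : ℝ)| ≤ n + C * x * Real.exp (-c * √(Real.log x)) := by
    have hE : 0 < C * x * Real.exp (-c * √(Real.log x)) := by positivity
    by_cases h1 : a = 1
    · rw [if_pos ((isSq_iff hn0 hab ha).mpr h1), one_mul, ← card_eq_jac ε hε]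
      rw [h1] at hL
      push_cast at hL
      linarith
    · rw [if_neg (fun h => h1 ((isSq_iff hn0 hab ha).mp h)), zero_mul, sub_zero]
      have han : (a:ℝ) ≤ Real.log x ^ k := by
        refine le_trans ?_ hnx
        exact_mod_cast Nat.le_of_dvd hn0 ⟨b^2, by rw [← hab]; ring⟩
      have r1 := H a (sqF_nat ha h1) x hxX (by simpa using han)
      have r2 := H (-a) (sqF_neg_nat ha) x hxX (by simpa using han)
      have hJ := Hs a (⌊x⌋₊+1)
      rw [hJ] at hL
      set R2 := ∑ p ∈ (Finset.range (⌊x⌋₊+1)).filter Nat.Prime, (jac (-a) p : ℝ)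
      have r3 : |s * R2| ≤ C * x * Real.exp (-c * √(Real.log x)) := by rw [abs_mul, hs, one_mul]; exact r2
      rw [abs_le] at *
      constructor <;> linarith
  refine hmain.trans ?_
  set S := (((Finset.range (⌊x⌋₊ + 1)).filter (fun p => p.Prime ∧ p % 4 = ε)).card : ℝ) with hS
  have hS0 : 0 ≤ S := by positivity
  set ℓ := √(Real.log x) with hℓ
  have hℓsq : ℓ^2 = Real.log x := Real.sq_sqrt (by linarith)
  have e1 : Real.exp (-c * ℓ) ≤ Real.exp (-(c/2) * ℓ) := by apply Real.exp_le_exp.mpr; nlinarith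
  have e2 : Real.exp (-(1/2) * ℓ) ≤ Real.exp (-(c/2) * ℓ) := by apply Real.exp_le_exp.mpr; nlinarith
  have hp := poly_exp (a := c/2) (ℓ := ℓ) (by positivity) (by linarith)
  rw [show c/2/2 = c/4 by ring] at hp
  calc (n:ℝ) + C * x * Real.exp (-c * ℓ) ≤ K * (x * Real.exp (-(1/2) * ℓ)) + C * x * Real.exp (-c * ℓ) := by linarith
    _ ≤ K * (x * Real.exp (-(c/2) * ℓ)) + C * x * Real.exp (-(c/2) * ℓ) := by gcongr
    _ = (K + C) * x * Real.exp (-(c/2) * ℓ) := by ring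
    _ ≤ (K + C) * (8 * S * ℓ^2) * Real.exp (-(c/2) * ℓ) := by rw [hℓsq]; gcongr
    _ = (K + C) * (8 * S) * (ℓ^2 * Real.exp (-(c/2) * ℓ)) := by ring
    _ ≤ (K + C) * (8 * S) * (8/(c/2)^2 * Real.exp (-(c/4) * ℓ)) := by gcongr
    _ = _ := by ring

lemma abs_leg_le (p : ℕ) (n : ℤ) : |(legendreSym' p n : ℝ)| ≤ 1 := by
  unfold legendreSym'
  split_ifs with h
  · have : Fact p.Prime := ⟨h⟩
    by_cases h0 : (n : ZMod p) = 0
    · rw [(legendreSym.eq_zero_iff p n).mpr h0]; simp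
    · rcases legendreSym.eq_one_or_neg_one p h0 with h | h <;> simp [h]
  · simp

/-- **Expectation of Legendre symbols over random primes.** For fixed `k` and
`ε ∈ {1,3}` there are constants `c, C > 0` such that for all `x ≥ 5` and all
`0 < n ≤ (log x)^k`,
`|∑_{p ≤ x, p ≡ ε (4)} (n/p) − □(n) π(x;4,ε)| ≤ C π(x;4,ε) exp(−c √(log x))`,
where `□(n)` is the indicator of the squares. -/
theorem stmt_9 (k : ℕ) (hk : 0 < k) (ε : ℕ) (hε : ε = 1 ∨ ε = 3) :
    ∃ c > (0 : ℝ), ∃ C > (0 : ℝ), ∀ x : ℝ, 5 ≤ x → ∀ n : ℕ, 0 < n →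
      (n : ℝ) ≤ Real.log x ^ k →
      |((∑ p ∈ (Finset.range (⌊x⌋₊ + 1)).filter (fun p => p.Prime ∧ p % 4 = ε),
            legendreSym' p (n : ℤ)) : ℝ) -
          (if IsSquare n then (1 : ℝ) else 0) *
            (((Finset.range (⌊x⌋₊ + 1)).filter
              (fun p => p.Prime ∧ p % 4 = ε)).card : ℝ)| ≤
        C * (((Finset.range (⌊x⌋₊ + 1)).filter
              (fun p => p.Prime ∧ p % 4 = ε)).card : ℝ) *
          Real.exp (-c * Real.sqrt (Real.log x)) := by
  obtain ⟨c, hc, C, hC, X1, hX1, H⟩ := large_case k ε hε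
  refine ⟨c, hc, C + 2 * Real.exp (c * √(Real.log X1)), by positivity, ?_⟩
  intro x hx n hn0 hnx
  set S := (Finset.range (⌊x⌋₊ + 1)).filter (fun p => p.Prime ∧ p % 4 = ε) with hS
  rcases le_or_gt X1 x with h | h
  · refine (H x h n hn0 hnx).trans ?_
    gcongr
    have := Real.exp_pos (c * √(Real.log X1))
    linarith
  · have h1 : |∑ p ∈ S, (legendreSym' p (n:ℤ) : ℝ)| ≤ S.card := by
      refine (Finset.abs_sum_le_sum_abs _ _).trans ?_
      refine (Finset.sum_le_sum fun p _ => abs_leg_le p n).trans ?_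
      simp
    have h2 : |(if IsSquare n then (1 : ℝ) else 0) * (S.card : ℝ)| ≤ S.card := by
      split_ifs <;> simp
    have h3 : 1 ≤ Real.exp (c * √(Real.log X1)) * Real.exp (-c * √(Real.log x)) := by
      rw [← Real.exp_add]
      apply Real.one_le_exp
      have : √(Real.log x) ≤ √(Real.log X1) := Real.sqrt_le_sqrt (Real.log_le_log (by linarith) h.le)
      nlinarith
    calc _ ≤ (S.card : ℝ) + S.card := (abs_sub _ _).trans (add_le_add h1 h2)
      _ = 2 * S.card * 1 := by ring
      _ ≤ 2 * S.card * (Real.exp (c * √(Real.log X1)) * Real.exp (-c * √(Real.log x))) := by gcongr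
      _ = (0 + 2 * Real.exp (c * √(Real.log X1))) * S.card * Real.exp (-c * √(Real.log x)) := by ring
      _ ≤ _ := by gcongr
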